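/- Assume the abc-conjecture. Let p ≥ 5 be a prime number and let ε be a real number with 0 < ε < 1/(p−1). Then there exist a constant c > 0 and a real number X₀ such that for all real X ≥ X₀, the number of squarefree positive integers d such that |d_K| ≤ X for K = ℚ(√−d) (where d_K is the discriminant of K) and the ideal class group Cl_K of K contains a subgroup isomorphic to (ℤ/pℤ) × (ℤ/pℤ), is at least c·X^{1/(p−1) − ε}. -/

import Mathlib

open scoped BigOperators

/-- The abc-conjecture: for every `ε > 0` there is a constant `C > 0` such that for all
pairwise coprime positive integers `a, b, c` with `a + b = c`, one has
`c < C · rad(abc)^{1+ε}`, where `rad(n)` is the product of the distinct primes dividing `n`. -/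
def ABCConjecture : Prop :=
  ∀ ε : ℝ, 0 < ε → ∃ C : ℝ, 0 < C ∧
    ∀ a b c : ℕ, 0 < a → 0 < b → 0 < c →
      Nat.Coprime a b → Nat.Coprime a c → Nat.Coprime b c → a + b = c →
        (c : ℝ) < C * (∏ ℓ ∈ (a * b * c).primeFactors, (ℓ : ℝ)) ^ (1 + ε)


section

/-- small representative -/
theorem small_rep_nat (p R : ℕ) (hp : p.Prime) (hp5 : 5 ≤ p) (hR : (p = 5 ∧ R = 3) ∨ (7 ≤ p ∧ R = p - 4))
    (m : ℤ) : ∃ x y : ℤ, (x ≠ 0 ∧ |x| ≤ 2) ∧ |x| + |y| ≤ R ∧ (p : ℤ) ∣ y - m * x := by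
  have hp0 : (0 : ℤ) < p := by positivity
  have hodd : p % 2 = 1 := by
    rcases hp.eq_two_or_odd with h | h <;> omega
  -- balanced residue
  obtain ⟨r, hr1, hr2, hr3⟩ : ∃ r : ℤ, -((p : ℤ) - 1) ≤ 2 * r ∧ 2 * r ≤ (p : ℤ) - 1 ∧ (p : ℤ) ∣ r - m := by
    have h1 := Int.emod_nonneg m hp0.ne'
    have h2 := Int.emod_lt_of_pos m hp0
    have h3 : (p : ℤ) ∣ m % p - m := by
      have := Int.emod_add_mul_ediv m p
      exact ⟨-(m / p), by linarith⟩
    by_cases h : 2 * (m % p) ≤ (p : ℤ) - 1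
    · exact ⟨m % p, by omega, h, h3⟩
    · refine ⟨m % p - p, by omega, by omega, ?_⟩
      have : m % p - p - m = (m % p - m) - p := by ring
      rw [this]; exact dvd_sub h3 (dvd_refl _)
  by_cases h : 1 + |r| ≤ R
  · exact ⟨1, r, by simp, by simpa using h, by simpa using hr3⟩
  · -- p = 7, r = ± 3
    have h11 : p < 11 := by
      by_contra hc
      apply h
      rcases hR with ⟨h1, h2⟩ | ⟨h1, h2⟩
      · omega
      · have : |r| ≤ (R : ℤ) - 1 := by rw [abs_le]; constructor <;> omega
        linarith
    have hp57 : p = 5 ∨ p = 7 := by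
      interval_cases p <;> first | omega | (exfalso; revert hp; norm_num)
    rcases hp57 with rfl | rfl
    · exfalso; apply h
      have : |r| ≤ 2 := by rw [abs_le]; constructor <;> omega
      have hR3 : R = 3 := by omega
      subst hR3; push_cast; linarith
    · have hR3 : R = 3 := by omega
      subst hR3
      have hr : r = 3 ∨ r = -3 := by
        have h2 : ¬ |r| ≤ 2 := fun h2 => h (by push_cast; linarith)
        rw [abs_le] at h2; omega
      rcases hr with rfl | rfl
      · exact ⟨2, -1, by simp, by norm_num, by push_cast at hr3 ⊢; omega⟩
      · exact ⟨2, 1, by simp, by norm_num, by push_cast at hr3 ⊢; omega⟩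

theorem indep_subgroup {G : Type*} [CommGroup G] (p R : ℕ) (hp : p.Prime) (hp5 : 5 ≤ p)
    (hR : (p = 5 ∧ R = 3) ∨ (7 ≤ p ∧ R = p - 4)) (c1 c2 : G) (h1 : c1 ^ p = 1) (h2 : c2 ^ p = 1)
    (h : ∀ x y : ℤ, (x ≠ 0 ∨ y ≠ 0) → |x| + |y| ≤ R → c1 ^ x * c2 ^ y ≠ 1) :
    ∃ H : Subgroup G, Nonempty (H ≃* Multiplicative (ZMod p × ZMod p)) := by
  haveI := Fact.mk hp
  have hR1 : 1 ≤ R := by omega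
  -- the hom
  have hp0 : (0 : ℤ) < p := by have := hp.pos; positivity
  have hz1 : c1 ^ (p : ℤ) = 1 := by simpa using h1
  have hz2 : c2 ^ (p : ℤ) = 1 := by simpa using h2
  have dv1 : ∀ a : ℤ, (p : ℤ) ∣ a → c1 ^ a = 1 := by
    rintro a ⟨b, rfl⟩; rw [zpow_mul, hz1, one_zpow]
  have dv2 : ∀ a : ℤ, (p : ℤ) ∣ a → c2 ^ a = 1 := by
    rintro a ⟨b, rfl⟩; rw [zpow_mul, hz2, one_zpow]
  have key : ∀ a b : ℤ, c1 ^ a * c2 ^ b = 1 → (p : ℤ) ∣ a ∧ (p : ℤ) ∣ b := by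
    intro a b hab
    have hpZ : Prime (p : ℤ) := Nat.prime_iff_prime_int.mp hp
    by_cases ha : (p : ℤ) ∣ a
    · refine ⟨ha, ?_⟩
      by_contra hb
      rw [dv1 a ha, one_mul] at hab
      have hc : IsCoprime (b) (p : ℤ) := ((hpZ.coprime_iff_not_dvd).2 hb).symm
      obtain ⟨s, t, hst⟩ := hc
      apply h 0 1 (by simp) (by simp; exact_mod_cast hR1)
      have : c2 ^ (1 : ℤ) = 1 := by
        rw [← hst, zpow_add, mul_comm s, zpow_mul, hab, one_zpow, dv2 _ ⟨t, by ring⟩, one_mul]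
      simpa using this
    · exfalso
      have hc : IsCoprime a (p : ℤ) := ((hpZ.coprime_iff_not_dvd).2 ha).symm
      obtain ⟨s, t, hst⟩ := hc
      obtain ⟨x, y, ⟨hx, hx2⟩, hxy, hd⟩ := small_rep_nat p R hp hp5 hR (b * s)
      apply h x y (Or.inl hx) hxy
      have e1 : (c1 ^ a * c2 ^ b) ^ (s * x) = 1 := by rw [hab, one_zpow]
      rw [mul_zpow, ← zpow_mul, ← zpow_mul] at e1
      have e2 : a * (s * x) = x - p * (t * x) := by linear_combination x * hst
      obtain ⟨v, hv⟩ := hd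
      have e3 : b * (s * x) = y - p * v := by linear_combination - hv
      rw [e2, e3, zpow_sub, zpow_sub, dv1 (p * (t * x)) ⟨_, rfl⟩, dv2 (p * v) ⟨_, rfl⟩] at e1
      simpa using e1
  let f1 : ZMod p →+ Additive G := ZMod.lift p ⟨(zmultiplesHom (Additive G)) (Additive.ofMul c1), by
    rw [zmultiplesHom_apply]; exact hz1⟩
  let f2 : ZMod p →+ Additive G := ZMod.lift p ⟨(zmultiplesHom (Additive G)) (Additive.ofMul c2), by
    rw [zmultiplesHom_apply]; exact hz2⟩
  let f : ZMod p × ZMod p →+ Additive G := f1.coprod f2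
  have hf : Function.Injective f := by
    rw [injective_iff_map_eq_zero]
    rintro ⟨a, b⟩ hab
    obtain ⟨a, rfl⟩ := ZMod.intCast_surjective a
    obtain ⟨b, rfl⟩ := ZMod.intCast_surjective b
    have : c1 ^ a * c2 ^ b = 1 := by
      have h3 : f1 a + f2 b = 0 := hab
      simp only [f1, f2, ZMod.lift_coe, zmultiplesHom_apply] at h3
      exact h3
    obtain ⟨ha, hb⟩ := key a b this
    ext <;> simp [ZMod.intCast_zmod_eq_zero_iff_dvd, ha, hb, (ZMod.intCast_zmod_eq_zero_iff_dvd _ _).2]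
  let F : Multiplicative (ZMod p × ZMod p) →* G := AddMonoidHom.toMultiplicativeLeft f
  have hF : Function.Injective F := fun x y hxy => hf hxy
  exact ⟨F.range, ⟨(MonoidHom.ofInjective hF).symm⟩⟩

end

section
open NumberField

section QF
variable {K : Type*} [Field K] [NumberField K] {d : ℕ} {α : K}

theorem qf_repr (hα : α ^ 2 = -(d : K)) (htop : Algebra.adjoin ℚ {α} = ⊤) (x : K) :
    ∃ s t : ℚ, x = s + t * α := by
  have hx : x ∈ Algebra.adjoin ℚ {α} := by rw [htop]; trivial
  induction hx using Algebra.adjoin_induction with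
  | mem y hy => 
    rw [Set.mem_singleton_iff] at hy
    exact ⟨0, 1, by simp [hy]⟩
  | algebraMap r => exact ⟨r, 0, by simp⟩
  | add a b _ _ ha hb =>
    obtain ⟨s, t, rfl⟩ := ha
    obtain ⟨s', t', rfl⟩ := hb
    exact ⟨s + s', t + t', by push_cast; ring⟩
  | mul a b _ _ ha hb =>
    obtain ⟨s, t, rfl⟩ := ha
    obtain ⟨s', t', rfl⟩ := hb
    refine ⟨s * s' - d * t * t', s * t' + t * s', ?_⟩
    push_cast
    linear_combination (t * t' : K) * hα

theorem qf_conj (hd : 0 < d) (hα : α ^ 2 = -(d : K)) (φ : K →+* ℂ) :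
    (starRingEnd ℂ) (φ α) = - φ α := by
  have h : φ α ^ 2 = -(d : ℂ) := by rw [← map_pow, hα]; simp
  have him := congrArg Complex.im h
  have hre := congrArg Complex.re h
  simp [pow_two] at him hre
  have hd' : (0 : ℝ) < d := by exact_mod_cast hd
  have h0 : (φ α).re = 0 := by
    have : (φ α).re * (φ α).im = 0 := by linarith
    rcases mul_eq_zero.1 this with h | h
    · exact h
    · rw [h] at hre; nlinarith [mul_self_nonneg (φ α).re]
  apply Complex.ext <;> simp [h0]

theorem qf_conj' (hd : 0 < d) (hα : α ^ 2 = -(d : K)) (φ : K →+* ℂ) (s t : ℚ) :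
    (starRingEnd ℂ) (φ (s + t * α)) = φ (s - t * α) := by
  simp [qf_conj hd hα φ]; ring

theorem qf_normSq (hd : 0 < d) (hα : α ^ 2 = -(d : K)) (φ : K →+* ℂ) (s t : ℚ) :
    Complex.normSq (φ (s + t * α)) = s ^ 2 + d * t ^ 2 := by
  have h : φ α ^ 2 = -(d : ℂ) := by rw [← map_pow, hα]; simp
  have : ((Complex.normSq (φ (s + t * α)) : ℝ) : ℂ) = (s ^ 2 + d * t ^ 2 : ℂ) := by
    rw [Complex.normSq_eq_conj_mul_self, qf_conj' hd hα]
    simp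
    linear_combination (- t ^ 2 : ℂ) * h
  exact_mod_cast this

theorem rat_int_of_sq (b : ℚ) (n : ℤ) (h : b ^ 2 = n) : ∃ m : ℤ, b = m := by
  have : IsIntegral ℤ b := by
    refine ⟨Polynomial.X ^ 2 - Polynomial.C n, Polynomial.monic_X_pow_sub_C n (by norm_num), ?_⟩
    rw [Polynomial.eval₂_sub, Polynomial.eval₂_X_pow, Polynomial.eval₂_C, h]; simp
  obtain ⟨m, hm⟩ := IsIntegrallyClosed.isIntegral_iff.1 this
  exact ⟨m, by simpa using hm.symm⟩

theorem qf_int (hd : 0 < d) (hsq : Squarefree d) (hα : α ^ 2 = -(d : K)) (htop : Algebra.adjoin ℚ {α} = ⊤)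
    (x : K) (hx : IsIntegral ℤ x) :
    ∃ a b : ℤ, ∃ N : ℕ, 2 * x = a + b * α ∧ a ^ 2 + d * b ^ 2 = 4 * N ∧
      ∀ φ : K →+* ℂ, Complex.normSq (φ x) = N := by
  obtain ⟨s, t, hst⟩ := qf_repr hα htop x
  obtain ⟨φ⟩ : Nonempty (K →+* ℂ) := inferInstance
  have hx' : IsIntegral ℤ (s - t * α : K) := by
    have h1 : IsIntegral ℤ (φ (s - t * α : K)) := by
      rw [← qf_conj' hd hα φ s t, ← hst]
      exact (hx.map (φ.toIntAlgHom)).map ((starRingEnd ℂ).toIntAlgHom)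
    exact (isIntegral_algHom_iff φ.toIntAlgHom φ.injective).1 h1
  have hrat : ∀ r : ℚ, IsIntegral ℤ (r : K) → ∃ m : ℤ, r = m := by
    intro r hr
    have : IsIntegral ℤ r := by
      have h2 : IsIntegral ℤ (algebraMap ℚ K r) := by simpa using hr
      exact (isIntegral_algebraMap_iff (algebraMap ℚ K).injective).1 h2
    obtain ⟨m, hm⟩ := IsIntegrallyClosed.isIntegral_iff.1 this
    exact ⟨m, by simpa using hm.symm⟩
  obtain ⟨a, ha⟩ := hrat (2 * s) (by
    have := hx.add hx'
    rw [hst] at this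
    have e : (((2 * s : ℚ)) : K) = s + t * α + (s - t * α) := by push_cast; ring
    rw [e]; exact this)
  obtain ⟨N, hN⟩ := hrat (s ^ 2 + d * t ^ 2) (by
    have := hx.mul hx'
    rw [hst] at this
    have e : (((s ^ 2 + d * t ^ 2 : ℚ)) : K) = (s + t * α) * (s - t * α) := by
      push_cast; linear_combination (t ^ 2 : K) * hα
    rw [e]; exact this)
  have hdne : (d : ℚ) ≠ 0 := by exact_mod_cast hd.ne'
  obtain ⟨m, hm⟩ := rat_int_of_sq (d * (2 * t)) (d * (4 * N - a ^ 2)) (by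
    push_cast; rw [← ha, ← hN]; ring)
  have hmm : m ^ 2 = d * (4 * N - a ^ 2) := by
    have : (m : ℚ) ^ 2 = d * (4 * N - a ^ 2) := by rw [← hm, ← hN, ← ha]; ring
    exact_mod_cast this
  have hdm : (d : ℤ) ∣ m := by
    have h1 : d ∣ m.natAbs ^ 2 := by
      have : (d : ℤ) ∣ m ^ 2 := ⟨_, hmm⟩
      have := Int.natAbs_dvd_natAbs.2 this
      simpa [Int.natAbs_pow] using this
    have := (hsq.dvd_pow_iff_dvd (by norm_num : (2:ℕ) ≠ 0)).1 h1
    exact Int.natCast_dvd.2 this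
  obtain ⟨b, hb⟩ := hdm
  have htb : 2 * t = b := by
    have : (d : ℚ) * (2 * t) = d * b := by rw [hm, hb]; push_cast; ring
    exact mul_left_cancel₀ hdne this
  have hNn : 0 ≤ N := by
    have : (0 : ℚ) ≤ N := by rw [← hN]; positivity
    exact_mod_cast this
  obtain ⟨N', rfl⟩ := Int.eq_ofNat_of_zero_le hNn
  refine ⟨a, b, N', ?_, ?_, ?_⟩
  · rw [hst]
    have h1 : (2 * s : K) = a := by exact_mod_cast congrArg (fun r : ℚ => (r : K)) ha
    have h2 : (2 * t : K) = b := by exact_mod_cast congrArg (fun r : ℚ => (r : K)) htb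
    linear_combination h1 + α * h2
  · have : (a : ℚ) ^ 2 + d * b ^ 2 = 4 * N' := by
      rw [← ha, ← htb]; push_cast at hN; rw [← hN]; ring
    exact_mod_cast this
  · intro φ
    rw [hst, qf_normSq hd hα]
    exact_mod_cast congrArg (fun r : ℚ => (r : ℝ)) hN

theorem qf_unit (hd : 4 < d) (hsq : Squarefree d) (hα : α ^ 2 = -(d : K)) (htop : Algebra.adjoin ℚ {α} = ⊤)
    (v : (𝓞 K)ˣ) : ((v : 𝓞 K) : K) = 1 ∨ ((v : 𝓞 K) : K) = -1 := by
  obtain ⟨φ⟩ : Nonempty (K →+* ℂ) := inferInstance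
  obtain ⟨a, b, N, h1, h2, h3⟩ := qf_int (by omega) hsq hα htop _ (v : 𝓞 K).isIntegral_coe
  obtain ⟨_, _, N', _, _, h6⟩ := qf_int (by omega) hsq hα htop _ ((v⁻¹ : (𝓞 K)ˣ) : 𝓞 K).isIntegral_coe
  have hN : N * N' = 1 := by
    have : ((N * N' : ℕ) : ℝ) = 1 := by
      push_cast
      rw [← h3 φ, ← h6 φ, ← Complex.normSq_mul, ← map_mul, ← map_mul]
      simp
    exact_mod_cast this
  have hN1 := Nat.eq_one_of_mul_eq_one_right hN
  subst hN1
  have hb : b = 0 := by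
    by_contra hb
    have : 0 < b ^ 2 := by positivity
    have hd' : (4 : ℤ) < d := by exact_mod_cast hd
    push_cast at h2
    nlinarith [sq_nonneg a]
  subst hb
  have ha : a = 2 ∨ a = -2 := by
    have : (a - 2) * (a + 2) = 0 := by push_cast at h2; linarith
    rcases mul_eq_zero.1 this with h | h
    · left; linarith
    · right; linarith
  have h20 : (2 : K) ≠ 0 := two_ne_zero
  rcases ha with rfl | rfl
  · left; apply mul_left_cancel₀ h20; rw [h1]; push_cast; ring
  · right; apply mul_left_cancel₀ h20; rw [h1]; push_cast; ring

end QF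

end

section
open NumberField

/-- the element (k u^2 - l) + 2 u g a -/
def gam {R : Type*} [CommRing R] (a : R) (k l g : ℕ) (u : ℤ) : R :=
  ((k * u ^ 2 - l : ℤ) : R) + ((2 * u * g : ℤ) : R) * a

theorem gam_mul {R : Type*} [CommRing R] {a : R} {d k l g : ℕ} (ha : a ^ 2 = -(d : R))
    (hkl : k * l = d * g ^ 2) (u : ℤ) : gam a k l g u * gam a k l g (-u) = ((k * u ^ 2 + l : ℤ) : R) ^ 2 := by
  have h : (k : R) * l = d * g ^ 2 := by exact_mod_cast congrArg (Nat.cast : ℕ → R) hkl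
  unfold gam; push_cast
  linear_combination (-4 * (u : R) ^ 2 * g ^ 2) * ha - 4 * (u : R) ^ 2 * h

theorem gam_sq {R : Type*} [CommRing R] {a : R} {d k l g : ℕ} (ha : a ^ 2 = -(d : R))
    (hkl : k * l = d * g ^ 2) (u : ℤ) : k * gam a k l g u = (k * u + g * a) ^ 2 := by
  have h : (k : R) * l = d * g ^ 2 := by exact_mod_cast congrArg (Nat.cast : ℕ → R) hkl
  unfold gam; push_cast
  linear_combination (-(g : R) ^ 2) * ha - h

theorem gam_coprime {R : Type*} [CommRing R] {a : R} {d k l g w p : ℕ} (ha : a ^ 2 = -(d : R))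
    (hkl : k * l = d * g ^ 2) (u : ℤ) (hw : (k * u ^ 2 + l : ℤ) = w ^ p) (hc : IsCoprime (w : ℤ) (2 * k * u)) :
    IsCoprime (gam a k l g u) (gam a k l g (-u)) := by
  have h1 : IsCoprime ((w : ℤ) ^ p) (4 * k * u ^ 2) := by
    apply IsCoprime.pow_left
    have h2 : IsCoprime (w : ℤ) u := hc.of_mul_right_right
    have h3 := hc.of_mul_right_left
    have h4 := h3.of_mul_right_left
    have h5 := h3.of_mul_right_right
    have : (4 * k * u ^ 2 : ℤ) = 2 ^ 2 * k * u ^ 2 := by ring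
    rw [this]
    exact ((h4.pow_right).mul_right h5).mul_right h2.pow_right
  have h2 : IsCoprime ((w : ℤ) ^ p) (4 * k * u ^ 2 - 2 * (w : ℤ) ^ p) := by
    have := h1.add_mul_left_right (-2)
    rw [show (4 * k * u ^ 2 - 2 * (w : ℤ) ^ p) = 4 * k * u ^ 2 + w ^ p * (-2) by ring]
    exact this
  have h3 : IsCoprime (((w : ℤ) ^ p) ^ 2) (4 * k * u ^ 2 - 2 * (w : ℤ) ^ p) := h2.pow_left
  obtain ⟨s, t, hst⟩ := h3
  have hst' := congrArg (Int.cast : ℤ → R) hst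
  have hm := gam_mul ha hkl u
  have hs : gam a k l g u + gam a k l g (-u) = ((4 * k * u ^ 2 - 2 * (w : ℤ) ^ p : ℤ) : R) := by
    rw [← hw]; unfold gam; push_cast; ring
  rw [hw] at hm
  push_cast at hst' hs hm
  refine ⟨s * gam a k l g (-u) + t, t, ?_⟩
  linear_combination hst' + s * hm + t * hs

theorem key_nonprincipal {K : Type*} [Field K] [NumberField K] {d : ℕ} (a : 𝓞 K)
    (hd : 4 < d) (hsq : Squarefree d) (hα : (a : K) ^ 2 = -(d : K)) (htop : Algebra.adjoin ℚ {(a : K)} = ⊤)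
    {k l g k' l' b0 w1 w2 p : ℕ} {u1 u2 : ℤ} (hpo : Odd p) (hk : 0 < k)
    (hkl : k * l = d * g ^ 2) (hk' : k = k' * b0 ^ 2) (hdk : d = k' * l')
    (hw1 : (k * u1 ^ 2 + l : ℤ) = w1 ^ p) (hw2 : (k * u2 ^ 2 + l : ℤ) = w2 ^ p)
    (hc1 : IsCoprime (w1 : ℤ) (2 * k * u1)) (hc2 : IsCoprime (w2 : ℤ) (2 * k * u2))
    (hw12 : Nat.Coprime w1 w2) (h1w1 : 1 < w1) (h1w2 : 1 < w2)
    (x y : ℕ) (hxy : x ≠ 0 ∨ y ≠ 0) (hM : 4 * (w1 ^ x * w2 ^ y) < k') (η : 𝓞 K)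
    (hη : Associated (η ^ p) (gam a k l g u1 ^ x * gam a k l g u2 ^ y)) : False := by
  have ha : a ^ 2 = -(d : 𝓞 K) := by
    apply RingOfIntegers.ext; simpa using hα
  have hd0 : 0 < d := by omega
  set M := w1 ^ x * w2 ^ y with hMdef
  set G := gam a k l g u1 ^ x * gam a k l g u2 ^ y with hG
  set G' := gam a k l g (-u1) ^ x * gam a k l g (-u2) ^ y with hG'
  have hM1 : 1 < M := by
    rcases hxy with h | h
    · exact lt_of_lt_of_le (Nat.one_lt_pow h h1w1) (Nat.le_mul_of_pos_right _ (by positivity))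
    · exact lt_of_lt_of_le (Nat.one_lt_pow h h1w2) (Nat.le_mul_of_pos_left _ (by positivity))
  have hGG : G * G' = ((M ^ p) ^ 2 : ℕ) := by
    have e1 := gam_mul ha hkl u1
    have e2 := gam_mul ha hkl u2
    rw [hw1] at e1; rw [hw2] at e2
    calc G * G' = (gam a k l g u1 * gam a k l g (-u1)) ^ x * (gam a k l g u2 * gam a k l g (-u2)) ^ y := by
          rw [hG, hG']; ring
      _ = _ := by rw [e1, e2, hMdef]; push_cast; ring
  obtain ⟨φ⟩ : Nonempty (K →+* ℂ) := inferInstance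
  have hconjg : ∀ u : ℤ, (starRingEnd ℂ) (φ (gam a k l g u : 𝓞 K)) = φ (gam a k l g (-u) : 𝓞 K) := by
    intro u
    have e2 : algebraMap (𝓞 K) K 2 = 2 := map_ofNat _ 2
    have e4 : (starRingEnd ℂ) (φ 2) = φ 2 := by rw [map_ofNat φ 2]; exact Complex.conj_ofNat 2
    unfold gam
    simp [qf_conj hd0 hα φ, e2, e4]
  have hconj : (starRingEnd ℂ) (φ (G : 𝓞 K)) = φ (G' : 𝓞 K) := by
    rw [hG, hG']; simp only [map_mul, map_pow, hconjg]
  -- coprimality of G and G'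
  have hcop : IsCoprime G G' := by
    have c11 := gam_coprime ha hkl u1 hw1 hc1
    have c22 := gam_coprime ha hkl u2 hw2 hc2
    have cw : IsCoprime ((w1 : 𝓞 K)) (w2 : 𝓞 K) := hw12.cast
    have cross : IsCoprime (gam a k l g u1 * gam a k l g (-u1)) (gam a k l g u2 * gam a k l g (-u2)) := by
      rw [gam_mul ha hkl u1, gam_mul ha hkl u2, hw1, hw2]
      push_cast
      exact (cw.pow).pow
    have c12 := cross.of_mul_left_left.of_mul_right_right
    have c21 := cross.of_mul_left_right.of_mul_right_left
    rw [hG, hG']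
    refine IsCoprime.mul_left (IsCoprime.mul_right c11.pow c12.pow) (IsCoprime.mul_right c21.symm.pow c22.pow)
  -- it suffices that G is real
  have hreal : ¬ ∃ r : ℚ, ((η : 𝓞 K) : K) = r := by
    rintro ⟨r, hr⟩
    obtain ⟨v, hv⟩ := hη
    have hvv := qf_unit hd hsq hα htop v
    have hGr : ∃ r' : ℚ, ((G : 𝓞 K) : K) = r' := by
      rcases hvv with h | h
      · refine ⟨r ^ p, ?_⟩
        rw [← hv]; simp [h, hr]
      · refine ⟨-r ^ p, ?_⟩
        rw [← hv]; simp [h, hr]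
    obtain ⟨r', hr'⟩ := hGr
    have hGG' : G = G' := by
      have : φ (G : 𝓞 K) = φ (G' : 𝓞 K) := by
        rw [← hconj, hr']; simp
      exact RingOfIntegers.ext (φ.injective this)
    rw [← hGG', isCoprime_self] at hcop
    rw [← hGG'] at hGG
    have hu : IsUnit (((M ^ p) ^ 2 : ℕ) : 𝓞 K) := by rw [← hGG]; exact hcop.mul hcop
    obtain ⟨v, hv⟩ := hu
    have := qf_unit hd hsq hα htop v
    rw [hv] at this
    have hpp : p ≠ 0 := by rintro rfl; simp at hpo
    have hbig : 1 < (M ^ p) ^ 2 := Nat.one_lt_pow (by norm_num) (Nat.one_lt_pow hpp hM1)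
    rcases this with h | h
    · have : ((((M ^ p) ^ 2 : ℕ)) : K) = ((1 : ℕ) : K) := by simpa using h
      have := Nat.cast_injective this
      omega
    · have : ((((M ^ p) ^ 2 + 1 : ℕ)) : K) = ((0 : ℕ) : K) := by
        have h' : ((((M ^ p) ^ 2 : ℕ)) : K) = -1 := by simpa using h
        rw [Nat.cast_add, h']; simp
      have := Nat.cast_injective this
      omega
  -- the square root
  obtain ⟨h, hph⟩ := hpo
  have hηne : (η : K) ≠ 0 := by
    intro h0
    exact hreal ⟨0, by simpa using h0⟩
  have hkK : (k : K) ≠ 0 := by exact_mod_cast hk.ne'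
  have hb0K : (b0 : K) ≠ 0 := by
    intro h0
    have : b0 = 0 := by exact_mod_cast h0
    subst this; simp at hk'; omega
  set B : K := (k * u1 + g * a) ^ x * (k * u2 + g * a) ^ y with hB
  have hBG : (k : K) ^ (x + y) * (G : K) = B ^ 2 := by
    have e1 : (k : K) * ((gam a k l g u1 : 𝓞 K) : K) = (k * u1 + g * a) ^ 2 := by
      have := congrArg (fun z : 𝓞 K => (z : K)) (gam_sq ha hkl u1)
      simpa using this
    have e2 : (k : K) * ((gam a k l g u2 : 𝓞 K) : K) = (k * u2 + g * a) ^ 2 := by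
      have := congrArg (fun z : 𝓞 K => (z : K)) (gam_sq ha hkl u2)
      simpa using this
    have : (k : K) ^ (x + y) * (G : K) = ((k : K) * ((gam a k l g u1 : 𝓞 K) : K)) ^ x * ((k : K) * ((gam a k l g u2 : 𝓞 K) : K)) ^ y := by
      rw [hG]; push_cast; ring
    rw [this, e1, e2, hB, mul_pow, ← pow_mul, ← pow_mul, ← pow_mul, ← pow_mul, mul_comm 2 x, mul_comm 2 y]
  have hkk'K : (k : K) = k' * b0 ^ 2 := by rw [hk']; push_cast; ring
  obtain ⟨v, hv⟩ := hη
  obtain ⟨e, he, hev⟩ : ∃ e : K, e * e = 1 ∧ (G : K) = (η : K) ^ p * e ∧ (e = 1 ∨ e = -1) := by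
    refine ⟨((v : 𝓞 K) : K), ?_, ?_, qf_unit hd hsq hα htop v⟩
    · rcases qf_unit hd hsq hα htop v with h | h <;> simp [h]
    · rw [← hv]; simp
  obtain ⟨hGe, he1⟩ := hev
  -- norm of eta
  have hnη : Complex.normSq (φ η) = (M : ℝ) ^ 2 := by
    have h1 : Complex.normSq (φ (G : K)) = ((M : ℝ) ^ p) ^ 2 := by
      have : ((Complex.normSq (φ (G : K)) : ℝ) : ℂ) = (((M : ℝ) ^ p) ^ 2 : ℝ) := by
        rw [Complex.normSq_eq_conj_mul_self, hconj, mul_comm, ← map_mul, ← map_mul, hGG]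
        simp
      exact_mod_cast this
    rw [hGe, map_mul, map_mul, map_pow, map_pow] at h1
    have hne : Complex.normSq (φ e) = 1 := by rcases he1 with h | h <;> simp [h]
    rw [hne, mul_one, ← pow_mul, mul_comm p 2, pow_mul] at h1
    exact (pow_left_inj₀ (Complex.normSq_nonneg _) (by positivity) (by omega)).1 h1
  -- theta
  have main : ∀ (kk : ℕ) (D : K), (kk : K) * (G : K) = D ^ 2 → 
      ∃ θ : K, θ ^ 2 = kk * (e * η) ∧ ∃ b c : ℤ, 2 * θ = b + c * a ∧ b ^ 2 + d * c ^ 2 = 4 * (kk * M) := by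
    intro kk D hD
    have hθ : (D / η ^ h) ^ 2 = kk * (e * η) := by
      rw [div_pow, ← hD, hGe, hph]
      field_simp
      ring
    refine ⟨D / η ^ h, hθ, ?_⟩
    have hint : IsIntegral ℤ (D / η ^ h) := by
      apply IsIntegral.of_pow (n := 2) (by norm_num)
      rw [hθ]
      have i1 : IsIntegral ℤ (kk : K) := isIntegral_algebraMap (R := ℤ) (x := (kk : ℤ)) |> fun h => by simpa using h
      have i2 : IsIntegral ℤ e := by
        rcases he1 with h | h <;> rw [h]
        · exact isIntegral_one
        · exact isIntegral_one.neg
      exact i1.mul (i2.mul η.isIntegral_coe)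
    obtain ⟨b, c, N, h1, h2, h3⟩ := qf_int hd0 hsq hα htop _ hint
    refine ⟨b, c, h1, ?_⟩
    rw [h2]
    have hN : (N : ℝ) ^ 2 = (kk * M : ℕ) ^ 2 := by
      rw [← h3 φ, ← map_pow, ← map_pow, hθ]
      have hne : Complex.normSq (φ e) = 1 := by rcases he1 with h | h <;> simp [h]
      simp only [map_mul, hne, hnη]
      simp; ring
    have : N = kk * M := by
      have h5 : (N : ℝ) = (kk * M : ℕ) := (pow_left_inj₀ (by positivity) (by positivity) (by norm_num)).1 hN
      exact_mod_cast h5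
    rw [this]; push_cast; ring
  have hfin : ∀ (kk : ℕ) (θ : K), kk ≠ 0 → θ ^ 2 = kk * (e * η) → (∃ r : ℚ, θ ^ 2 = r) → False := by
    rintro kk θ hkk h1 ⟨r, h2⟩
    apply hreal
    have hkk' : (kk : K) ≠ 0 := by exact_mod_cast hkk
    have : (η : K) = e * (r / kk) := by
      rw [← h2, h1, mul_div_cancel_left₀ _ hkk', ← mul_assoc, he, one_mul]
    rcases he1 with h | h
    · exact ⟨r / kk, by rw [this, h]; push_cast; ring⟩
    · exact ⟨-(r / kk), by rw [this, h]; push_cast; ring⟩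
  have hk'0 : 0 < k' := by omega
  have hl'0 : 0 < l' := by
    rcases Nat.eq_zero_or_pos l' with h | h
    · subst h; simp at hdk; omega
    · exact h
  rcases Nat.even_or_odd' (x + y) with ⟨j, hj | hj⟩
  · obtain ⟨θ, h1, b, c, h2, h3⟩ := main 1 (B / k ^ j) (by
      rw [div_pow, ← hBG, hj]; field_simp; push_cast; ring)
    apply hfin 1 θ (by norm_num) h1
    have hc : c = 0 := by
      by_contra hc
      have h5 : 0 < c ^ 2 := by positivity
      have h6 : k' ≤ d := by rw [hdk]; exact Nat.le_mul_of_pos_right _ hl'0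
      have h7 : (4 * M : ℤ) < d := by exact_mod_cast lt_of_lt_of_le hM h6
      push_cast at h3
      nlinarith [sq_nonneg b]
    refine ⟨(b / 2) ^ 2, ?_⟩
    have : θ = b / 2 := by 
      rw [hc] at h2; field_simp; rw [mul_comm, h2]; simp
    rw [this]; push_cast; ring
  · obtain ⟨θ, h1, b, c, h2, h3⟩ := main k' (B / (k ^ j * b0)) (by
      have : (k : K) ^ (x + y) = k' * (k ^ j * b0) ^ 2 := by
        rw [hj, pow_succ]; nth_rewrite 2 [hkk'K]; ring
      rw [div_pow, ← hBG, this]; field_simp)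
    apply hfin k' θ hk'0.ne' h1
    have hk'sq : Squarefree k' := hsq.squarefree_of_dvd ⟨l', hdk⟩
    have hkb : (k' : ℤ) ∣ b := by
      have e1 : (k' : ℤ) ∣ b ^ 2 := by
        refine ⟨4 * M - l' * c ^ 2, ?_⟩
        rw [hdk] at h3; push_cast at h3; linarith
      have e2 : k' ∣ b.natAbs ^ 2 := by
        have := Int.natAbs_dvd_natAbs.2 e1
        simpa [Int.natAbs_pow] using this
      exact Int.natCast_dvd.2 ((hk'sq.dvd_pow_iff_dvd (by norm_num : (2:ℕ) ≠ 0)).1 e2)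
    obtain ⟨b', rfl⟩ := hkb
    have hb' : b' = 0 := by
      by_contra hb
      have h5 : 0 < b' ^ 2 := by positivity
      have h6 : (k' : ℤ) * (k' * b' ^ 2 + l' * c ^ 2) = k' * (4 * M) := by
        rw [hdk] at h3; push_cast at h3; linarith
      have h7 : (k' : ℤ) ≠ 0 := by exact_mod_cast hk'0.ne'
      have h8 := mul_left_cancel₀ h7 h6
      have h9 : (4 * M : ℤ) < k' := by exact_mod_cast hM
      have h10 : 0 ≤ (l' : ℤ) * c ^ 2 := by positivity
      nlinarith
    subst hb'
    refine ⟨-(c / 2) ^ 2 * d, ?_⟩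
    have : θ = c * a / 2 := by
      rw [eq_div_iff (two_ne_zero), mul_comm, h2]
      rw [mul_zero, Int.cast_zero, zero_add]
    rw [this]; push_cast
    linear_combination (c ^ 2 / 4 : K) * hα

end

section
open NumberField
open scoped nonZeroDivisors

theorem ideal_root {K : Type*} [Field K] [NumberField K] {d : ℕ} {a : 𝓞 K}
    (ha : a ^ 2 = -(d : 𝓞 K)) {k l g w p : ℕ} (hp : p ≠ 0) (hkl : k * l = d * g ^ 2) (u : ℤ)
    (hw : (k * u ^ 2 + l : ℤ) = w ^ p) (hc : IsCoprime (w : ℤ) (2 * k * u)) (hw0 : w ≠ 0) :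
    ∃ I J : (Ideal (𝓞 K))⁰, (I : Ideal (𝓞 K)) ^ p = Ideal.span {gam a k l g u} ∧
      (J : Ideal (𝓞 K)) ^ p = Ideal.span {gam a k l g (-u)} ∧
      ClassGroup.mk0 I * ClassGroup.mk0 J = 1 ∧ ClassGroup.mk0 I ^ p = 1 := by
  have hm := gam_mul ha hkl u
  rw [hw] at hm
  have hwK : (w : 𝓞 K) ≠ 0 := by exact_mod_cast hw0
  have hprod : Ideal.span {gam a k l g u} * Ideal.span {gam a k l g (-u)} = (Ideal.span {(w : 𝓞 K) ^ 2}) ^ p := by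
    rw [Ideal.span_singleton_mul_span_singleton, Ideal.span_singleton_pow, hm]
    congr 2; push_cast; ring
  have hne : (Ideal.span {(w : 𝓞 K) ^ 2}) ≠ ⊥ := by
    rw [Ne, Ideal.span_singleton_eq_bot]; exact pow_ne_zero _ hwK
  have hcop : IsCoprime (Ideal.span {gam a k l g u}) (Ideal.span {gam a k l g (-u)}) := by
    rw [Ideal.isCoprime_span_singleton_iff]
    exact gam_coprime ha hkl u hw hc
  obtain ⟨I, hI⟩ := exists_eq_pow_of_mul_eq_pow_of_coprime hcop hprod
  obtain ⟨J, hJ⟩ := exists_eq_pow_of_mul_eq_pow_of_coprime hcop.symm (by rw [mul_comm]; exact hprod)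
  have hIJ : I * J = Ideal.span {(w : 𝓞 K) ^ 2} := by
    rw [hI, hJ, ← mul_pow] at hprod
    exact (pow_left_inj hp).1 hprod
  have hI0 : I ≠ 0 := by rintro rfl; rw [zero_mul] at hIJ; exact hne hIJ.symm
  have hJ0 : J ≠ 0 := by rintro rfl; rw [mul_zero] at hIJ; exact hne hIJ.symm
  refine ⟨⟨I, mem_nonZeroDivisors_iff_ne_zero.2 hI0⟩, ⟨J, mem_nonZeroDivisors_iff_ne_zero.2 hJ0⟩, hI.symm, hJ.symm, ?_, ?_⟩
  · rw [← map_mul]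
    have : (⟨I, mem_nonZeroDivisors_iff_ne_zero.2 hI0⟩ * ⟨J, mem_nonZeroDivisors_iff_ne_zero.2 hJ0⟩ : (Ideal (𝓞 K))⁰)
       = ⟨I * J, mem_nonZeroDivisors_iff_ne_zero.2 (mul_ne_zero hI0 hJ0)⟩ := rfl
    rw [this, ClassGroup.mk0_eq_one_iff, hIJ]
    exact ⟨⟨_, rfl⟩⟩
  · rw [← map_pow]
    have : (⟨I, mem_nonZeroDivisors_iff_ne_zero.2 hI0⟩ ^ p : (Ideal (𝓞 K))⁰)
       = ⟨I ^ p, mem_nonZeroDivisors_iff_ne_zero.2 (pow_ne_zero _ hI0)⟩ := rfl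
    rw [this, ClassGroup.mk0_eq_one_iff, ← hI]
    exact ⟨⟨_, rfl⟩⟩

theorem class_group_rank {K : Type*} [Field K] [NumberField K] {d : ℕ} (α : K)
    (hd : 4 < d) (hsq : Squarefree d) (hα : α ^ 2 = -(d : K)) (htop : Algebra.adjoin ℚ {α} = ⊤)
    {k l g k' l' b0 w1 w2 p R W : ℕ} {u1 u2 : ℤ} (hp : p.Prime) (hp5 : 5 ≤ p)
    (hR : (p = 5 ∧ R = 3) ∨ (7 ≤ p ∧ R = p - 4)) (hk : 0 < k)
    (hkl : k * l = d * g ^ 2) (hk' : k = k' * b0 ^ 2) (hdk : d = k' * l')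
    (hw1 : (k * u1 ^ 2 + l : ℤ) = w1 ^ p) (hw2 : (k * u2 ^ 2 + l : ℤ) = w2 ^ p)
    (hc1 : IsCoprime (w1 : ℤ) (2 * k * u1)) (hc2 : IsCoprime (w2 : ℤ) (2 * k * u2))
    (hw12 : Nat.Coprime w1 w2) (h1w1 : 1 < w1) (h1w2 : 1 < w2) (hW1 : w1 ≤ W) (hW2 : w2 ≤ W)
    (hM : 4 * W ^ R < k') : 
    ∃ H : Subgroup (ClassGroup (𝓞 K)), Nonempty (H ≃* Multiplicative (ZMod p × ZMod p)) := by
  have hint : IsIntegral ℤ α := by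
    apply IsIntegral.of_pow (n := 2) (by norm_num)
    rw [hα]
    exact ((isIntegral_algebraMap (R := ℤ) (x := (d : ℤ)) : IsIntegral ℤ (algebraMap ℤ K d)) |> fun h => by simpa using h.neg)
  obtain ⟨a, rfl⟩ : ∃ a : 𝓞 K, (a : K) = α := ⟨⟨α, hint⟩, rfl⟩
  have ha : a ^ 2 = -(d : 𝓞 K) := by
    apply RingOfIntegers.ext; simpa using hα
  have hpo : Odd p := hp.odd_of_ne_two (by omega)
  obtain ⟨I1, J1, hI1, hJ1, hIJ1, hc1p⟩ := ideal_root ha hp.ne_zero hkl u1 hw1 hc1 (by omega)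
  obtain ⟨I2, J2, hI2, hJ2, hIJ2, hc2p⟩ := ideal_root ha hp.ne_zero hkl u2 hw2 hc2 (by omega)
  have main : ∀ (v1 v2 : ℤ) (A B : (Ideal (𝓞 K))⁰) (x y : ℕ),
      (v1 = u1 ∨ v1 = -u1) → (v2 = u2 ∨ v2 = -u2) → (A : Ideal (𝓞 K)) ^ p = Ideal.span {gam a k l g v1} →
      (B : Ideal (𝓞 K)) ^ p = Ideal.span {gam a k l g v2} → (x ≠ 0 ∨ y ≠ 0) → x + y ≤ R →
      ClassGroup.mk0 A ^ x * ClassGroup.mk0 B ^ y ≠ 1 := by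
    intro v1 v2 A B x y hv1 hv2 hA hB hxy hxyR h1
    rw [← map_pow, ← map_pow, ← map_mul] at h1
    have h2 : ClassGroup.mk0 (⟨(A : Ideal (𝓞 K)) ^ x * (B : Ideal (𝓞 K)) ^ y, (A ^ x * B ^ y).2⟩ : (Ideal (𝓞 K))⁰) = 1 := h1
    rw [ClassGroup.mk0_eq_one_iff] at h2
    obtain ⟨⟨η, hη⟩⟩ := h2
    have hη' : (A : Ideal (𝓞 K)) ^ x * (B : Ideal (𝓞 K)) ^ y = Ideal.span {η} := hη
    have has : Associated (η ^ p) (gam a k l g v1 ^ x * gam a k l g v2 ^ y) := by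
      rw [← Ideal.span_singleton_eq_span_singleton, ← Ideal.span_singleton_pow, ← hη', mul_pow, ← pow_mul, ← pow_mul,
        mul_comm x, mul_comm y, pow_mul, pow_mul, hA, hB, Ideal.span_singleton_pow, Ideal.span_singleton_pow,
        Ideal.span_singleton_mul_span_singleton]
    have hW0 : 1 ≤ W := by omega
    have hM' : 4 * (w1 ^ x * w2 ^ y) < k' := by
      refine lt_of_le_of_lt ?_ hM
      apply Nat.mul_le_mul_left
      calc w1 ^ x * w2 ^ y ≤ W ^ x * W ^ y := Nat.mul_le_mul (Nat.pow_le_pow_left hW1 _) (Nat.pow_le_pow_left hW2 _)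
        _ = W ^ (x + y) := by ring
        _ ≤ W ^ R := Nat.pow_le_pow_right hW0 hxyR
    refine key_nonprincipal a hd hsq hα htop (u1 := v1) (u2 := v2) hpo hk hkl hk' hdk ?_ ?_ ?_ ?_ hw12 h1w1 h1w2 x y hxy hM' η has
    · rcases hv1 with rfl | rfl <;> simpa using hw1
    · rcases hv2 with rfl | rfl <;> simpa using hw2
    · rcases hv1 with rfl | rfl <;> simpa [IsCoprime.neg_right_iff] using hc1
    · rcases hv2 with rfl | rfl <;> simpa [IsCoprime.neg_right_iff] using hc2
  apply indep_subgroup p R hp hp5 hR (ClassGroup.mk0 I1) (ClassGroup.mk0 I2) hc1p hc2p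
  have hi1 : (ClassGroup.mk0 I1)⁻¹ = ClassGroup.mk0 J1 := inv_eq_of_mul_eq_one_right hIJ1
  have hi2 : (ClassGroup.mk0 I2)⁻¹ = ClassGroup.mk0 J2 := inv_eq_of_mul_eq_one_right hIJ2
  intro x y hxy hR'
  rcases Int.eq_nat_or_neg x with ⟨m, rfl | rfl⟩ <;> rcases Int.eq_nat_or_neg y with ⟨n, rfl | rfl⟩
  · simp only [zpow_natCast]
    exact main u1 u2 I1 I2 m n (Or.inl rfl) (Or.inl rfl) hI1 hI2 (by simpa using hxy) (by simp at hR'; exact_mod_cast hR')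
  · simp only [zpow_natCast, zpow_neg, ← inv_pow, hi2]
    exact main u1 (-u2) I1 J2 m n (Or.inl rfl) (Or.inr rfl) hI1 hJ2 (by simpa using hxy) (by simp at hR'; exact_mod_cast hR')
  · simp only [zpow_natCast, zpow_neg, ← inv_pow, hi1]
    exact main (-u1) u2 J1 I2 m n (Or.inr rfl) (Or.inl rfl) hJ1 hI2 (by simpa using hxy) (by simp at hR'; exact_mod_cast hR')
  · simp only [zpow_natCast, zpow_neg, ← inv_pow, hi1, hi2]
    exact main (-u1) (-u2) J1 J2 m n (Or.inr rfl) (Or.inr rfl) hJ1 hJ2 (by simpa using hxy) (by simp at hR'; exact_mod_cast hR')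

end

section
open NumberField

theorem qf_discr {K : Type*} [Field K] [NumberField K] {d : ℕ} (α : K)
    (hd : 0 < d) (hsq : Squarefree d) (hα : α ^ 2 = -(d : K)) (htop : Algebra.adjoin ℚ {α} = ⊤) :
    |discr K| ≤ 4 * d ∧ (d : ℤ) ≤ 4 * |discr K| := by
  obtain ⟨φ⟩ : Nonempty (K →+* ℂ) := inferInstance
  have hdQ : (0 : ℚ) < d := by exact_mod_cast hd
  have hint : IsIntegral ℤ α := by
    apply IsIntegral.of_pow (n := 2) (by norm_num)
    rw [hα]
    exact ((isIntegral_algebraMap (R := ℤ) (x := (d : ℤ)) : IsIntegral ℤ (algebraMap ℤ K d)) |> fun h => by simpa using h.neg)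
  have hli : LinearIndependent ℚ ![(1 : K), α] := by
    rw [LinearIndependent.pair_iff]
    intro s t hst
    have h1 := qf_normSq hd hα φ s t
    have h2 : (s : K) + t * α = 0 := by
      rw [Algebra.smul_def, Algebra.smul_def] at hst; simpa using hst
    rw [h2] at h1
    simp at h1
    have h3 : s ^ 2 + d * t ^ 2 = 0 := by exact_mod_cast h1.symm
    have hs : s ^ 2 = 0 := by nlinarith [sq_nonneg s, mul_nonneg hdQ.le (sq_nonneg t)]
    have ht : t ^ 2 = 0 := by
      rw [hs, zero_add] at h3
      exact (mul_eq_zero.1 h3).resolve_left hdQ.ne'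
    exact ⟨pow_eq_zero_iff (two_ne_zero) |>.1 hs, pow_eq_zero_iff (two_ne_zero) |>.1 ht⟩
  have hsp : ⊤ ≤ Submodule.span ℚ (Set.range ![(1 : K), α]) := by
    intro x _
    obtain ⟨s, t, rfl⟩ := qf_repr hα htop x
    have e : (s : K) + t * α = s • (1 : K) + t • α := by
      rw [Algebra.smul_def, Algebra.smul_def]; simp
    rw [e]
    apply Submodule.add_mem
    · exact Submodule.smul_mem _ _ (Submodule.subset_span ⟨0, rfl⟩)
    · exact Submodule.smul_mem _ _ (Submodule.subset_span ⟨1, rfl⟩)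
  let B := Module.Basis.mk hli hsp
  have hB0 : B 0 = 1 := by simp [B]
  have hB1 : B 1 = α := by simp [B]
  have hrank : Module.finrank ℚ K = 2 := by
    rw [Module.finrank_eq_card_basis B]; simp
  have htr1 : Algebra.trace ℚ K 1 = 2 := by
    have := Algebra.trace_algebraMap (S := K) (1 : ℚ)
    rw [map_one] at this
    rw [this, hrank]; norm_num
  have hα2 : α * α = -(d : ℚ) • B 0 := by
    rw [hB0, Algebra.smul_def, ← pow_two, hα]; simp
  have htrα : Algebra.trace ℚ K α = 0 := by
    rw [Algebra.trace_eq_matrix_trace B, Matrix.trace_fin_two]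
    rw [Algebra.leftMulMatrix_eq_repr_mul, Algebra.leftMulMatrix_eq_repr_mul]
    have e1 : α * B 0 = B 1 := by rw [hB0, hB1, mul_one]
    have e2 : α * B 1 = -(d : ℚ) • B 0 := by rw [hB1, hα2]
    rw [e1, e2]
    simp
  have htrα2 : Algebra.trace ℚ K (α * α) = -2 * d := by
    rw [hα2, hB0, map_smul, htr1]; simp; ring
  have hdB : Algebra.discr ℚ ![(1 : K), α] = -4 * d := by
    rw [Algebra.discr_def, Matrix.det_fin_two]
    simp only [Algebra.traceMatrix_apply, Algebra.traceForm_apply]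
    simp [htr1, htrα, htrα2]; ring
  -- integral basis
  obtain ⟨b⟩ : Nonempty (Module.Basis (Fin 2) ℤ (𝓞 K)) := by
    have hc : Fintype.card (Module.Free.ChooseBasisIndex ℤ (𝓞 K)) = 2 := by
      rw [← Module.finrank_eq_card_chooseBasisIndex, RingOfIntegers.rank, hrank]
    exact ⟨(RingOfIntegers.basis K).reindex (Fintype.equivFinOfCardEq hc)⟩
  set β : Fin 2 → K := fun i => (b i : K) with hβ
  have hβd : Algebra.discr ℚ β = discr K := by
    rw [← discr_eq_discr K b]
    have := Algebra.discr_localizationLocalization ℤ (nonZeroDivisors ℤ) K b (Rₘ := ℚ)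
    rw [eq_comm] at this
    have h2 : (Module.Basis.localizationLocalization ℚ (nonZeroDivisors ℤ) K b : Fin 2 → K) = β := by
      ext i; rw [Module.Basis.localizationLocalization_apply]
    rw [h2] at this
    simpa using this.symm
  -- first relation
  have hex : ∀ z : 𝓞 K, (z : K) = (b.repr z 0 : ℚ) • β 0 + (b.repr z 1 : ℚ) • β 1 := by
    intro z
    have h := b.sum_repr z
    rw [Fin.sum_univ_two] at h
    have := congrArg (fun y : 𝓞 K => (y : K)) h
    simp only [zsmul_eq_mul] at this
    rw [Algebra.smul_def, Algebra.smul_def]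
    rw [← this]; simp [hβ]
  obtain ⟨P, hP⟩ : ∃ P : Matrix (Fin 2) (Fin 2) ℤ, ![(1 : K), α] = ((P.map (Int.cast : ℤ → ℚ)).map (algebraMap ℚ K)).mulVec β := by
    refine ⟨!![b.repr 1 0, b.repr 1 1; b.repr ⟨α, hint⟩ 0, b.repr ⟨α, hint⟩ 1], ?_⟩
    have e1 := hex 1
    have e2 : α = _ := hex ⟨α, hint⟩
    rw [Algebra.smul_def, Algebra.smul_def] at e1 e2
    ext i; fin_cases i
    · simpa [Matrix.mulVec, dotProduct, Fin.sum_univ_two] using e1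
    · simpa [Matrix.mulVec, dotProduct, Fin.sum_univ_two] using e2
  have r1 : (-4 * d : ℤ) = P.det ^ 2 * discr K := by
    have := Algebra.discr_of_matrix_mulVec (A := ℚ) β (P.map (Int.cast : ℤ → ℚ))
    rw [← hP, hdB, hβd] at this
    have h3 : (P.map (Int.cast : ℤ → ℚ)).det = (P.det : ℚ) := by
      have := (Int.castRingHom ℚ).map_det P
      simpa [RingHom.mapMatrix_apply] using this.symm
    rw [h3] at this
    exact_mod_cast this
  obtain ⟨Q, hQ⟩ : ∃ Q : Matrix (Fin 2) (Fin 2) ℤ, (((Matrix.diagonal (fun _ => (2 : ℚ)) : Matrix (Fin 2) (Fin 2) ℚ)).map (algebraMap ℚ K)).mulVec β =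
       ((Q.map (Int.cast : ℤ → ℚ)).map (algebraMap ℚ K)).mulVec ![(1 : K), α] := by
    obtain ⟨a0, c0, _, h0, _⟩ := qf_int hd hsq hα htop _ (b 0).isIntegral_coe
    obtain ⟨a1, c1, _, h1, _⟩ := qf_int hd hsq hα htop _ (b 1).isIntegral_coe
    refine ⟨!![a0, c0; a1, c1], ?_⟩
    ext i; fin_cases i
    · simp [Matrix.mulVec, dotProduct, Fin.sum_univ_two, hβ, h0]
    · simp [Matrix.mulVec, dotProduct, Fin.sum_univ_two, hβ, h1]
  have r2 : 16 * discr K = Q.det ^ 2 * (-4 * d : ℤ) := by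
    have t1 := Algebra.discr_of_matrix_mulVec (A := ℚ) β (Matrix.diagonal (fun _ => (2 : ℚ)) : Matrix (Fin 2) (Fin 2) ℚ)
    have t2 := Algebra.discr_of_matrix_mulVec (A := ℚ) ![(1 : K), α] (Q.map (Int.cast : ℤ → ℚ))
    rw [← hQ, t1, hdB, hβd] at t2
    have h3 : (Q.map (Int.cast : ℤ → ℚ)).det = (Q.det : ℚ) := by
      have := (Int.castRingHom ℚ).map_det Q
      simpa [RingHom.mapMatrix_apply] using this.symm
    rw [h3, Matrix.det_diagonal] at t2
    simp at t2
    norm_num at t2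
    have t3 : (16 * discr K : ℚ) = Q.det ^ 2 * (-4 * d) := by rw [t2]; ring
    exact_mod_cast t3
  have hd' : (0 : ℤ) < d := by exact_mod_cast hd
  have hP0 : P.det ≠ 0 := by intro h; rw [h] at r1; simp at r1; omega
  have hD0 : discr K ≠ 0 := discr_ne_zero K
  have hQ0 : Q.det ≠ 0 := by intro h; rw [h] at r2; simp at r2; exact hD0 r2
  have hPp : 1 ≤ P.det ^ 2 := by have : 0 < P.det ^ 2 := by positivity
                                 omega
  have hQp : 1 ≤ Q.det ^ 2 := by have : 0 < Q.det ^ 2 := by positivity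
                                 omega
  have hneg : discr K < 0 := by
    by_contra hc; push Not at hc; nlinarith
  rw [abs_of_neg hneg]
  constructor <;> nlinarith

theorem exists_field (d : ℕ) (hd : 0 < d) : ∃ (K : Type) (_ : Field K) (_ : NumberField K) (α : K),
    α ^ 2 = -(d : K) ∧ Algebra.adjoin ℚ {α} = ⊤ := by
  have hz : ∃ z : ℂ, z ^ 2 = -(d : ℂ) := ⟨_, (IsAlgClosed.exists_pow_nat_eq (-(d : ℂ)) (n := 2) (by norm_num)).choose_spec⟩
  obtain ⟨z, hz⟩ := hz
  have hi : IsIntegral ℚ z := by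
    apply IsIntegral.of_pow (n := 2) (by norm_num)
    rw [hz]
    have := (isIntegral_algebraMap (R := ℚ) (A := ℂ) (x := -(d : ℚ)))
    simpa using this
  have : FiniteDimensional ℚ (IntermediateField.adjoin ℚ {z}) := IntermediateField.adjoin.finiteDimensional hi
  refine ⟨IntermediateField.adjoin ℚ {z}, inferInstance, { to_charZero := inferInstance, to_finiteDimensional := inferInstance }, IntermediateField.AdjoinSimple.gen ℚ z, ?_, ?_⟩
  · apply Subtype.ext; simp [hz]
  · have := (IntermediateField.adjoin.powerBasis hi).adjoin_gen_eq_top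
    rw [IntermediateField.adjoin.powerBasis_gen] at this
    have gen : ∀ (L : Type) [Field L] (A1 A2 : Algebra ℚ L) (x : L),
        @Algebra.adjoin ℚ L _ _ A1 {x} = ⊤ → @Algebra.adjoin ℚ L _ _ A2 {x} = ⊤ := by
      intro L _ A1 A2 x h
      obtain rfl := Subsingleton.elim A1 A2
      exact h
    exact gen _ _ _ _ this

theorem dset_finite (P : ∀ (K : Type) [Field K] [NumberField K], Prop) (X : ℝ) :
    {d : ℕ | 0 < d ∧ Squarefree d ∧
            ∀ (K : Type) [Field K] [NumberField K] (α : K),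
              α ^ 2 = -(d : K) → Algebra.adjoin ℚ {α} = ⊤ →
                |(NumberField.discr K : ℝ)| ≤ X ∧ P K}.Finite := by
  apply (Set.finite_Iic (Nat.ceil (4 * X))).subset
  rintro d ⟨hd, hsq, h⟩
  obtain ⟨K, i1, i2, α, h1, h2⟩ := exists_field d hd
  have h3 := (h K α h1 h2).1
  have h4 := (qf_discr α hd hsq h1 h2).2
  have h5 : (d : ℝ) ≤ 4 * |(NumberField.discr K : ℝ)| := by exact_mod_cast h4
  rw [Set.mem_Iic]
  have h6 : (d : ℝ) ≤ (Nat.ceil (4 * X) : ℝ) := le_trans (by linarith) (Nat.le_ceil _)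
  exact_mod_cast h6

end

section

theorem odd_part (f : ℕ) (hf : f ≠ 0) : ∃ D F : ℕ, f = D * F ∧ D ^ 2 ∣ f ∧
    (∏ s ∈ f.primeFactors, s) ∣ F ∧ ∀ s, s.Prime → s ∣ f → Odd (F.factorization s) := by
  let gD : ℕ → ℕ := fun v => if v = 0 then 0 else if Even v then 1 else 0
  let gF : ℕ → ℕ := fun v => if v = 0 then 0 else if Even v then v - 1 else v
  let D := ∏ s ∈ f.primeFactors, s ^ gD (f.factorization s)
  let F := ∏ s ∈ f.primeFactors, s ^ gF (f.factorization s)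
  have hprod : f = ∏ s ∈ f.primeFactors, s ^ f.factorization s := by
    conv_lhs => rw [← Nat.prod_factorization_pow_eq_self hf]
    rfl
  have hv : ∀ s ∈ f.primeFactors, f.factorization s ≠ 0 := by
    intro s hs
    rw [← Finsupp.mem_support_iff]; exact hs
  have hFfac : F.factorization = f.factorization.mapRange gF (by simp [gF]) := by
    have : F = (f.factorization.mapRange gF (by simp [gF])).prod (fun a b => a ^ b) := by
      rw [Finsupp.prod_mapRange_index (by simp)]
      rfl
    rw [this]
    apply Nat.prod_pow_factorization_eq_self
    intro s hs
    have : s ∈ f.factorization.support := Finsupp.support_mapRange hs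
    exact Nat.prime_of_mem_primeFactors this
  refine ⟨D, F, ?_, ?_, ?_, ?_⟩
  · refine hprod.trans ?_
    simp only [D, F]; rw [← Finset.prod_mul_distrib]
    apply Finset.prod_congr rfl
    intro s hs
    rw [← pow_add]; congr 1
    have h0 := hv s hs
    simp only [gD, gF, if_neg h0]
    split_ifs <;> omega
  · conv_rhs => rw [hprod]
    simp only [D]; rw [← Finset.prod_pow]
    apply Finset.prod_dvd_prod_of_dvd
    intro s hs
    rw [← pow_mul]
    apply pow_dvd_pow
    have h0 := hv s hs
    simp only [gD, if_neg h0]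
    split_ifs with h
    · obtain ⟨r, hr⟩ := h; omega
    · omega
  · apply Finset.prod_dvd_prod_of_dvd
    intro s hs
    apply dvd_pow_self
    have h0 := hv s hs
    simp only [gF, if_neg h0]
    split_ifs with h
    · obtain ⟨r, hr⟩ := h; omega
    · exact h0
  · intro s hs hsf
    rw [hFfac, Finsupp.mapRange_apply]
    have h0 : f.factorization s ≠ 0 := hv s (Nat.mem_primeFactors.2 ⟨hs, hsf, hf⟩)
    simp only [gF, if_neg h0]
    split_ifs with h
    · obtain ⟨r, hr⟩ := h; exact ⟨r - 1, by omega⟩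
    · exact Nat.not_even_iff_odd.1 h

theorem omega_lt (Y m : ℕ) (hm : 0 < m) (hY : 1 ≤ Y) (hbig : ∀ s, s.Prime → s ∣ m → Y < s) (hYY : m < Y ^ Y) :
    m.primeFactors.card < Y := by
  by_contra hc; push Not at hc
  have h1 : Y ^ m.primeFactors.card ≤ ∏ s ∈ m.primeFactors, s := by
    apply Finset.pow_card_le_prod
    intro s hs
    exact (hbig s (Nat.prime_of_mem_primeFactors hs) (Nat.dvd_of_mem_primeFactors hs)).le
  have h2 := Nat.le_of_dvd hm (Nat.prod_primeFactors_dvd m)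
  have h3 : Y ^ Y ≤ Y ^ m.primeFactors.card := Nat.pow_le_pow_right hY hc
  omega

theorem choose_c (Y w1 w2 A β : ℕ) (hw1 : 0 < w1) (hw2 : 0 < w2) (hY : 1 ≤ Y) (hcop : Nat.Coprime w1 w2)
    (hbig : ∀ s, s.Prime → s ∣ w1 * w2 → Y < s) (hYY : w1 * w2 < Y ^ Y)
    (hβ : ∀ s, s.Prime → s ∣ w1 * w2 → ¬ s ∣ β) :
    ∃ c, 1 ≤ c ∧ c ≤ Y ∧ (∀ s, s.Prime → s ∣ w1 → ¬ (s : ℤ) ∣ A + β * c) ∧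
      (∀ s, s.Prime → s ∣ w2 → ¬ (s : ℤ) ∣ A - β * c) := by
  by_contra hcon
  push Not at hcon
  have hex : ∀ c ∈ Finset.Icc 1 Y, ∃ s, s.Prime ∧ ((s ∣ w1 ∧ (s : ℤ) ∣ A + β * c) ∨ (s ∣ w2 ∧ (s : ℤ) ∣ A - β * c)) := by
    intro c hc
    rw [Finset.mem_Icc] at hc
    by_cases h : ∀ s, s.Prime → s ∣ w1 → ¬ (s : ℤ) ∣ A + β * c
    · obtain ⟨s, h1, h2, h3⟩ := hcon c hc.1 hc.2 h
      exact ⟨s, h1, Or.inr ⟨h2, h3⟩⟩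
    · push Not at h
      obtain ⟨s, h1, h2, h3⟩ := h
      exact ⟨s, h1, Or.inl ⟨h2, h3⟩⟩
  choose! S hS using hex
  have hcard := omega_lt Y (w1 * w2) (by positivity) hY hbig hYY
  have hle : (Finset.Icc 1 Y).card ≤ (w1 * w2).primeFactors.card := by
    apply Finset.card_le_card_of_injOn S
    · intro c hc
      obtain ⟨h1, h2⟩ := hS c hc
      rw [Finset.mem_coe, Nat.mem_primeFactors]
      refine ⟨h1, ?_, by positivity⟩
      rcases h2 with h | h
      · exact h.1.mul_right _
      · exact h.1.mul_left _
    · intro c hc c' hc' hcc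
      obtain ⟨h1, h2⟩ := hS c hc
      obtain ⟨h1', h2'⟩ := hS c' hc'
      rw [← hcc] at h1' h2'
      have hdw : S c ∣ w1 * w2 := by
        rcases h2 with h | h
        · exact h.1.mul_right _
        · exact h.1.mul_left _
      have hb := hbig _ h1 hdw
      have hβ' := hβ _ h1 hdw
      have hdiff : ((S c : ℕ) : ℤ) ∣ β * ((c : ℤ) - c') := by
        rcases h2 with h | h <;> rcases h2' with h' | h'
        · have := dvd_sub h.2 h'.2
          rwa [show ((A : ℤ) + β * c - (A + β * c')) = β * ((c : ℤ) - c') by ring] at this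
        · exact absurd (Nat.dvd_gcd h.1 h'.1) (by rw [hcop]; exact h1.not_dvd_one)
        · exact absurd (Nat.dvd_gcd h'.1 h.1) (by rw [hcop]; exact h1.not_dvd_one)
        · have := dvd_sub h'.2 h.2
          rwa [show ((A : ℤ) - β * c' - (A - β * c)) = β * ((c : ℤ) - c') by ring] at this
      have hp : Prime ((S c : ℕ) : ℤ) := Nat.prime_iff_prime_int.1 h1
      rcases hp.dvd_or_dvd hdiff with h | h
      · exact absurd (by exact_mod_cast h) hβ'
      · rw [Finset.mem_coe, Finset.mem_Icc] at hc hc'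
        have := Int.eq_zero_of_abs_lt_dvd h (by rw [abs_lt]; constructor <;> omega)
        omega
  rw [Nat.card_Icc] at hle
  omega

end

section

theorem isCoprime_of_primes (w : ℕ) (z : ℤ) (h : ∀ s : ℕ, s.Prime → s ∣ w → ¬ (s : ℤ) ∣ z) :
    IsCoprime (w : ℤ) z := by
  rw [Int.isCoprime_iff_nat_coprime]
  apply Nat.coprime_of_dvd
  intro s hs h1 h2
  exact h s hs (by simpa using h1) (Int.natCast_dvd.2 h2)

theorem pow_diff_le (w1 w2 e p F : ℕ) (he : 0 < e) (hw : w1 = w2 + e) (h : w1 ^ p = w2 ^ p + e * F) :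
    F ≤ p * w1 ^ (p - 1) ∧ w1 ^ (p - 1) ≤ F ∨ p = 0 := by
  rcases Nat.eq_zero_or_pos p with hp | hp
  · right; exact hp
  left
  have hg := Commute.mul_geom_sum₂ (Commute.all (w1 : ℤ) w2) p
  have h1 : (w1 : ℤ) - w2 = e := by rw [hw]; push_cast; ring
  have h2 : (w1 : ℤ) ^ p - w2 ^ p = e * F := by
    have : (w1 : ℤ) ^ p = w2 ^ p + e * F := by exact_mod_cast h
    linarith
  rw [h1, h2] at hg
  have he' : (e : ℤ) ≠ 0 := by exact_mod_cast he.ne'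
  have h3 := mul_left_cancel₀ he' hg
  have h4 : F = ∑ i ∈ Finset.range p, w1 ^ i * w2 ^ (p - 1 - i) := by exact_mod_cast h3.symm
  rw [h4]
  constructor
  · calc ∑ i ∈ Finset.range p, w1 ^ i * w2 ^ (p - 1 - i) ≤ ∑ i ∈ Finset.range p, w1 ^ (p - 1) := by
          apply Finset.sum_le_sum
          intro i hi
          rw [Finset.mem_range] at hi
          calc w1 ^ i * w2 ^ (p - 1 - i) ≤ w1 ^ i * w1 ^ (p - 1 - i) := 
                Nat.mul_le_mul_left _ (Nat.pow_le_pow_left (by omega) _)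
            _ = w1 ^ (p - 1) := by rw [← pow_add]; congr 1; omega
      _ = _ := by simp
  · calc w1 ^ (p - 1) = w1 ^ (p - 1) * w2 ^ (p - 1 - (p - 1)) := by simp
      _ ≤ _ := Finset.single_le_sum (f := fun i => w1 ^ i * w2 ^ (p - 1 - i)) (fun i _ => Nat.zero_le _) (Finset.mem_range.2 (by omega))

theorem construct (p Y C0 e2 q1 q2 f D F w1 w2 : ℕ) (hp : p ≠ 0) (hY : 1 ≤ Y)
    (hC : ∀ c, 1 ≤ c → c ≤ Y → c ∣ C0) (hC0 : 0 < C0) (he2 : 0 < e2) (hq1 : 0 < q1) (hq2 : 0 < q2) (hf0 : 0 < f)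
    (hw2 : 1 < w2) (hw : w1 = w2 + 4 * C0 * e2)
    (hφ : w1 ^ p = w2 ^ p + 4 * C0 * e2 * (q1 * q2 * f)) (hf : f = D * F)
    (ho1 : Odd w1) (ho2 : Odd w2) (hcop : Nat.Coprime w1 w2)
    (hbig : ∀ s, s.Prime → s ∣ w1 * w2 → Y < s) (hYY : w1 * w2 < Y ^ Y)
    (hb1 : p * (4 * C0 * e2) * (C0 * e2 * q1) < w1 * (q2 * D))
    (hb2 : p * (4 * C0 * e2) * (q2 * D) * Y < w1 * (C0 * e2 * q1)) :
    ∃ (c l : ℕ) (u1 u2 : ℤ), 1 ≤ c ∧ c ≤ Y ∧ 0 < l ∧ 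
      (((c * F : ℕ) : ℤ) * u1 ^ 2 + l = w1 ^ p) ∧ (((c * F : ℕ) : ℤ) * u2 ^ 2 + l = w2 ^ p) ∧
      IsCoprime (w1 : ℤ) (2 * ((c * F : ℕ) : ℤ) * u1) ∧ IsCoprime (w2 : ℤ) (2 * ((c * F : ℕ) : ℤ) * u2) := by
  have hD0 : 0 < D := Nat.pos_of_ne_zero (by rintro rfl; simp at hf; omega)
  have hF0 : 0 < F := Nat.pos_of_ne_zero (by rintro rfl; simp at hf; omega)
  -- primes of w1 w2 do not divide q1 q2 f
  have hnd : ∀ s, s.Prime → s ∣ w1 * w2 → ¬ s ∣ q1 * q2 * f := by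
    intro s hs h1 h2
    have h3 : s ∣ 4 * C0 * e2 * (q1 * q2 * f) := h2.mul_left _
    have : s ∣ w1 ∧ s ∣ w2 := by
      rcases (Nat.Prime.dvd_mul hs).1 h1 with h | h
      · refine ⟨h, ?_⟩
        have h4 : s ∣ w2 ^ p + 4 * C0 * e2 * (q1 * q2 * f) := hφ ▸ dvd_pow h hp
        exact hs.dvd_of_dvd_pow ((Nat.dvd_add_left h3).1 h4)
      · refine ⟨?_, h⟩
        have h4 : s ∣ w1 ^ p := hφ ▸ dvd_add (dvd_pow h hp) h3
        exact hs.dvd_of_dvd_pow h4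
    exact absurd (Nat.dvd_gcd this.1 this.2) (by rw [hcop]; exact hs.not_dvd_one)
  obtain ⟨c, hc1, hcY, hcw1, hcw2⟩ := choose_c Y w1 w2 (C0 * e2 * q1) (q2 * D) (by omega) (by omega) hY hcop hbig hYY (by
    intro s hs h1 h2
    apply hnd s hs h1
    rw [hf]
    exact h2.trans ⟨q1 * F, by ring⟩)
  obtain ⟨C1, hC1⟩ := hC c hc1 hcY
  set a := C1 * e2 * q1 with ha
  set β := q2 * D with hβ
  have hca : c * a = C0 * e2 * q1 := by rw [ha, hC1]; ring
  have hC10 : 0 < C1 := Nat.pos_of_ne_zero (by rintro rfl; simp at hC1; omega)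
  have ha0 : 0 < a := by positivity
  have hβ0 : 0 < β := by positivity
  set e := 4 * C0 * e2 with he
  have he0 : 0 < e := by positivity
  have hkey : (c * F) * (4 * (a * β)) = e * (q1 * q2 * f) := by
    have : (c * F) * (4 * (a * β)) = (c * a) * (4 * (β * F)) := by ring
    rw [this, hca, hβ, he, hf]; ring
  have hB1 : p * e * a < w1 * β := by
    refine lt_of_le_of_lt (Nat.mul_le_mul_left _ ?_) hb1
    rw [← hca]; exact Nat.le_mul_of_pos_left _ (by omega)
  have hB2 : p * e * β < w1 * a := by
    rw [← hca] at hb2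
    have : p * e * β * Y < w1 * a * Y := lt_of_lt_of_le hb2 (by
      calc w1 * (c * a) = w1 * a * c := by ring
        _ ≤ w1 * a * Y := Nat.mul_le_mul_left _ hcY)
    exact lt_of_mul_lt_mul_right this (Nat.zero_le _)
  obtain ⟨hle, -⟩ := (pow_diff_le w1 w2 e p (q1 * q2 * f) he0 hw hφ).resolve_right hp
  have hwp : w1 ^ p = w1 ^ (p - 1) * w1 := by
    rw [← pow_succ]; congr 1; omega
  have hw1p : 0 < w1 ^ (p - 1) := by have : 0 < w1 := by omega
                                     positivity
  have hlt : (c * F) * (a + β) ^ 2 < w1 ^ p := by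
    have gen : ∀ x y : ℕ, 0 < x → x ≤ y → (c * F) * (4 * (x * y)) = e * (q1 * q2 * f) → p * e * y < w1 * x →
        (c * F) * (x + y) ^ 2 < w1 ^ p := by
      intro x y hx hxy h1 h2
      have h3 : (c * F) * (x + y) ^ 2 ≤ (c * F) * (4 * y ^ 2) := by
        apply Nat.mul_le_mul_left
        calc (x + y) ^ 2 ≤ (2 * y) ^ 2 := Nat.pow_le_pow_left (by omega) 2
          _ = 4 * y ^ 2 := by ring
      refine lt_of_le_of_lt h3 ?_
      have h4 : (c * F) * (4 * y ^ 2) * x < w1 ^ p * x := by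
        calc (c * F) * (4 * y ^ 2) * x = (c * F) * (4 * (x * y)) * y := by ring
          _ = e * (q1 * q2 * f) * y := by rw [h1]
          _ ≤ e * (p * w1 ^ (p - 1)) * y := Nat.mul_le_mul_right _ (Nat.mul_le_mul_left _ hle)
          _ = w1 ^ (p - 1) * (p * e * y) := by ring
          _ < w1 ^ (p - 1) * (w1 * x) := Nat.mul_lt_mul_of_pos_left h2 hw1p
          _ = w1 ^ p * x := by rw [hwp]; ring
      exact lt_of_mul_lt_mul_right h4 (Nat.zero_le _)
    rcases le_total a β with h | h
    · exact gen a β ha0 h hkey hB2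
    · rw [add_comm]
      exact gen β a hβ0 h (by rw [mul_comm β a]; exact hkey) hB1
  obtain ⟨l, hl⟩ := Nat.exists_eq_add_of_lt hlt
  have hkeyZ : ((c : ℤ) * F) * (4 * (a * β)) = e * (q1 * q2 * f) := by exact_mod_cast hkey
  have hφZ : (w1 : ℤ) ^ p = w2 ^ p + e * (q1 * q2 * f) := by exact_mod_cast hφ
  have hlZ : (w1 : ℤ) ^ p = (c * F) * (a + β) ^ 2 + l + 1 := by exact_mod_cast hl
  have hcaZ : (c : ℤ) * a = ((C0 * e2 * q1 : ℕ) : ℤ) := by exact_mod_cast hca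
  have hcopk : ∀ s : ℕ, s.Prime → s ∣ w1 * w2 → Odd s → ¬ (s : ℤ) ∣ 2 * ((c * F : ℕ) : ℤ) := by
    intro s hs h1 hso h2
    have h3 : s ∣ 2 * (c * F) := by exact_mod_cast h2
    rcases (Nat.Prime.dvd_mul hs).1 h3 with h | h
    · have := (Nat.prime_dvd_prime_iff_eq hs Nat.prime_two).1 h
      subst this; exact absurd hso (by decide)
    · rcases (Nat.Prime.dvd_mul hs).1 h with h | h
      · have := Nat.le_of_dvd (by omega) h
        have := hbig s hs h1
        omega
      · apply hnd s hs h1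
        rw [hf]; exact h.trans ⟨q1 * q2 * D, by ring⟩
  refine ⟨c, l + 1, (a : ℤ) + β, (a : ℤ) - β, hc1, hcY, Nat.succ_pos _, ?_, ?_, ?_, ?_⟩
  · push_cast; rw [hlZ]; ring
  · push_cast
    linear_combination (-1 : ℤ) * hlZ + hφZ - hkeyZ
  · apply isCoprime_of_primes
    intro s hs h1 h2
    have hps : Prime (s : ℤ) := Nat.prime_iff_prime_int.1 hs
    rcases hps.dvd_or_dvd h2 with h | h
    · exact hcopk s hs (h1.mul_right _) (ho1.of_dvd_nat h1) h
    · apply hcw1 s hs h1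
      rw [← hcaZ]
      exact h.trans ⟨c, by ring⟩
  · apply isCoprime_of_primes
    intro s hs h1 h2
    have hps : Prime (s : ℤ) := Nat.prime_iff_prime_int.1 hs
    rcases hps.dvd_or_dvd h2 with h | h
    · exact hcopk s hs (h1.mul_left _) (ho2.of_dvd_nat h1) h
    · apply hcw2 s hs h1
      rw [← hcaZ]
      exact h.trans ⟨c, by ring⟩

end

section

theorem good_d (p Y C0 e2 q1 q2 f D F w1 w2 R W : ℕ) (hp : p.Prime) (hp5 : 5 ≤ p) (hY : 1 ≤ Y)
    (hR : (p = 5 ∧ R = 3) ∨ (7 ≤ p ∧ R = p - 4))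
    (hC : ∀ c, 1 ≤ c → c ≤ Y → c ∣ C0) (hC0 : 0 < C0) (he2 : 0 < e2) (hq1 : 0 < q1) (hq2 : 0 < q2) (hf0 : 0 < f)
    (hw2 : 1 < w2) (hw : w1 = w2 + 4 * C0 * e2)
    (hφ : w1 ^ p = w2 ^ p + 4 * C0 * e2 * (q1 * q2 * f)) (hf : f = D * F)
    (hodd : ∀ s, s.Prime → s ∣ f → Odd (F.factorization s))
    (ho1 : Odd w1) (ho2 : Odd w2) (hcop : Nat.Coprime w1 w2)
    (hbig : ∀ s, s.Prime → s ∣ w1 * w2 → Y < s) (hYY : w1 * w2 < Y ^ Y)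
    (hb1 : p * (4 * C0 * e2) * (C0 * e2 * q1) < w1 * (q2 * D))
    (hb2 : p * (4 * C0 * e2) * (q2 * D) * Y < w1 * (C0 * e2 * q1))
    (hW : w1 ≤ W) (hrad : Y * (4 * W ^ R) < ∏ s ∈ f.primeFactors, s) :
    ∃ d n : ℕ, 0 < d ∧ Squarefree d ∧ n ∣ d ∧ n ∣ f ∧ (∏ s ∈ f.primeFactors, s) ≤ Y * n ∧
      d ≤ Y * f * w1 ^ p ∧ ∀ (K : Type) [Field K] [NumberField K] (α : K),
              α ^ 2 = -(d : K) → Algebra.adjoin ℚ {α} = ⊤ →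
                |NumberField.discr K| ≤ 4 * d ∧
                ∃ H : Subgroup (ClassGroup (NumberField.RingOfIntegers K)),
                  Nonempty (H ≃* Multiplicative (ZMod p × ZMod p)) := by
  obtain ⟨c, l, u1, u2, hc1, hcY, hl0, hk1, hk2, hco1, hco2⟩ := construct p Y C0 e2 q1 q2 f D F w1 w2 hp.ne_zero hY
    hC hC0 he2 hq1 hq2 hf0 hw2 hw hφ hf ho1 ho2 hcop hbig hYY hb1 hb2
  have hD0 : 0 < D := Nat.pos_of_ne_zero (by rintro rfl; simp at hf; omega)
  have hF0 : 0 < F := Nat.pos_of_ne_zero (by rintro rfl; simp at hf; omega)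
  have hk0 : 0 < c * F := by positivity
  obtain ⟨k', b0, hk'⟩ := Nat.sq_mul_squarefree (c * F)
  obtain ⟨l', c0, hl'⟩ := Nat.sq_mul_squarefree l
  obtain ⟨hk', hk's⟩ := hk'
  obtain ⟨hl', hl's⟩ := hl'
  have hckl : Nat.Coprime (c * F) l := by
    apply Nat.coprime_of_dvd
    intro s hs h1 h2
    have hps : Prime (s : ℤ) := Nat.prime_iff_prime_int.1 hs
    have h3 : (s : ℤ) ∣ w1 ^ p := by
      rw [← hk1]
      exact dvd_add ((Int.natCast_dvd_natCast.2 h1).mul_right _) (Int.natCast_dvd_natCast.2 h2)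
    have h4 := hps.dvd_of_dvd_pow h3
    have h5 : (s : ℤ) ∣ 2 * ((c * F : ℕ) : ℤ) * u1 := ((Int.natCast_dvd_natCast.2 h1).mul_left 2).mul_right _
    exact hps.not_unit (hco1.isUnit_of_dvd' h4 h5)
  have hk'd : k' ∣ c * F := ⟨b0 ^ 2, by rw [← hk']; ring⟩
  have hl'd : l' ∣ l := ⟨c0 ^ 2, by rw [← hl']; ring⟩
  have hckl' : Nat.Coprime k' l' := (hckl.coprime_dvd_left hk'd).coprime_dvd_right hl'd
  have hk'0 : 0 < k' := Nat.pos_of_ne_zero (by rintro rfl; simp at hk's)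
  have hl'0 : 0 < l' := Nat.pos_of_ne_zero (by rintro rfl; simp at hl's)
  have hb00 : b0 ≠ 0 := by rintro rfl; simp at hk'; omega
  set n := ∏ s ∈ f.primeFactors \ c.primeFactors, s with hn
  have hnk : n ∣ k' := by
    apply Finset.prod_primes_dvd
    · intro s hs
      rw [Finset.mem_sdiff] at hs
      exact (Nat.prime_of_mem_primeFactors hs.1).prime
    · intro s hs
      rw [Finset.mem_sdiff] at hs
      have hsp := Nat.prime_of_mem_primeFactors hs.1
      have hsf := Nat.dvd_of_mem_primeFactors hs.1
      have hsc : ¬ s ∣ c := fun h => hs.2 (Nat.mem_primeFactors.2 ⟨hsp, h, by omega⟩)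
      have h1 := hodd s hsp hsf
      by_contra hcon
      have h2 : (c * F).factorization s = F.factorization s := by
        rw [Nat.factorization_mul (by omega) (by omega), Finsupp.add_apply, Nat.factorization_eq_zero_of_not_dvd hsc, zero_add]
      rw [← h2, ← hk', Nat.factorization_mul (by positivity) (by omega), Finsupp.add_apply,
        Nat.factorization_eq_zero_of_not_dvd hcon, Nat.factorization_pow] at h1
      simp at h1
      exact (Nat.not_odd_iff_even.2 (even_two_mul _)) h1
  have hrn : (∏ s ∈ f.primeFactors, s) ≤ Y * n := by
    have h1 : (∏ s ∈ f.primeFactors ∩ c.primeFactors, s) * n = ∏ s ∈ f.primeFactors, s := Finset.prod_inter_mul_prod_diff _ _ _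
    rw [← h1]
    apply Nat.mul_le_mul_right
    have h2 : (∏ s ∈ f.primeFactors ∩ c.primeFactors, s) ∣ c :=
      (Finset.prod_dvd_prod_of_subset _ _ _ Finset.inter_subset_right).trans (Nat.prod_primeFactors_dvd c)
    exact (Nat.le_of_dvd (by omega) h2).trans hcY
  have hnM : 4 * W ^ R < n := lt_of_mul_lt_mul_left (hrad.trans_le hrn) (Nat.zero_le _)
  have hkM : 4 * W ^ R < k' := hnM.trans_le (Nat.le_of_dvd hk'0 hnk)
  have hdpos : 4 < k' * l' := by
    have h1 : 1 ≤ W ^ R := Nat.one_le_pow _ _ (by omega)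
    have h2 : k' ≤ k' * l' := Nat.le_mul_of_pos_right _ hl'0
    omega
  have hsq : Squarefree (k' * l') := (Nat.squarefree_mul hckl').2 ⟨hk's, hl's⟩
  refine ⟨k' * l', n, by omega, hsq, hnk.mul_right _, ?_, hrn, ?_, ?_⟩
  · exact (Finset.prod_dvd_prod_of_subset _ _ _ Finset.sdiff_subset).trans (Nat.prod_primeFactors_dvd f)
  · have h1 : l ≤ w1 ^ p := by
      have : (l : ℤ) ≤ w1 ^ p := by
        rw [← hk1]
        have : (0 : ℤ) ≤ ((c * F : ℕ) : ℤ) * u1 ^ 2 := by positivity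
        linarith
      exact_mod_cast this
    calc k' * l' ≤ (c * F) * l := Nat.mul_le_mul (Nat.le_of_dvd hk0 hk'd) (Nat.le_of_dvd hl0 hl'd)
      _ ≤ (Y * f) * w1 ^ p := by
        refine Nat.mul_le_mul (Nat.mul_le_mul hcY ?_) h1
        rw [hf]; exact Nat.le_mul_of_pos_left _ hD0
  · intro K _ _ α hα htop
    refine ⟨(qf_discr α (by omega) hsq hα htop).1, ?_⟩
    refine class_group_rank (k := c * F) (l := l) (g := b0 * c0) (k' := k') (l' := l') (b0 := b0) (W := W) α hdpos hsq hα htop hp hp5 hR hk0 ?_ ?_ rfl hk1 hk2 hco1 hco2 hcop (by omega) hw2 hW (by omega) hkM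
    · rw [← hk', ← hl']; ring
    · rw [← hk']; ring

end

section

theorem local_bound (A : ℕ) (hA : 1 ≤ A) (η : ℝ) (hη : 0 < η) : ∃ C1 : ℝ, 1 ≤ C1 ∧ ∃ S0 : ℕ,
    (∀ s v : ℕ, 2 ≤ s → (A * (v + 1) : ℝ) ≤ C1 * ((s : ℝ) ^ v) ^ η) ∧
    (∀ s v : ℕ, S0 ≤ s → 1 ≤ v → (A * (v + 1) : ℝ) ≤ ((s : ℝ) ^ v) ^ η) := by
  have hA1 : (1 : ℝ) ≤ A := by exact_mod_cast hA
  have h2 : 0 < (2 : ℝ) ^ η - 1 := by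
    have := Real.one_lt_rpow (one_lt_two : (1 : ℝ) < 2) hη
    linarith
  set b := (2 : ℝ) ^ η - 1 with hb
  have hcomm : ∀ s v : ℕ, ((s : ℝ) ^ v) ^ η = ((s : ℝ) ^ η) ^ v := by
    intro s v
    rw [← Real.rpow_natCast, ← Real.rpow_natCast, ← Real.rpow_mul (Nat.cast_nonneg _), ← Real.rpow_mul (Nat.cast_nonneg _), mul_comm]
  refine ⟨A * (1 + 1 / b), ?_, ⌈(2 * A : ℝ) ^ (1 / η)⌉₊, ?_, ?_⟩
  · have : 0 < 1 / b := by positivity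
    nlinarith
  · intro s v hs
    rw [hcomm]
    have h3 : 1 + b ≤ (s : ℝ) ^ η := by
      rw [hb]
      have : (2 : ℝ) ^ η ≤ (s : ℝ) ^ η := Real.rpow_le_rpow (by norm_num) (by exact_mod_cast hs) hη.le
      linarith
    have h4 : 1 + v * b ≤ ((s : ℝ) ^ η) ^ v :=
      (one_add_mul_le_pow (by linarith) v).trans (pow_le_pow_left₀ (by linarith) h3 v)
    have h5 : (v : ℝ) + 1 ≤ (1 + 1 / b) * (1 + v * b) := by
      have : (1 + 1 / b) * (1 + v * b) = 1 + v * b + 1 / b + v := by field_simp; ring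
      rw [this]
      have : 0 ≤ v * b + 1 / b := by positivity
      linarith
    calc (A * (v + 1) : ℝ) ≤ A * ((1 + 1 / b) * (1 + v * b)) := by gcongr
      _ = A * (1 + 1 / b) * (1 + v * b) := by ring
      _ ≤ _ := by gcongr
  · intro s v hs hv
    rw [hcomm]
    have h3 : (2 * A : ℝ) ≤ (s : ℝ) ^ η := by
      have h4 : (2 * A : ℝ) ^ (1 / η) ≤ s := Nat.ceil_le.1 hs
      have h5 := Real.rpow_le_rpow (by positivity) h4 hη.le
      rwa [← Real.rpow_mul (by positivity), one_div_mul_cancel hη.ne', Real.rpow_one] at h5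
    have h4 : (2 * A : ℝ) ^ v ≤ ((s : ℝ) ^ η) ^ v := pow_le_pow_left₀ (by positivity) h3 v
    refine le_trans ?_ h4
    rw [mul_pow]
    have h5 : (v : ℝ) + 1 ≤ 2 ^ v := by
      exact_mod_cast (Nat.lt_two_pow_self (n := v))
    have h6 : (A : ℝ) ≤ A ^ v := le_self_pow₀ hA1 (by omega)
    rw [mul_comm]
    gcongr

theorem prod_bound (A : ℕ) (hA : 1 ≤ A) (η : ℝ) (hη : 0 < η) : ∃ C : ℝ, 1 ≤ C ∧ ∀ n : ℕ, n ≠ 0 →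
    ((∏ s ∈ n.primeFactors, A * (n.factorization s + 1) : ℕ) : ℝ) ≤ C * (n : ℝ) ^ η := by
  obtain ⟨C1, hC1, S0, h1, h2⟩ := local_bound A hA η hη
  refine ⟨C1 ^ S0, one_le_pow₀ hC1, ?_⟩
  intro n hn
  have hn2 : (n : ℝ) ^ η = ∏ s ∈ n.primeFactors, ((s : ℝ) ^ n.factorization s) ^ η := by
    rw [Real.finsetProd_rpow _ _ (fun i _ => by positivity)]
    congr 1
    conv_lhs => rw [← Nat.prod_factorization_pow_eq_self hn]
    rw [Finsupp.prod]; push_cast; rfl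
  have h3 : ((∏ s ∈ n.primeFactors, A * (n.factorization s + 1) : ℕ) : ℝ) ≤
      ∏ s ∈ n.primeFactors, ((if s < S0 then C1 else 1) * ((s : ℝ) ^ n.factorization s) ^ η) := by
    push_cast
    apply Finset.prod_le_prod
    · intro s _; positivity
    · intro s hs
      have hsp := Nat.prime_of_mem_primeFactors hs
      split_ifs with h
      · exact h1 s _ hsp.two_le
      · rw [one_mul]
        apply h2 s _ (by omega)
        have : n.factorization s ≠ 0 := by
          rw [← Finsupp.mem_support_iff]; exact hs
        omega
  refine h3.trans ?_
  rw [Finset.prod_mul_distrib, ← hn2]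
  gcongr
  rw [Finset.prod_ite]
  simp only [Finset.prod_const, one_pow, mul_one]
  apply pow_le_pow_right₀ hC1
  calc _ ≤ (Finset.range S0).card := by
        apply Finset.card_le_card
        intro s hs
        rw [Finset.mem_filter] at hs
        exact Finset.mem_range.2 hs.2
    _ = S0 := Finset.card_range _

theorem tau_bound (η : ℝ) (hη : 0 < η) : ∃ C : ℝ, 1 ≤ C ∧ ∀ n : ℕ, n ≠ 0 →
    (n.divisors.card : ℝ) ≤ C * (n : ℝ) ^ η := by
  obtain ⟨C, hC, h⟩ := prod_bound 1 le_rfl η hη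
  refine ⟨C, hC, fun n hn => ?_⟩
  have := h n hn
  rw [Nat.card_divisors hn]
  simpa using this

/-- number of p-th roots of unity mod n -/
theorem roots_bound (p : ℕ) (hp : p.Prime) (hp5 : 5 ≤ p) (η : ℝ) (hη : 0 < η) : ∃ C : ℝ, 1 ≤ C ∧ ∀ n : ℕ, Odd n →
    (Nat.card {x : (ZMod n)ˣ // x ^ p = 1} : ℝ) ≤ C * (n : ℝ) ^ η := by
  obtain ⟨C, hC, h⟩ := prod_bound p (by omega) η hη
  refine ⟨C, hC, fun n hn => ?_⟩
  have hn0 : n ≠ 0 := by rintro rfl; exact absurd hn (by decide)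
  refine le_trans ?_ (h n hn0)
  norm_cast
  clear h hC C
  have key : Nat.card {x : (ZMod n)ˣ // x ^ p = 1} ≤ ∏ s ∈ n.primeFactors, p := by
    induction n using Nat.recOnPosPrimePosCoprime with
    | zero => exact absurd rfl hn0
    | one =>
      rw [Nat.card_eq_fintype_card]
      simp
      exact Fintype.card_le_one_iff_subsingleton.2 (by infer_instance)
    | prime_pow s k hs hk =>
      rw [Nat.primeFactors_prime_pow hk.ne' hs, Finset.prod_singleton]
      have hs2 : s ≠ 2 := by
        rintro rfl
        exact absurd hn (Nat.not_odd_iff_even.2 ((even_two).pow_of_ne_zero hk.ne'))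
      have : IsCyclic (ZMod (s ^ k))ˣ := ZMod.isCyclic_units_of_prime_pow s hs hs2 k
      have : NeZero (s ^ k) := ⟨hn0⟩
      classical
      rw [Nat.card_eq_fintype_card, Fintype.card_subtype]
      exact IsCyclic.card_pow_eq_one_le hp.pos
    | coprime a b ha hb hab iha ihb =>
      rw [hab.primeFactors_mul, Finset.prod_union hab.disjoint_primeFactors]
      have h1 := iha (Nat.odd_mul.1 hn).1 (by omega)
      have h2 := ihb (Nat.odd_mul.1 hn).2 (by omega)
      refine le_trans ?_ (Nat.mul_le_mul h1 h2)
      rw [← Nat.card_prod]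
      have : NeZero a := ⟨by omega⟩
      have : NeZero b := ⟨by omega⟩
      let e := (Units.mapEquiv (ZMod.chineseRemainder hab).toMulEquiv).trans MulEquiv.prodUnits
      apply Nat.card_le_card_of_injective (fun x : {x : (ZMod (a * b))ˣ // x ^ p = 1} =>
        ((⟨(e x.1).1, by rw [← Prod.pow_fst, ← map_pow, x.2, map_one]; rfl⟩, ⟨(e x.1).2, by rw [← Prod.pow_snd, ← map_pow, x.2, map_one]; rfl⟩) : 
          {x : (ZMod a)ˣ // x ^ p = 1} × {x : (ZMod b)ˣ // x ^ p = 1}))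
      intro x y hxy
      simp only [Prod.mk.injEq, Subtype.mk.injEq] at hxy
      exact Subtype.ext (e.injective (Prod.ext hxy.1 hxy.2))
  refine key.trans ?_
  apply Finset.prod_le_prod'
  intro s _
  exact Nat.le_mul_of_pos_right _ (Nat.succ_pos _)

end

section

theorem nat_floor_close (a b : ℝ) (ha : 0 ≤ a) (hb : 0 ≤ b) (h : ⌊a⌋₊ = ⌊b⌋₊) : |a - b| < 1 := by
  have h1 := Nat.floor_le ha
  have h2 := Nat.floor_le hb
  have h3 := Nat.lt_floor_add_one a
  have h4 := Nat.lt_floor_add_one b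
  rw [h] at h1 h3
  rw [abs_lt]; constructor <;> linarith

theorem lattice_fiber (S : Finset (ℕ × ℕ)) (n W : ℕ) (lam : ℝ) (hn : 0 < n)
    (hcop : ∀ w ∈ S, Nat.Coprime w.1 w.2) (hpos : ∀ w ∈ S, 0 < w.1) (hle : ∀ w ∈ S, w.2 ≤ w.1) (hW : ∀ w ∈ S, w.1 ≤ W)
    (hlam : ∀ w ∈ S, ((w.1 : ℝ) - w.2) ≤ lam * w.1)
    (hdet : ∀ w ∈ S, ∀ v ∈ S, (n : ℤ) ∣ (w.1 : ℤ) * v.2 - w.2 * v.1) :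
    S.card ≤ ⌊lam * W ^ 2 / n⌋₊ + 1 := by
  rw [← Finset.card_range (⌊lam * W ^ 2 / n⌋₊ + 1)]
  have hn' : (0 : ℝ) < n := by exact_mod_cast hn
  apply Finset.card_le_card_of_injOn (fun w => ⌊((w.1 : ℝ) - w.2) / w.1 * W ^ 2 / n⌋₊)
  · intro w hw
    rw [Finset.mem_coe] at hw
    simp only [Finset.coe_range, Set.mem_Iio, Order.lt_add_one_iff]
    apply Nat.floor_le_floor
    have h1 := hlam w hw
    have h2 : (0 : ℝ) < w.1 := by exact_mod_cast hpos w hw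
    have h3 : ((w.1 : ℝ) - w.2) / w.1 ≤ lam := by rwa [div_le_iff₀ h2]
    gcongr
  · intro w hw v hv hwv
    rw [Finset.mem_coe] at hw hv
    by_contra hne
    have hw0 : (0 : ℝ) < w.1 := by exact_mod_cast hpos w hw
    have hv0 : (0 : ℝ) < v.1 := by exact_mod_cast hpos v hv
    have hw1 : (w.2 : ℝ) ≤ w.1 := by exact_mod_cast hle w hw
    have hv1 : (v.2 : ℝ) ≤ v.1 := by exact_mod_cast hle v hv
    have hwW : (w.1 : ℝ) ≤ W := by exact_mod_cast hW w hw
    have hvW : (v.1 : ℝ) ≤ W := by exact_mod_cast hW v hv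
    have hdne : (w.1 : ℤ) * v.2 - w.2 * v.1 ≠ 0 := by
      intro h0
      have h1 : w.1 * v.2 = w.2 * v.1 := by
        have : (w.1 : ℤ) * v.2 = w.2 * v.1 := by linarith
        exact_mod_cast this
      have h2 : w.1 ∣ v.1 := (hcop w hw).dvd_of_dvd_mul_left ⟨v.2, h1.symm⟩
      have h3 : v.1 ∣ w.1 := (hcop v hv).dvd_of_dvd_mul_right ⟨w.2, by rw [h1, mul_comm]⟩
      have h4 := Nat.dvd_antisymm h2 h3
      apply hne
      apply Prod.ext h4
      rw [h4, mul_comm w.2] at h1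
      exact (Nat.eq_of_mul_eq_mul_left (hpos v hv) h1).symm
    have habs : (n : ℝ) ≤ |(w.1 : ℝ) * v.2 - w.2 * v.1| := by
      have := Int.le_of_dvd (abs_pos.2 hdne) ((dvd_abs _ _).2 (hdet w hw v hv))
      exact_mod_cast this
    have hlt := nat_floor_close (a := ((w.1 : ℝ) - w.2) / w.1 * W ^ 2 / n) (b := ((v.1 : ℝ) - v.2) / v.1 * W ^ 2 / n)
      (by apply div_nonneg _ hn'.le
          apply mul_nonneg _ (by positivity)
          exact div_nonneg (by linarith) hw0.le)
      (by apply div_nonneg _ hn'.le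
          apply mul_nonneg _ (by positivity)
          exact div_nonneg (by linarith) hv0.le) hwv
    have heq : ((w.1 : ℝ) - w.2) / w.1 * W ^ 2 / n - ((v.1 : ℝ) - v.2) / v.1 * W ^ 2 / n =
        ((w.1 : ℝ) * v.2 - w.2 * v.1) * (W ^ 2 / (w.1 * v.1 * n)) := by
      field_simp; ring
    rw [heq, abs_mul, abs_of_nonneg (a := (W : ℝ) ^ 2 / (w.1 * v.1 * n)) (by positivity), ← mul_div_assoc, div_lt_one (by positivity)] at hlt
    have h5 : (w.1 : ℝ) * v.1 ≤ W ^ 2 := by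
      rw [sq]; gcongr
    have h6 : (w.1 : ℝ) * v.1 * n ≤ |(w.1 : ℝ) * v.2 - w.2 * v.1| * W ^ 2 := by
      rw [mul_comm (|_|)]
      gcongr
    linarith

theorem lattice (S : Finset (ℕ × ℕ)) (p n W : ℕ) (hp : p ≠ 0) (lam : ℝ) (hn : 0 < n) (hl0 : 0 ≤ lam)
    (hcop : ∀ w ∈ S, Nat.Coprime w.1 w.2) (hpos : ∀ w ∈ S, 0 < w.1) (hle : ∀ w ∈ S, w.2 ≤ w.1) (hW : ∀ w ∈ S, w.1 ≤ W)
    (hlam : ∀ w ∈ S, ((w.1 : ℝ) - w.2) ≤ lam * w.1)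
    (hdvd : ∀ w ∈ S, (n : ℤ) ∣ (w.1 : ℤ) ^ p - w.2 ^ p) :
    (S.card : ℝ) ≤ Nat.card {x : (ZMod n)ˣ // x ^ p = 1} * (lam * W ^ 2 / n + 1) := by
  classical
  have : NeZero n := ⟨hn.ne'⟩
  have hcn1 : ∀ w ∈ S, Nat.Coprime w.1 n ∧ Nat.Coprime w.2 n := by
    intro w hw
    have hd : ∀ s : ℕ, s.Prime → s ∣ n → (s ∣ w.1 ↔ s ∣ w.2) := by
      intro s hs hsn
      have hps : Prime (s : ℤ) := Nat.prime_iff_prime_int.1 hs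
      have h1 : (s : ℤ) ∣ (w.1 : ℤ) ^ p - w.2 ^ p := (Int.natCast_dvd_natCast.2 hsn).trans (hdvd w hw)
      constructor
      · intro h
        have h2 : (s : ℤ) ∣ (w.1 : ℤ) ^ p := dvd_pow (Int.natCast_dvd_natCast.2 h) hp
        have h3 := dvd_sub h2 h1
        rw [sub_sub_cancel] at h3
        exact Int.natCast_dvd_natCast.1 (hps.dvd_of_dvd_pow h3)
      · intro h
        have h2 : (s : ℤ) ∣ (w.2 : ℤ) ^ p := dvd_pow (Int.natCast_dvd_natCast.2 h) hp
        have h3 := dvd_add h1 h2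
        rw [sub_add_cancel] at h3
        exact Int.natCast_dvd_natCast.1 (hps.dvd_of_dvd_pow h3)
    constructor
    · apply Nat.coprime_of_dvd
      intro s hs h1 h2
      exact absurd (Nat.dvd_gcd h1 ((hd s hs h2).1 h1)) (by rw [hcop w hw]; exact hs.not_dvd_one)
    · apply Nat.coprime_of_dvd
      intro s hs h1 h2
      exact absurd (Nat.dvd_gcd ((hd s hs h2).2 h1) h1) (by rw [hcop w hw]; exact hs.not_dvd_one)
  let g : ℕ × ℕ → (ZMod n)ˣ := fun w => if h : Nat.Coprime w.1 n ∧ Nat.Coprime w.2 n then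
    ZMod.unitOfCoprime w.2 h.2 * (ZMod.unitOfCoprime w.1 h.1)⁻¹ else 1
  have hg : ∀ w ∈ S, ((w.2 : ℕ) : ZMod n) = g w * ((w.1 : ℕ) : ZMod n) := by
    intro w hw
    have h := hcn1 w hw
    simp only [g, dif_pos h]
    rw [← ZMod.coe_unitOfCoprime w.2 h.2, ← ZMod.coe_unitOfCoprime w.1 h.1, ← Units.val_mul, inv_mul_cancel_right]
  have hcard := Finset.card_le_mul_card_image_of_maps_to (s := S) (t := Finset.univ.filter (fun x : (ZMod n)ˣ => x ^ p = 1)) (f := g)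
    (by
      intro w hw
      rw [Finset.mem_filter]
      refine ⟨Finset.mem_univ _, ?_⟩
      have h1 := hg w hw
      have h2 : ((w.1 : ZMod n)) ^ p = (w.2 : ZMod n) ^ p := by
        have := (ZMod.intCast_zmod_eq_zero_iff_dvd ((w.1 : ℤ) ^ p - w.2 ^ p) n).2 (hdvd w hw)
        push_cast at this
        exact sub_eq_zero.1 this
      rw [h1, mul_pow] at h2
      have hu : IsUnit ((w.1 : ZMod n) ^ p) := by
        rw [← ZMod.coe_unitOfCoprime w.1 (hcn1 w hw).1]
        exact (Units.isUnit _).pow p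
      have h3 : ((g w : ZMod n)) ^ p = 1 := by
        apply hu.mul_right_cancel
        rw [one_mul]; exact h2.symm
      apply Units.ext
      push_cast; exact h3) (⌊lam * W ^ 2 / n⌋₊ + 1) (by
      intro x _
      apply lattice_fiber _ n W lam hn
      · intro w hw; exact hcop w (Finset.mem_filter.1 hw).1
      · intro w hw; exact hpos w (Finset.mem_filter.1 hw).1
      · intro w hw; exact hle w (Finset.mem_filter.1 hw).1
      · intro w hw; exact hW w (Finset.mem_filter.1 hw).1
      · intro w hw; exact hlam w (Finset.mem_filter.1 hw).1
      · intro w hw v hv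
        rw [Finset.mem_filter] at hw hv
        rw [← ZMod.intCast_zmod_eq_zero_iff_dvd]
        push_cast
        rw [hg w hw.1, hg v hv.1, hw.2, hv.2]; ring)
  have h1 : Nat.card {x : (ZMod n)ˣ // x ^ p = 1} = (Finset.univ.filter (fun x : (ZMod n)ˣ => x ^ p = 1)).card := by
    rw [Nat.card_eq_fintype_card, Fintype.card_subtype]
  rw [h1, mul_comm]
  have h2 : (S.card : ℝ) ≤ (⌊lam * W ^ 2 / n⌋₊ + 1 : ℝ) * (Finset.univ.filter (fun x : (ZMod n)ˣ => x ^ p = 1)).card := by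
    exact_mod_cast hcard
  refine h2.trans ?_
  have := Nat.floor_le (a := lam * W ^ 2 / n) (by positivity)
  gcongr

theorem tau_ev (M : ℕ) : ∃ u0 : ℕ, ∀ u ≥ u0, ∀ n : ℕ, n ≠ 0 → n ≤ u ^ M → n.divisors.card ≤ u := by
  obtain ⟨C, hC, h⟩ := tau_bound (1 / (2 * (M + 1))) (by positivity)
  refine ⟨⌈C ^ 2⌉₊ + 1, fun u hu n hn hnM => ?_⟩
  have h1 := h n hn
  have hu1 : C ^ 2 ≤ u := (Nat.le_ceil _).trans (by exact_mod_cast (by omega))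
  have hu0 : (1 : ℝ) ≤ u := by exact_mod_cast (by omega)
  have h2 : (n : ℝ) ≤ (u : ℝ) ^ ((M + 1 : ℕ) : ℝ) := by
    rw [Real.rpow_natCast]
    have : (n : ℝ) ≤ (u : ℝ) ^ M := by exact_mod_cast hnM
    exact this.trans (pow_le_pow_right₀ hu0 (by omega))
  have h3 : (n : ℝ) ^ ((1 : ℝ) / (2 * (M + 1))) ≤ √u := by
    refine (Real.rpow_le_rpow (by positivity) h2 (by positivity)).trans ?_
    rw [← Real.rpow_mul (by positivity), Real.sqrt_eq_rpow]
    apply le_of_eq; congr 1; push_cast; field_simp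
  have h4 : C ≤ √u := Real.le_sqrt_of_sq_le hu1
  have : (n.divisors.card : ℝ) ≤ u := by
    calc _ ≤ C * (n : ℝ) ^ ((1 : ℝ) / (2 * (M + 1))) := h1
      _ ≤ √u * √u := by gcongr
      _ = u := Real.mul_self_sqrt (by positivity)
  exact_mod_cast this

theorem roots_ev (p : ℕ) (hp : p.Prime) (hp5 : 5 ≤ p) (M : ℕ) : ∃ u0 : ℕ, ∀ u ≥ u0, ∀ n : ℕ, Odd n → n ≤ u ^ M → 
    Nat.card {x : (ZMod n)ˣ // x ^ p = 1} ≤ u := by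
  obtain ⟨C, hC, h⟩ := roots_bound p hp hp5 (1 / (2 * (M + 1))) (by positivity)
  refine ⟨⌈C ^ 2⌉₊ + 1, fun u hu n hn hnM => ?_⟩
  have h1 := h n hn
  have hu1 : C ^ 2 ≤ u := (Nat.le_ceil _).trans (by exact_mod_cast (by omega))
  have hu0 : (1 : ℝ) ≤ u := by exact_mod_cast (by omega)
  have h2 : (n : ℝ) ≤ (u : ℝ) ^ ((M + 1 : ℕ) : ℝ) := by
    rw [Real.rpow_natCast]
    have : (n : ℝ) ≤ (u : ℝ) ^ M := by exact_mod_cast hnM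
    exact this.trans (pow_le_pow_right₀ hu0 (by omega))
  have h3 : (n : ℝ) ^ ((1 : ℝ) / (2 * (M + 1))) ≤ √u := by
    refine (Real.rpow_le_rpow (by positivity) h2 (by positivity)).trans ?_
    rw [← Real.rpow_mul (by positivity), Real.sqrt_eq_rpow]
    apply le_of_eq; congr 1; push_cast; field_simp
  have h4 : C ≤ √u := Real.le_sqrt_of_sq_le hu1
  have : (Nat.card {x : (ZMod n)ˣ // x ^ p = 1} : ℝ) ≤ u := by
    calc _ ≤ C * (n : ℝ) ^ ((1 : ℝ) / (2 * (M + 1))) := h1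
      _ ≤ √u * √u := by gcongr
      _ = u := Real.mul_self_sqrt (by positivity)
  exact_mod_cast this

end

section

open ArithmeticFunction vonMangoldt Complex in
theorem res_two_sided (q : ℕ) [NeZero q] : ∃ C : ℝ, 0 ≤ C ∧ ∀ x : ℝ, x ∈ Set.Ioc (1 : ℝ) 2 →
      |∑' n, residueClass (1 : ZMod q) n / (n : ℝ) ^ x - (q.totient : ℝ)⁻¹ / (x - 1)| ≤ C := by
  have ha : IsUnit (1 : ZMod q) := isUnit_one
  have H {x : ℝ} (hx : 1 < x) :
      ∑' n, residueClass (1 : ZMod q) n / (n : ℝ) ^ x =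
        (LFunctionResidueClassAux (1 : ZMod q) x).re + (q.totient : ℝ)⁻¹ / (x - 1) := by
    refine ofReal_injective ?_
    simp only [ofReal_tsum, ofReal_div, ofReal_cpow (Nat.cast_nonneg _), ofReal_natCast,
      ofReal_add, ofReal_inv, ofReal_sub, ofReal_one]
    simp_rw [← LFunctionResidueClassAux_real ha hx,
      eqOn_LFunctionResidueClassAux ha <| Set.mem_ofPred.mpr (ofReal_re x ▸ hx), sub_add_cancel,
      LSeries, LSeries.term]
    refine tsum_congr fun n ↦ ?_
    split_ifs with hn
    · simp only [hn, residueClass_apply_zero, ofReal_zero, zero_div]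
    · rfl
  have : ContinuousOn (fun x : ℝ ↦ (LFunctionResidueClassAux (1 : ZMod q) x).re) (Set.Icc 1 2) :=
    continuous_re.continuousOn.comp (t := Set.univ) (continuousOn_LFunctionResidueClassAux 1)
      (fun ⦃x⦄ a ↦ trivial) |>.comp continuous_ofReal.continuousOn fun x hx ↦ by
        simpa only [Set.mem_ofPred_eq, ofReal_re] using hx.1
  obtain ⟨C, hC⟩ := isCompact_Icc.exists_bound_of_continuousOn this
  refine ⟨C, (norm_nonneg _).trans (hC 1 (by norm_num)), fun x hx => ?_⟩
  rw [H hx.1, add_sub_cancel_right]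
  exact hC x (Set.Ioc_subset_Icc_self hx)

open ArithmeticFunction vonMangoldt in
theorem res_summable (q : ℕ) [NeZero q] (x : ℝ) (hx : 1 < x) :
    Summable fun n : ℕ => residueClass (1 : ZMod q) n / (n : ℝ) ^ x :=
  LSeries.summable_real_of_abscissaOfAbsConv_lt <|
        (abscissaOfAbsConv_residueClass_le_one (1 : ZMod q)).trans_lt <| mod_cast hx

def pi1 (p n : ℕ) : ℕ := ((Finset.range (n + 1)).filter (fun z : ℕ => z.Prime ∧ (z : ZMod p) = 1)).card

theorem window_sum (p : ℕ) (δ : ℝ) (hδ : 0 < δ) (hδ1 : δ < 1) : ∃ G : ℝ, ∀ P : Finset ℕ,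
    (∀ n ∈ P, n.Prime ∧ (n : ZMod p) = 1 ∧ (pi1 p n : ℝ) < (n : ℝ) ^ (1 - δ)) →
    ∑ n ∈ P, Real.log n / n ≤ G := by
  set β : ℝ := (1 - δ / 2) / (1 - δ) with hβ
  have hβ1 : 1 < β := by rw [hβ, one_lt_div (by linarith)]; linarith
  have hsum : Summable fun i : ℕ => (2 / δ) * (1 / (i : ℝ) ^ β) :=
    (Real.summable_one_div_nat_rpow.2 hβ1).mul_left _
  refine ⟨∑' i : ℕ, (2 / δ) * (1 / (i : ℝ) ^ β), fun P hP => ?_⟩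
  have hinj : Set.InjOn (pi1 p) P := by
    have hlt : ∀ a ∈ P, ∀ b ∈ P, a < b → pi1 p a < pi1 p b := by
      intro a ha b hb hab
      apply Finset.card_lt_card
      rw [Finset.ssubset_iff_of_subset]
      · refine ⟨b, ?_, ?_⟩
        · rw [Finset.mem_filter, Finset.mem_range]
          exact ⟨by omega, (hP b hb).1, (hP b hb).2.1⟩
        · rw [Finset.mem_filter, Finset.mem_range]
          intro h; omega
      · intro z hz
        rw [Finset.mem_filter, Finset.mem_range] at hz ⊢
        exact ⟨by omega, hz.2⟩
    intro a ha b hb hab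
    rcases lt_trichotomy a b with h | h | h
    · have := hlt a ha b hb h; omega
    · exact h
    · have := hlt b hb a ha h; omega
  calc ∑ n ∈ P, Real.log n / n ≤ ∑ n ∈ P, (2 / δ) * (1 / (pi1 p n : ℝ) ^ β) := by
        apply Finset.sum_le_sum
        intro n hn
        obtain ⟨h1, h2, h3⟩ := hP n hn
        have hn0 : (0 : ℝ) < n := by exact_mod_cast h1.pos
        have hpos : 0 < pi1 p n := by
          apply Finset.card_pos.2
          exact ⟨n, by rw [Finset.mem_filter, Finset.mem_range]; exact ⟨by omega, h1, h2⟩⟩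
        have hpos' : (0 : ℝ) < pi1 p n := by exact_mod_cast hpos
        have h4 : (pi1 p n : ℝ) ^ β ≤ (n : ℝ) ^ (1 - δ / 2) := by
          calc (pi1 p n : ℝ) ^ β ≤ ((n : ℝ) ^ (1 - δ)) ^ β := Real.rpow_le_rpow hpos'.le h3.le (by linarith)
            _ = _ := by
              rw [← Real.rpow_mul hn0.le]; congr 1
              rw [hβ]; field_simp [show (1 - δ) ≠ 0 by linarith]
        have h5 := Real.log_le_rpow_div hn0.le (show 0 < δ / 2 by linarith)
        have h6 : (n : ℝ) ^ (δ / 2) / (δ / 2) / n = (2 / δ) * (1 / (n : ℝ) ^ (1 - δ / 2)) := by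
          have : (n : ℝ) = (n : ℝ) ^ (δ / 2) * (n : ℝ) ^ (1 - δ / 2) := by
            rw [← Real.rpow_add hn0]; simp
          have h7 : (0 : ℝ) < (n : ℝ) ^ (δ / 2) := Real.rpow_pos_of_pos hn0 _
          have h8 : (0 : ℝ) < (n : ℝ) ^ (1 - δ / 2) := Real.rpow_pos_of_pos hn0 _
          rw [div_eq_iff hn0.ne']
          conv_rhs => rw [this]
          have h9 : ((n : ℝ) ^ (δ / 2) * (n : ℝ) ^ (1 - δ / 2)) ^ (1 - δ / 2) = (n : ℝ) ^ (1 - δ / 2) := by rw [← this]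
          rw [h9]
          field_simp
        calc Real.log n / n ≤ (n : ℝ) ^ (δ / 2) / (δ / 2) / n := by gcongr
          _ = (2 / δ) * (1 / (n : ℝ) ^ (1 - δ / 2)) := h6
          _ ≤ _ := by
            have : (0 : ℝ) < (pi1 p n : ℝ) ^ β := Real.rpow_pos_of_pos hpos' _
            gcongr
    _ = ∑ i ∈ P.image (pi1 p), (2 / δ) * (1 / (i : ℝ) ^ β) := by
        rw [Finset.sum_image hinj]
    _ ≤ _ := hsum.sum_le_tsum _ (fun i _ => by positivity)

open ArithmeticFunction vonMangoldt in
theorem supply1 (p : ℕ) (hp : p.Prime) (δ : ℝ) (hδ : 0 < δ) (hδ1 : δ < 1) : ∃ M0 : ℝ, ∀ M : ℝ, M0 ≤ M →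
    ∃ n : ℕ, Real.exp (M / 30) ≤ n ∧ n ≤ Real.exp (6 * M) ∧ (n : ℝ) ^ (1 - δ) ≤ pi1 p n := by
  have : NeZero p := ⟨hp.ne_zero⟩
  obtain ⟨C, hC0, hC⟩ := res_two_sided p
  obtain ⟨G, hG⟩ := window_sum p δ hδ hδ1
  have hnp := summable_residueClass_non_primes_div (1 : ZMod p)
  set NP := ∑' n : ℕ, (if n.Prime then 0 else residueClass (1 : ZMod p) n) / (n : ℝ) with hNP
  set t : ℝ := (p.totient : ℝ)⁻¹ with ht
  have ht0 : 0 < t := by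
    rw [ht]; have := Nat.totient_pos.2 hp.pos
    positivity
  refine ⟨max 30 ((C + 3 * C + C + NP + G + 1) / (t / 2)), fun M hM => ?_⟩
  have hM30 : 30 ≤ M := (le_max_left _ _).trans hM
  have hMbig : (C + 3 * C + C + NP + G + 1) ≤ M * (t / 2) := by
    rw [← div_le_iff₀ (by positivity)]; exact (le_max_right _ _).trans hM
  by_contra hcon
  push Not at hcon
  have hM0 : 0 < M := by linarith
  let r : ℕ → ℝ := residueClass (1 : ZMod p)
  let P : Finset ℕ := (Finset.range (⌊Real.exp (6 * M)⌋₊ + 1)).filter (fun n : ℕ => n.Prime ∧ (n : ZMod p) = 1 ∧ Real.exp (M / 30) ≤ n)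
  have hPm : ∀ n, n ∈ P ↔ (n : ℝ) ≤ Real.exp (6 * M) ∧ n.Prime ∧ (n : ZMod p) = 1 ∧ Real.exp (M / 30) ≤ n := by
    intro n
    simp only [P, Finset.mem_filter, Finset.mem_range, Nat.lt_succ_iff]
    rw [Nat.le_floor_iff (Real.exp_pos _).le]
  have hPG := hG P (by
    intro n hn
    rw [hPm] at hn
    exact ⟨hn.2.1, hn.2.2.1, hcon n hn.2.2.2 hn.1⟩)
  have hs1 := res_summable p (1 + 30 / M) (by have : 0 < 30 / M := by positivity
                                              linarith)
  have hs2 := res_summable p (1 + 1 / (2 * M)) (by have : 0 < 1 / (2 * M) := by positivity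
                                                   linarith)
  have hs0 := res_summable p (1 + 1 / M) (by have : 0 < 1 / M := by positivity
                                             linarith)
  have hgs : Summable (fun n : ℕ => if n ∈ P then Real.log n / n else 0) :=
    summable_of_ne_finset_zero (s := P) (fun b hb => if_neg hb)
  have hgt : ∑' n : ℕ, (if n ∈ P then Real.log n / n else 0) = ∑ n ∈ P, Real.log n / n := by
    rw [tsum_eq_sum (s := P) (fun b hb => if_neg hb)]
    exact Finset.sum_congr rfl (fun n hn => if_pos hn)
  have hterm : ∀ n : ℕ, r n / (n : ℝ) ^ (1 + 1 / M) ≤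
      Real.exp 1 * (r n / (n : ℝ) ^ (1 + 30 / M)) + Real.exp (-3) * (r n / (n : ℝ) ^ (1 + 1 / (2 * M)))
      + (if n.Prime then 0 else r n) / (n : ℝ) + (if n ∈ P then Real.log n / n else 0) := by
    intro n
    have hr0 : 0 ≤ r n := residueClass_nonneg _ n
    rcases Nat.eq_zero_or_pos n with rfl | hn
    · have hr00 : r 0 = 0 := residueClass_apply_zero _
      rw [hr00]; simp
    have hn0 : (0 : ℝ) < n := by exact_mod_cast hn
    have hn1 : (1 : ℝ) ≤ n := by exact_mod_cast hn
    have e1 : 0 ≤ Real.exp 1 * (r n / (n : ℝ) ^ (1 + 30 / M)) := by positivity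
    have e2 : 0 ≤ Real.exp (-3) * (r n / (n : ℝ) ^ (1 + 1 / (2 * M))) := by positivity
    have e3 : 0 ≤ (if n.Prime then 0 else r n) / (n : ℝ) := by
      apply div_nonneg _ hn0.le
      split_ifs <;> simp [hr0]
    have hlog0 := Real.log_nonneg hn1
    have e4 : 0 ≤ (if n ∈ P then Real.log n / n else 0) := by
      split_ifs
      · positivity
      · exact le_rfl
    have hrw : ∀ x : ℝ, r n / (n : ℝ) ^ x = r n * Real.exp (-(Real.log n * x)) := fun x => by
      rw [Real.rpow_def_of_pos hn0 x, Real.exp_neg, div_eq_mul_inv]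
    by_cases hU : (n : ℝ) < Real.exp (M / 30)
    · have hl : Real.log n < M / 30 := by rwa [Real.log_lt_iff_lt_exp hn0]
      have : r n / (n : ℝ) ^ (1 + 1 / M) ≤ Real.exp 1 * (r n / (n : ℝ) ^ (1 + 30 / M)) := by
        rw [hrw, hrw, mul_left_comm, ← Real.exp_add]
        gcongr
        have : Real.log n * (30 / M) ≤ 1 := by
          rw [← mul_div_assoc, div_le_one hM0]; linarith
        have h2 : 0 ≤ Real.log n * (1 / M) := by positivity
        nlinarith
      linarith
    by_cases hV : Real.exp (6 * M) < n
    · have hl : 6 * M < Real.log n := by rwa [Real.lt_log_iff_exp_lt hn0]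
      have : r n / (n : ℝ) ^ (1 + 1 / M) ≤ Real.exp (-3) * (r n / (n : ℝ) ^ (1 + 1 / (2 * M))) := by
        rw [hrw, hrw, mul_left_comm, ← Real.exp_add]
        gcongr
        have : 3 ≤ Real.log n * (1 / (2 * M)) := by
          rw [mul_one_div, le_div_iff₀ (by positivity)]; linarith
        have h2 : Real.log n * (1 / M) = 2 * (Real.log n * (1 / (2 * M))) := by field_simp
        rw [mul_add, mul_add, h2]; linarith
      linarith
    push Not at hU hV
    have hle : r n / (n : ℝ) ^ (1 + 1 / M) ≤ r n / n := by
      apply div_le_div_of_nonneg_left hr0 hn0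
      conv_lhs => rw [← Real.rpow_one (n : ℝ)]
      apply Real.rpow_le_rpow_of_exponent_le hn1
      have : 0 < 1 / M := by positivity
      linarith
    by_cases hpr : n.Prime
    · by_cases h1 : (n : ZMod p) = 1
      · have hnP : n ∈ P := (hPm n).2 ⟨hV, hpr, h1, hU⟩
        rw [if_pos hnP]
        have : r n ≤ Real.log n := (residueClass_le _ n).trans (vonMangoldt_le_log)
        have : r n / n ≤ Real.log n / n := by gcongr
        linarith
      · have hr00 : r n = 0 := by
          simp only [r, residueClass]
          exact Set.indicator_of_notMem (by simpa using h1) _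
        have : r n / (n : ℝ) ^ (1 + 1 / M) = 0 := by rw [hr00, zero_div]
        linarith
    · rw [if_neg hpr]
      linarith
  have hsumall := Summable.tsum_le_tsum hterm hs0
    ((((hs1.mul_left (Real.exp 1)).add (hs2.mul_left (Real.exp (-3)))).add hnp).add hgs)
  rw [Summable.tsum_add (((hs1.mul_left (Real.exp 1)).add (hs2.mul_left (Real.exp (-3)))).add hnp) hgs,
    Summable.tsum_add ((hs1.mul_left (Real.exp 1)).add (hs2.mul_left (Real.exp (-3)))) hnp,
    Summable.tsum_add (hs1.mul_left (Real.exp 1)) (hs2.mul_left (Real.exp (-3))), tsum_mul_left, tsum_mul_left, hgt] at hsumall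
  have b0 := (abs_le.1 (hC (1 + 1 / M) ⟨by have : 0 < 1 / M := by positivity
                                           linarith, by
    have : 1 / M ≤ 1 := by rw [div_le_one hM0]; linarith
    linarith⟩)).1
  have b1 := (abs_le.1 (hC (1 + 30 / M) ⟨by have : 0 < 30 / M := by positivity
                                            linarith, by
    have : 30 / M ≤ 1 := by rw [div_le_one hM0]; linarith
    linarith⟩)).2
  have b2 := (abs_le.1 (hC (1 + 1 / (2 * M)) ⟨by have : 0 < 1 / (2 * M) := by positivity
                                                 linarith, by
    have : 1 / (2 * M) ≤ 1 := by rw [div_le_one (by positivity)]; linarith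
    linarith⟩)).2
  have x0 : t / (1 + 1 / M - 1) = t * M := by rw [add_sub_cancel_left, div_div_eq_mul_div, div_one]
  have x1 : t / (1 + 30 / M - 1) = t * M / 30 := by rw [add_sub_cancel_left, div_div_eq_mul_div]
  have x2 : t / (1 + 1 / (2 * M) - 1) = t * (2 * M) := by rw [add_sub_cancel_left, div_div_eq_mul_div, div_one]
  rw [x0] at b0
  rw [x1] at b1
  rw [x2] at b2
  have hE1 : Real.exp 1 ≤ 3 := by have := Real.exp_one_lt_d9; linarith
  have hE3 : Real.exp (-3) ≤ 1 / 10 := by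
    rw [Real.exp_neg, inv_eq_one_div]
    have h1 : Real.exp 3 = Real.exp 1 ^ 3 := by rw [← Real.exp_nat_mul]; norm_num
    have h2 := Real.exp_one_gt_d9
    have h3 : (2.7 : ℝ) ^ 3 ≤ Real.exp 1 ^ 3 := by gcongr; linarith
    rw [h1]
    apply one_div_le_one_div_of_le (by norm_num)
    norm_num at h3 ⊢; linarith
  have hF1 : 0 ≤ t * M / 30 + C := by positivity
  have hF2 : 0 ≤ t * (2 * M) + C := by positivity
  have y1 : Real.exp 1 * ∑' n : ℕ, residueClass (1 : ZMod p) n / (n : ℝ) ^ (1 + 30 / M) ≤ 3 * (t * M / 30 + C) :=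
    (mul_le_mul_of_nonneg_left (by linarith) (Real.exp_pos _).le).trans (mul_le_mul_of_nonneg_right hE1 hF1)
  have y2 : Real.exp (-3) * ∑' n : ℕ, residueClass (1 : ZMod p) n / (n : ℝ) ^ (1 + 1 / (2 * M)) ≤ (1 / 10) * (t * (2 * M) + C) :=
    (mul_le_mul_of_nonneg_left (by linarith) (Real.exp_pos _).le).trans (mul_le_mul_of_nonneg_right hE3 hF2)
  have htM : 0 < t * M := by positivity
  have hsumall' : ∑' n : ℕ, residueClass (1 : ZMod p) n / (n : ℝ) ^ (1 + 1 / M) ≤ 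
    3 * (t * M / 30 + C) + (1 / 10) * (t * (2 * M) + C) + NP + G := by
    refine le_trans hsumall ?_
    gcongr
  nlinarith

end

section

theorem prod_tuples (A : Finset ℕ) (h : ℕ) (hA : ∀ z ∈ A, z.Prime) :
    A.card ^ h ≤ h ^ h * ((Fintype.piFinset (fun _ : Fin h => A)).image (fun f => ∏ i, f i)).card := by
  classical
  have h1 := Finset.card_le_mul_card_image (s := Fintype.piFinset (fun _ : Fin h => A)) (f := fun f => ∏ i, f i) (h ^ h) (by
    intro q hq
    rw [Finset.mem_image] at hq
    obtain ⟨g, hg, rfl⟩ := hq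
    rw [Fintype.mem_piFinset] at hg
    have hne : ∀ f : Fin h → ℕ, (∀ i, f i ∈ A) → ∏ i, f i ≠ 0 := fun f hf =>
      Finset.prod_ne_zero_iff.2 (fun i _ => (hA _ (hf i)).ne_zero)
    have hpf : (∏ i, g i).primeFactors.card ≤ h := by
      calc _ ≤ (Finset.univ.image g).card := by
            apply Finset.card_le_card
            intro s hs
            rw [Nat.mem_primeFactors] at hs
            obtain ⟨i, _, hi⟩ := (Prime.dvd_finsetProd_iff hs.1.prime _).1 hs.2.1
            rw [Finset.mem_image]
            exact ⟨i, Finset.mem_univ _, ((Nat.prime_dvd_prime_iff_eq hs.1 (hA _ (hg i))).1 hi).symm⟩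
        _ ≤ _ := Finset.card_image_le
        _ = h := by simp
    calc _ ≤ (Fintype.piFinset (fun _ : Fin h => (∏ i, g i).primeFactors)).card := by
          apply Finset.card_le_card
          intro f hf
          rw [Finset.mem_filter, Fintype.mem_piFinset] at hf
          rw [Fintype.mem_piFinset]
          intro i
          rw [Nat.mem_primeFactors]
          refine ⟨hA _ (hf.1 i), ?_, hne g hg⟩
          rw [← hf.2]
          exact Finset.dvd_prod_of_mem _ (Finset.mem_univ i)
      _ = (∏ i, g i).primeFactors.card ^ h := by simp
      _ ≤ h ^ h := Nat.pow_le_pow_left hpf h)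
  simpa using h1

theorem log_small : ∃ u0 : ℕ, ∀ u : ℕ, u0 ≤ u → 2 * Real.log u + 4 ≤ (u : ℝ) ^ ((1 : ℝ) / 360) := by
  have h1 : (fun x : ℝ => 2 * Real.log x + 4) =o[Filter.atTop] fun x => x ^ ((1 : ℝ) / 360) := by
    apply Asymptotics.IsLittleO.add
    · exact (isLittleO_log_rpow_atTop (by norm_num)).const_mul_left 2
    · apply Asymptotics.isLittleO_const_left.2
      right
      exact tendsto_norm_atTop_atTop.comp (tendsto_rpow_atTop (by norm_num))
  have h2 := (h1.bound (c := 1) one_pos)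
  have h3 := tendsto_natCast_atTop_atTop.eventually h2
  obtain ⟨u0, hu0⟩ := Filter.eventually_atTop.1 h3
  refine ⟨u0, fun u hu => ?_⟩
  have := hu0 u hu
  rw [one_mul, Real.norm_eq_abs, Real.norm_eq_abs, abs_of_nonneg (a := (u : ℝ) ^ ((1 : ℝ) / 360)) (by positivity)] at this
  exact (le_abs_self _).trans this

theorem supplyQ (p : ℕ) (hp : p.Prime) (m : ℕ) (hm : 5 ≤ m) : ∃ u0 : ℕ, ∀ u ≥ u0, ∃ Q : Finset ℕ,
    u ^ (m - 3) ≤ Q.card ∧ ∀ q ∈ Q, u ^ (m - 4) ≤ q ∧ q ≤ u ^ m ∧ 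
      ∀ s, s.Prime → s ∣ q → (s : ZMod p) = 1 ∧ s ≤ u ∧ Real.log u < s := by
  have hm0 : (0 : ℝ) < m := by exact_mod_cast (by omega)
  set δ : ℝ := 1 / (2 * m) with hδ
  have hδ0 : 0 < δ := by positivity
  have hδ1 : δ ≤ 1 / 2 := by
    rw [hδ]; apply one_div_le_one_div_of_le (by norm_num)
    have : (1 : ℝ) ≤ m := by exact_mod_cast (by omega)
    linarith
  obtain ⟨M0, hM0⟩ := supply1 p hp δ hδ0 (by linarith)
  obtain ⟨u1, hu1⟩ := log_small
  set K : ℕ := (2 * (180 * m)) ^ (180 * m) with hK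
  refine ⟨max (max u1 ⌈Real.exp (6 * M0)⌉₊) (K ^ 2 + 4), fun u hu => ?_⟩
  have hua : u1 ≤ u := le_trans (le_trans (le_max_left _ _) (le_max_left _ _)) hu
  have hub : ⌈Real.exp (6 * M0)⌉₊ ≤ u := le_trans (le_trans (le_max_right _ _) (le_max_left _ _)) hu
  have huc : K ^ 2 + 4 ≤ u := le_trans (le_max_right _ _) hu
  have hu4 : 4 ≤ u := by omega
  have hu0 : (0 : ℝ) < u := by exact_mod_cast (by omega)
  have hu1' : (1 : ℝ) < u := by exact_mod_cast (by omega)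
  have hlogu : 0 < Real.log u := Real.log_pos hu1'
  have hlog := hu1 u hua
  obtain ⟨Z, hZ1, hZ2, hZ3⟩ := hM0 (Real.log u / 6) (by
    have h1 : Real.exp (6 * M0) ≤ u := Nat.ceil_le.1 hub
    have := (Real.le_log_iff_exp_le hu0).2 h1
    linarith)
  have hZ1' : (u : ℝ) ^ ((1 : ℝ) / 180) ≤ Z := by
    rw [Real.rpow_def_of_pos hu0]
    refine le_trans (le_of_eq ?_) hZ1
    congr 1; ring
  have hZu : Z ≤ u := by
    have : (Z : ℝ) ≤ u := by
      refine hZ2.trans (le_of_eq ?_)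
      rw [show 6 * (Real.log u / 6) = Real.log u by ring, Real.exp_log hu0]
    exact_mod_cast this
  have hZgt1 : (1 : ℝ) < Z := lt_of_lt_of_le (Real.one_lt_rpow hu1' (by norm_num)) hZ1'
  have hZ0 : (0 : ℝ) < Z := by linarith
  have hZ1n : 1 < Z := by exact_mod_cast hZgt1
  -- the set A
  set A : Finset ℕ := ((Finset.range (Z + 1)).filter (fun z : ℕ => z.Prime ∧ (z : ZMod p) = 1)).filter (fun z : ℕ => Real.log u < z) with hA
  have hAm : ∀ z ∈ A, z.Prime ∧ (z : ZMod p) = 1 ∧ z ≤ Z ∧ Real.log u < z := by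
    intro z hz
    rw [hA, Finset.mem_filter, Finset.mem_filter, Finset.mem_range] at hz
    exact ⟨hz.1.2.1, hz.1.2.2, by omega, hz.2⟩
  have hAcard : (Z : ℝ) ^ (1 - δ) / 2 ≤ A.card := by
    have h1 : pi1 p Z ≤ A.card + (⌊Real.log u⌋₊ + 1) := by
      unfold pi1
      rw [← Finset.card_filter_add_card_filter_not (s := (Finset.range (Z + 1)).filter (fun z : ℕ => z.Prime ∧ (z : ZMod p) = 1)) (fun z : ℕ => Real.log u < z)]
      apply Nat.add_le_add_left
      calc _ ≤ (Finset.range (⌊Real.log u⌋₊ + 1)).card := by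
            apply Finset.card_le_card
            intro z hz
            rw [Finset.mem_filter] at hz
            have h2 := hz.2
            push Not at h2
            rw [Finset.mem_range, Nat.lt_succ_iff]
            exact Nat.le_floor h2
        _ = _ := Finset.card_range _
    have h2 : (pi1 p Z : ℝ) ≤ A.card + (⌊Real.log u⌋₊ + 1) := by exact_mod_cast h1
    have h3 := Nat.floor_le hlogu.le
    have h4 : (u : ℝ) ^ ((1 : ℝ) / 360) ≤ (Z : ℝ) ^ (1 - δ) := by
      calc (u : ℝ) ^ ((1 : ℝ) / 360) = ((u : ℝ) ^ ((1 : ℝ) / 180)) ^ ((1 : ℝ) / 2) := by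
            rw [← Real.rpow_mul hu0.le]; norm_num
        _ ≤ (Z : ℝ) ^ ((1 : ℝ) / 2) := Real.rpow_le_rpow (by positivity) hZ1' (by norm_num)
        _ ≤ _ := Real.rpow_le_rpow_of_exponent_le hZgt1.le (by linarith)
    linarith
  set h := Nat.log Z (u ^ m) with hh
  have hum0 : u ^ m ≠ 0 := pow_ne_zero _ (by omega)
  have hZh : Z ^ h ≤ u ^ m := Nat.pow_log_le_self Z hum0
  have hZh1 : u ^ m < Z ^ (h + 1) := Nat.lt_pow_succ_log_self hZ1n _
  have hh180 : h ≤ 180 * m := by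
    by_contra hc
    push Not at hc
    have h1 : (u : ℝ) ^ ((1 : ℝ) / 180 * h) ≤ (u : ℝ) ^ (m : ℝ) := by
      calc (u : ℝ) ^ ((1 : ℝ) / 180 * h) = ((u : ℝ) ^ ((1 : ℝ) / 180)) ^ h := by
            rw [Real.rpow_mul hu0.le, Real.rpow_natCast]
        _ ≤ (Z : ℝ) ^ h := by gcongr
        _ ≤ (u : ℝ) ^ m := by exact_mod_cast hZh
        _ = _ := (Real.rpow_natCast _ _).symm
    have h2 := (Real.rpow_le_rpow_left_iff hu1').1 h1
    have h3 : (180 * m : ℝ) < h := by exact_mod_cast hc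
    linarith
  have hK2 : (2 * h) ^ h ≤ K := by
    rw [hK]
    rcases Nat.eq_zero_or_pos h with h0 | h0
    · rw [h0]; simp; exact Nat.pos_of_ne_zero (by positivity)
    · calc (2 * h) ^ h ≤ (2 * (180 * m)) ^ h := Nat.pow_le_pow_left (by omega) _
        _ ≤ _ := Nat.pow_le_pow_right (by omega) hh180
  set Q0 := (Fintype.piFinset (fun _ : Fin h => A)).image (fun f => ∏ i, f i) with hQ0
  have hcard := prod_tuples A h (fun z hz => (hAm z hz).1)
  rw [← hQ0] at hcard
  have hQ0card : u ^ (m - 2) ≤ Q0.card := by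
    have c1 : ((Z : ℝ) ^ (1 - δ) / 2) ^ h ≤ (h : ℝ) ^ h * Q0.card := by
      refine (pow_le_pow_left₀ (by positivity) hAcard h).trans ?_
      exact_mod_cast hcard
    have c2 : ((Z : ℝ) ^ (1 - δ)) ^ h * (u : ℝ) ^ ((1 : ℝ) / 2) ≥ (Z : ℝ) ^ h := by
      have e1 : ((Z : ℝ) ^ (1 - δ)) ^ h = ((Z : ℝ) ^ h) ^ (1 - δ) := by
        rw [← Real.rpow_natCast, ← Real.rpow_natCast, ← Real.rpow_mul hZ0.le, ← Real.rpow_mul hZ0.le, mul_comm]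
      have e2 : ((Z : ℝ) ^ h) ^ δ ≤ (u : ℝ) ^ ((1 : ℝ) / 2) := by
        have : (Z : ℝ) ^ h ≤ (u : ℝ) ^ (m : ℝ) := by rw [Real.rpow_natCast]; exact_mod_cast hZh
        refine (Real.rpow_le_rpow (by positivity) this hδ0.le).trans (le_of_eq ?_)
        rw [← Real.rpow_mul hu0.le]; congr 1; rw [hδ]; field_simp
      rw [e1]
      calc (Z : ℝ) ^ h = ((Z : ℝ) ^ h) ^ (1 - δ) * ((Z : ℝ) ^ h) ^ δ := by
            rw [← Real.rpow_add (by positivity)]; simp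
        _ ≤ _ := by gcongr
    have c3 : (u : ℝ) ^ (m - 1) ≤ (Z : ℝ) ^ h := by
      have : u ^ m < Z ^ h * u := lt_of_lt_of_le hZh1 (by rw [pow_succ]; exact Nat.mul_le_mul_left _ hZu)
      rw [show m = (m - 1) + 1 by omega, pow_succ] at this
      have := lt_of_mul_lt_mul_right this (Nat.zero_le _)
      exact_mod_cast this.le
    have c4 : (K : ℝ) ≤ (u : ℝ) ^ ((1 : ℝ) / 2) := by
      rw [← Real.sqrt_eq_rpow]
      apply Real.le_sqrt_of_sq_le
      exact_mod_cast (by omega)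
    have c5 : (u : ℝ) ^ (m - 1) ≤ (Q0.card : ℝ) * u := by
      calc (u : ℝ) ^ (m - 1) ≤ (Z : ℝ) ^ h := c3
        _ ≤ ((Z : ℝ) ^ (1 - δ)) ^ h * (u : ℝ) ^ ((1 : ℝ) / 2) := c2
        _ = ((Z : ℝ) ^ (1 - δ) / 2) ^ h * 2 ^ h * (u : ℝ) ^ ((1 : ℝ) / 2) := by
            rw [← mul_pow]; congr 2; ring
        _ ≤ ((h : ℝ) ^ h * Q0.card) * 2 ^ h * (u : ℝ) ^ ((1 : ℝ) / 2) := by gcongr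
        _ = Q0.card * ((2 * h) ^ h : ℝ) * (u : ℝ) ^ ((1 : ℝ) / 2) := by rw [mul_pow]; ring
        _ ≤ Q0.card * K * (u : ℝ) ^ ((1 : ℝ) / 2) := by
            gcongr; exact_mod_cast hK2
        _ ≤ Q0.card * (u : ℝ) ^ ((1 : ℝ) / 2) * (u : ℝ) ^ ((1 : ℝ) / 2) := by gcongr
        _ = Q0.card * u := by
            rw [mul_assoc, ← Real.rpow_add hu0]; norm_num
    rw [show m - 1 = (m - 2) + 1 by omega, pow_succ] at c5
    have := le_of_mul_le_mul_right c5 hu0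
    exact_mod_cast this
  refine ⟨Q0.filter (fun q => u ^ (m - 4) ≤ q), ?_, ?_⟩
  · have h1 := Finset.card_filter_add_card_filter_not (s := Q0) (fun q => u ^ (m - 4) ≤ q)
    have h2 : (Q0.filter (fun q => ¬ u ^ (m - 4) ≤ q)).card ≤ u ^ (m - 4) := by
      calc _ ≤ (Finset.range (u ^ (m - 4))).card := by
            apply Finset.card_le_card
            intro z hz
            rw [Finset.mem_filter] at hz
            rw [Finset.mem_range]; omega
        _ = _ := Finset.card_range _
    have e1 : u ^ (m - 2) = u ^ (m - 4) * u * u := by rw [← pow_succ, ← pow_succ]; congr 1; omega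
    have e2 : u ^ (m - 3) = u ^ (m - 4) * u := by rw [← pow_succ]; congr 1; omega
    have e3 : u ^ (m - 4) * u * u ≥ u ^ (m - 4) * u * 2 := Nat.mul_le_mul_left _ (by omega)
    have e4 : u ^ (m - 4) * u ≥ u ^ (m - 4) * 1 := Nat.mul_le_mul_left _ (by omega)
    omega
  · intro q hq
    rw [Finset.mem_filter] at hq
    refine ⟨hq.2, ?_⟩
    obtain ⟨g, hg, rfl⟩ := Finset.mem_image.1 hq.1
    rw [Fintype.mem_piFinset] at hg
    constructor
    · refine le_trans ?_ hZh
      calc ∏ i, g i ≤ ∏ i : Fin h, Z := Finset.prod_le_prod' (fun i _ => (hAm _ (hg i)).2.2.1)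
        _ = Z ^ h := by simp
    · intro s hs hsd
      obtain ⟨i, _, hi⟩ := (Prime.dvd_finsetProd_iff hs.prime _).1 hsd
      have := (Nat.prime_dvd_prime_iff_eq hs (hAm _ (hg i)).1).1 hi
      have h3 := hAm _ (hg i)
      rw [← this] at h3
      exact ⟨h3.2.1, h3.2.2.1.trans hZu, h3.2.2.2⟩

end

section

theorem paramsY (m : ℕ) : ∃ u0 : ℕ, ∀ u ≥ u0, ∃ Y C0 : ℕ, 1 ≤ Y ∧ (Y : ℝ) ≤ Real.log u ∧ 0 < C0 ∧ C0 ≤ u ∧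
    (∀ c, 1 ≤ c → c ≤ Y → c ∣ C0) ∧ (∀ s, s.Prime → s ∣ C0 → s ≤ Y) ∧ 4 * u ^ (2 * m) < Y ^ Y := by
  set B : ℝ := Real.exp (24 * m + 2) with hB
  refine ⟨⌈Real.exp (6 * (B + 2))⌉₊, fun u hu => ?_⟩
  have hB1 : 1 ≤ B := Real.one_le_exp (by positivity)
  have h1 : Real.exp (6 * (B + 2)) ≤ u := Nat.ceil_le.1 hu
  have hu0 : (0 : ℝ) < u := (Real.exp_pos _).trans_le h1
  have h2 : 6 * (B + 2) ≤ Real.log u := (Real.le_log_iff_exp_le hu0).2 h1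
  set Y := ⌊Real.log u / 6⌋₊ with hY
  have hY1 : (Y : ℝ) ≤ Real.log u / 6 := Nat.floor_le (by linarith)
  have hY2 : Real.log u / 6 < Y + 1 := Nat.lt_floor_add_one _
  have hYB : B < Y := by linarith
  have hY1' : (1 : ℝ) ≤ Y := by linarith
  have hY1n : 1 ≤ Y := by exact_mod_cast hY1'
  refine ⟨Y, Y.lcmUpto, hY1n, by linarith, Nat.lcmUpto_pos Y, ?_, ?_, ?_, ?_⟩
  · have h3 := Chebyshev.psi_eq_log_lcmUpto Y
    have h4 := Chebyshev.psi_le_const_mul_self (x := Y) (by positivity)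
    have h5 : Real.log 4 ≤ 2 := by
      rw [show (4 : ℝ) = 2 ^ 2 by norm_num, Real.log_pow]
      have := Real.log_two_lt_d9
      push_cast; linarith
    have h6 : (Real.log 4 + 4) * (Y : ℝ) ≤ 6 * Y := by
      apply mul_le_mul_of_nonneg_right (by linarith) (by positivity)
    have h7 : Real.log (Y.lcmUpto : ℝ) ≤ Real.log u := by rw [← h3]; linarith
    have h8 : (0 : ℝ) < Y.lcmUpto := by exact_mod_cast Nat.lcmUpto_pos Y
    have := (Real.log_le_log_iff h8 hu0).1 h7
    exact_mod_cast this
  · intro c hc1 hc2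
    exact Finset.dvd_lcm (f := id) (Finset.mem_Icc.2 ⟨hc1, hc2⟩)
  · intro s hs hsd
    have : s ∈ (Nat.lcmUpto Y).primeFactors := Nat.mem_primeFactors.2 ⟨hs, hsd, Nat.lcmUpto_ne_zero Y⟩
    rw [Nat.primeFactors_lcmUpto] at this
    exact Nat.le_of_mem_primesLE this
  · have e1 : (u : ℝ) ≤ Real.exp (12 * Y) := by
      rw [← Real.log_le_iff_le_exp hu0]; linarith
    have e2 : (4 : ℝ) ≤ Real.exp (2 * Y) := by
      have : Real.exp 2 ≤ Real.exp (2 * Y) := Real.exp_le_exp.2 (by linarith)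
      have h3 : Real.exp 2 = Real.exp 1 ^ 2 := by rw [← Real.exp_nat_mul]; norm_num
      have h4 := Real.exp_one_gt_d9
      nlinarith
    have e3 : 4 * (u : ℝ) ^ (2 * m) ≤ B ^ Y := by
      calc 4 * (u : ℝ) ^ (2 * m) ≤ Real.exp (2 * Y) * Real.exp (12 * Y) ^ (2 * m) := by gcongr
        _ = B ^ Y := by
          rw [hB, ← Real.exp_nat_mul, ← Real.exp_nat_mul, ← Real.exp_add]
          congr 1; push_cast; ring
    have e4 : B ^ Y < (Y : ℝ) ^ Y := pow_lt_pow_left₀ hYB (by linarith) (by omega)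
    have := e3.trans_lt e4
    exact_mod_cast this

theorem log_lin (K : ℝ) : ∃ u0 : ℕ, ∀ u : ℕ, u0 ≤ u → K * Real.log u ≤ u / 2 := by
  have h1 : (fun x : ℝ => K * Real.log x) =o[Filter.atTop] fun x => x :=
    Real.isLittleO_log_id_atTop.const_mul_left K
  have h2 := (h1.bound (c := 1 / 2) (by norm_num))
  have h3 := tendsto_natCast_atTop_atTop.eventually h2
  obtain ⟨u0, hu0⟩ := Filter.eventually_atTop.1 h3
  refine ⟨u0, fun u hu => ?_⟩
  have := hu0 u hu
  rw [Real.norm_eq_abs, Real.norm_eq_abs, abs_of_nonneg (a := (u : ℝ)) (by positivity)] at this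
  have := (le_abs_self _).trans this
  linarith

theorem primesE (m : ℕ) (hm : 2 ≤ m) : ∃ u0 : ℕ, ∀ u ≥ u0, ∃ S : Finset ℕ, u ^ (m - 1) ≤ S.card ∧
    ∀ e ∈ S, e.Prime ∧ u ^ (m - 1) ≤ e ∧ e ≤ u ^ m := by
  obtain ⟨u1, hu1⟩ := log_lin (3 * m + 1)
  refine ⟨max u1 2, fun u hu => ?_⟩
  have h1 := hu1 u ((le_max_left _ _).trans hu)
  have hu2 : 2 ≤ u := (le_max_right _ _).trans hu
  have hu2' : (2 : ℝ) ≤ u := by exact_mod_cast hu2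
  have hlog : 0 < Real.log u := Real.log_pos (by linarith)
  have h2 := Chebyshev.pi_ge (u ^ m)
  have hm0 : (0 : ℝ) < m := by exact_mod_cast (by omega)
  have hup : (1 : ℝ) ≤ (u : ℝ) ^ (m - 1) := one_le_pow₀ (by linarith)
  have h3 : (2 * u ^ (m - 1) : ℝ) ≤ Nat.primeCounting (u ^ m) := by
    refine le_trans ?_ h2
    push_cast
    rw [Real.log_pow, le_div_iff₀ (by positivity)]
    have e1 : Real.log ((u : ℝ) ^ m + 1) ≤ (m + 1) * Real.log u := by
      rw [show (m + 1 : ℝ) = ((m + 1 : ℕ) : ℝ) by push_cast; ring, ← Real.log_pow]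
      apply Real.log_le_log (by positivity)
      rw [pow_succ]
      have : (1 : ℝ) ≤ (u : ℝ) ^ m := one_le_pow₀ (by linarith)
      nlinarith
    have e2 : (u : ℝ) ^ m = (u : ℝ) ^ (m - 1) * u := by rw [← pow_succ]; congr 1; omega
    have e3 := Real.log_two_gt_d9
    have e4 : (u : ℝ) ^ (m - 1) * u * (1 / 2) ≤ (u : ℝ) ^ (m - 1) * u * Real.log 2 := by gcongr; linarith
    have e5 : (u : ℝ) ^ (m - 1) * ((3 * m + 1) * Real.log u) ≤ (u : ℝ) ^ (m - 1) * (u / 2) := by gcongr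
    have e6 : (m + 1) * Real.log u ≤ (u : ℝ) ^ (m - 1) * ((m + 1) * Real.log u) := le_mul_of_one_le_left (by positivity) hup
    generalize Real.log ((u : ℝ) ^ m + 1) = Lg at *
    rw [e2]
    nlinarith
  have h3' : 2 * u ^ (m - 1) ≤ Nat.primeCounting (u ^ m) := by exact_mod_cast h3
  refine ⟨(Nat.primesLE (u ^ m)).filter (fun e => u ^ (m - 1) ≤ e), ?_, ?_⟩
  · have h4 := Finset.card_filter_add_card_filter_not (s := Nat.primesLE (u ^ m)) (fun e => u ^ (m - 1) ≤ e)
    have h5 : ((Nat.primesLE (u ^ m)).filter (fun e => ¬ u ^ (m - 1) ≤ e)).card ≤ u ^ (m - 1) := by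
      calc _ ≤ (Finset.range (u ^ (m - 1))).card := by
            apply Finset.card_le_card
            intro z hz
            rw [Finset.mem_filter] at hz
            rw [Finset.mem_range]; omega
        _ = _ := Finset.card_range _
    rw [Nat.primesLE_card_eq_primeCounting] at h4
    omega
  · intro e he
    rw [Finset.mem_filter] at he
    exact ⟨Nat.prime_of_mem_primesLE he.1, he.2, Nat.le_of_mem_primesLE he.1⟩

end

section

theorem root_pp (p s k : ℕ) (hp : p.Prime) (hs : s.Prime) (hk : 0 < k) (h : (s : ZMod p) = 1) :
    ∃ r : ℤ, ((s ^ k : ℕ) : ℤ) ∣ r ^ p - 1 ∧ IsCoprime (r - 1) ((s ^ k : ℕ) : ℤ) := by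
  haveI : Fact s.Prime := ⟨hs⟩
  haveI : Fact p.Prime := ⟨hp⟩
  have h1 : p ∣ s - 1 := by
    rw [← ZMod.natCast_eq_zero_iff, Nat.cast_sub hs.one_lt.le, h]; simp
  have h2 : p ∣ Fintype.card (ZMod s)ˣ := by rwa [ZMod.card_units]
  obtain ⟨x, hx⟩ := exists_prime_orderOf_dvd_card p h2
  obtain ⟨r0, hr0⟩ := ZMod.intCast_surjective (x : ZMod s)
  have hxp : (x : ZMod s) ^ p = 1 := by
    rw [← Units.val_pow_eq_pow_val, ← hx, pow_orderOf_eq_one]; simp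
  have hx1 : (x : ZMod s) ≠ 1 := by
    intro h
    have : x = 1 := Units.ext h
    rw [this, orderOf_one] at hx
    exact hp.one_lt.ne hx
  refine ⟨r0 ^ (s ^ (k - 1)), ?_, ?_⟩
  · have h3 : (s : ℤ) ∣ r0 ^ p - 1 := by
      rw [← ZMod.intCast_eq_intCast_iff_dvd_sub]
      push_cast
      rw [hr0, hxp]
    have h4 := dvd_sub_pow_of_dvd_sub (p := s) h3 (k - 1)
    rw [Nat.sub_add_cancel hk, one_pow] at h4
    rw [← pow_mul, mul_comm, pow_mul]
    push_cast
    exact h4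
  · push_cast
    apply IsCoprime.pow_right
    rw [isCoprime_comm, Prime.coprime_iff_not_dvd (Nat.prime_iff_prime_int.1 hs)]
    intro hd
    rw [← ZMod.intCast_eq_intCast_iff_dvd_sub] at hd
    push_cast at hd
    rw [hr0, ZMod.pow_card_pow] at hd
    exact hx1 hd.symm

theorem root_mod (p : ℕ) (hp : p.Prime) (q : ℕ) : 0 < q → (∀ s : ℕ, s.Prime → s ∣ q → (s : ZMod p) = 1) →
    ∃ r : ℤ, (q : ℤ) ∣ r ^ p - 1 ∧ IsCoprime (r - 1) (q : ℤ) := by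
  induction q using Nat.recOnPosPrimePosCoprime with
  | zero => intro h; omega
  | one => intro _ _; exact ⟨0, by simp, by simp [isCoprime_one_right]⟩
  | prime_pow s k hs hk =>
    intro _ h
    exact root_pp p s k hp hs hk (h s hs (dvd_pow_self _ hk.ne'))
  | coprime a b ha hb hab iha ihb =>
    intro _ h
    obtain ⟨r1, h1, h1'⟩ := iha (by omega) (fun s hs hd => h s hs (hd.mul_right _))
    obtain ⟨r2, h2, h2'⟩ := ihb (by omega) (fun s hs hd => h s hs (hd.mul_left _))
    obtain ⟨x, y, hxy⟩ := Nat.isCoprime_iff_coprime.2 hab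
    set r := r1 + (r2 - r1) * (x * a) with hr
    have ea : (a : ℤ) ∣ r - r1 := ⟨(r2 - r1) * x, by rw [hr]; ring⟩
    have eb : (b : ℤ) ∣ r - r2 := ⟨(r1 - r2) * y, by rw [hr]; linear_combination (r2 - r1) * hxy⟩
    refine ⟨r, ?_, ?_⟩
    · push_cast
      apply IsCoprime.mul_dvd (Nat.isCoprime_iff_coprime.2 hab)
      · have := dvd_add (ea.trans (sub_dvd_pow_sub_pow r r1 p)) h1
        simpa using this
      · have := dvd_add (eb.trans (sub_dvd_pow_sub_pow r r2 p)) h2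
        simpa using this
    · push_cast
      apply IsCoprime.mul_right
      · obtain ⟨z, hz⟩ := ea
        have : r - 1 = (r1 - 1) + a * z := by linear_combination hz
        rw [this]
        exact (IsCoprime.add_mul_left_left_iff).2 h1'
      · obtain ⟨z, hz⟩ := eb
        have : r - 1 = (r2 - 1) + b * z := by linear_combination hz
        rw [this]
        exact (IsCoprime.add_mul_left_left_iff).2 h2'

theorem pick_w (p q C0 e2 A : ℕ) (hp : p.Prime) (hq : 0 < q) (hC0 : 0 < C0)
    (hq1 : ∀ s : ℕ, s.Prime → s ∣ q → (s : ZMod p) = 1) (hqo : Nat.Coprime (2 * C0) q)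
    (he : e2.Prime) (heM : ¬ e2 ∣ 2 * C0 * q) :
    ∃ w1 : ℕ, A ≤ w1 ∧ w1 < A + 2 * (2 * C0 * q) ∧ ¬ e2 ∣ w1 ∧ w1 ≡ 1 [MOD 2 * C0] ∧
      (q : ℤ) ∣ (w1 : ℤ) ^ p - ((w1 : ℤ) - (4 * C0 * e2 : ℕ)) ^ p := by
  obtain ⟨r, hr, hr'⟩ := root_mod p hp q hq hq1
  obtain ⟨v, z, hvz⟩ := hr'
  set M := 2 * C0 * q with hM
  have hM0 : 0 < M := by positivity
  -- residue
  obtain ⟨t, ht⟩ : ∃ t : ℕ, (q : ℤ) ∣ (t : ℤ) - (-(4 * C0 * e2 : ℕ) * v) := by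
    refine ⟨((-(4 * C0 * e2 : ℕ) * v) % (q : ℤ)).toNat, ?_⟩
    rw [Int.toNat_of_nonneg (Int.emod_nonneg _ (by omega))]
    exact ⟨-((-(4 * C0 * e2 : ℕ) * v) / (q : ℤ)), by
      have := Int.emod_add_mul_ediv (-((4 * C0 * e2 : ℕ) : ℤ) * v) q
      linear_combination this⟩
  obtain ⟨x0, hx1, hx2⟩ := Nat.chineseRemainder hqo 1 t
  -- lift
  obtain ⟨w, hw1, hw2, hw3⟩ : ∃ w, A ≤ w ∧ w < A + M ∧ w ≡ x0 [MOD M] := by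
    refine ⟨A + (x0 + (M - A % M)) % M, by omega, by have := Nat.mod_lt (x0 + (M - A % M)) hM0; omega, ?_⟩
    have h1 : A + (x0 + (M - A % M)) % M ≡ A % M + (x0 + (M - A % M)) [MOD M] :=
      Nat.ModEq.add (Nat.mod_modEq _ _).symm (Nat.mod_modEq _ _)
    have h2 : A % M + (x0 + (M - A % M)) = x0 + M := by
      have := Nat.mod_lt A hM0
      omega
    rw [h2] at h1
    exact h1.trans (by simp [Nat.ModEq])
  have key : ∀ w : ℕ, w ≡ x0 [MOD M] → w ≡ 1 [MOD 2 * C0] ∧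
      (q : ℤ) ∣ (w : ℤ) ^ p - ((w : ℤ) - (4 * C0 * e2 : ℕ)) ^ p := by
    intro w hw
    refine ⟨(hw.of_dvd (Dvd.intro _ rfl)).trans hx1, ?_⟩
    have h1 : w ≡ t [MOD q] := (hw.of_dvd (Dvd.intro_left _ rfl)).trans hx2
    have h2 : (q : ℤ) ∣ (t : ℤ) - w := (Nat.modEq_iff_dvd).1 h1
    obtain ⟨y, hy⟩ := h2
    obtain ⟨y', hy'⟩ := ht
    -- w - e = r w mod q
    set e : ℤ := ((4 * C0 * e2 : ℕ) : ℤ) with he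
    have h3 : (q : ℤ) ∣ r * w - (w - e) := by
      have hwz : (w : ℤ) = -e * v + q * y' - q * y := by linear_combination hy' - hy
      refine ⟨z * e + (r - 1) * (y' - y), ?_⟩
      have : r * (w:ℤ) - (w - e) = (r - 1) * w + e := by ring
      rw [this, hwz]
      linear_combination (-e) * hvz
    have h4 := h3.trans (sub_dvd_pow_sub_pow (r * (w : ℤ)) (w - e) p)
    have h5 : (q : ℤ) ∣ (r ^ p - 1) * w ^ p := hr.mul_right _
    have := dvd_sub h4 h5
    rw [mul_pow] at this
    have h6 : (r ^ p * (w : ℤ) ^ p - (w - e) ^ p - (r ^ p - 1) * w ^ p) = w ^ p - (w - e) ^ p := by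
      generalize ((w : ℤ) - e) ^ p = x
      ring
    rwa [h6] at this
  by_cases hd : e2 ∣ w
  · obtain ⟨k1, k2⟩ := key (w + M) (by simpa [Nat.ModEq] using hw3)
    refine ⟨w + M, by omega, by omega, ?_, k1, k2⟩
    intro h
    exact heM ((Nat.dvd_add_right hd).1 h)
  · obtain ⟨k1, k2⟩ := key w hw3
    exact ⟨w, hw1, by omega, hd, k1, k2⟩

def phi (p a b : ℕ) : ℕ := ∑ i ∈ Finset.range p, a ^ i * b ^ (p - 1 - i)

theorem phi_eq (p e b : ℕ) : (b + e) ^ p = b ^ p + e * phi p (b + e) b := by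
  have := geom_sum₂_mul (R := ℤ) (b + e) b p
  zify
  unfold phi
  push_cast
  linear_combination -this

theorem phi_odd (p a b : ℕ) (hp : Odd p) (ha : Odd a) (hb : Odd b) : Odd (phi p a b) := by
  rw [← ZMod.natCast_eq_one_iff_odd] at *
  unfold phi
  push_cast
  rw [ha, hb]
  simp [hp]

theorem pair_props (p Y C0 e2 q w1 w2 : ℕ) (hp : p.Prime) (hp5 : 5 ≤ p) (hC0 : 0 < C0)
    (hC : ∀ c, 1 ≤ c → c ≤ Y → c ∣ C0) 
    (hqo : Nat.Coprime (2 * C0) q) (he : e2.Prime) (heq : ¬ e2 ∣ q) (hw : w1 = w2 + 4 * C0 * e2)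
    (hne : ¬ e2 ∣ w1) (hw1 : w1 ≡ 1 [MOD 2 * C0])
    (hdq : (q : ℤ) ∣ (w1 : ℤ) ^ p - ((w1 : ℤ) - (4 * C0 * e2 : ℕ)) ^ p) :
    q ∣ phi p w1 w2 ∧ w1 ^ p = w2 ^ p + 4 * C0 * e2 * phi p w1 w2 ∧ Odd (phi p w1 w2) ∧ Odd w1 ∧ Odd w2 ∧
      Nat.Coprime w1 w2 ∧ ∀ s, s.Prime → s ∣ w1 * w2 → Y < s := by
  have hw2 : w2 ≡ 1 [MOD 2 * C0] := by
    have h1 : w1 ≡ w2 [MOD 2 * C0] := by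
      rw [hw]
      have : 4 * C0 * e2 ≡ 0 [MOD 2 * C0] := (Nat.modEq_zero_iff_dvd).2 ⟨2 * e2, by ring⟩
      simpa using (Nat.ModEq.refl w2).add this
    exact h1.symm.trans hw1
  have hodd : ∀ w, w ≡ 1 [MOD 2 * C0] → Odd w := by
    intro w h
    have : w ≡ 1 [MOD 2] := h.of_dvd (Dvd.intro _ rfl)
    exact Nat.odd_iff.2 this
  have hφ : w1 ^ p = w2 ^ p + 4 * C0 * e2 * phi p w1 w2 := by
    rw [hw]; exact phi_eq _ _ _
  have hnd : ∀ s, s.Prime → s ∣ 2 * C0 → ∀ w, w ≡ 1 [MOD 2 * C0] → ¬ s ∣ w := by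
    intro s hs hd w h hsw
    have h1 : w ≡ 1 [MOD s] := h.of_dvd hd
    have h2 : 1 ≡ 0 [MOD s] := h1.symm.trans ((Nat.modEq_zero_iff_dvd).2 hsw)
    exact hs.one_lt.ne' (Nat.dvd_one.1 ((Nat.modEq_zero_iff_dvd).1 h2))
  have ho1 := hodd _ hw1
  have ho2 := hodd _ hw2
  refine ⟨?_, hφ, phi_odd _ _ _ (hp.odd_of_ne_two (by omega)) ho1 ho2, ho1, ho2, ?_, ?_⟩
  · have h1 : (w1 : ℤ) - (4 * C0 * e2 : ℕ) = w2 := by rw [hw]; push_cast; ring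
    rw [h1] at hdq
    have h2 : (q : ℤ) ∣ ((4 * C0 * e2 * phi p w1 w2 : ℕ) : ℤ) := by
      convert hdq using 1
      zify at hφ
      push_cast
      linear_combination -hφ
    have h3 : q ∣ 4 * C0 * e2 * phi p w1 w2 := by exact_mod_cast h2
    refine Nat.Coprime.dvd_of_dvd_mul_left ?_ h3
    apply Nat.Coprime.mul_right
    · rw [show 4 * C0 = 2 * (2 * C0) by ring]
      exact Nat.Coprime.mul_right (Nat.Coprime.coprime_mul_right hqo).symm hqo.symm
    · exact ((Nat.Prime.coprime_iff_not_dvd he).2 heq).symm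
  · apply Nat.Coprime.symm
    apply Nat.coprime_of_dvd
    intro s hs h2 h1
    have h3 : s ∣ 4 * C0 * e2 := by
      rw [hw] at h1
      exact (Nat.dvd_add_right h2).1 h1
    rcases (Nat.Prime.dvd_mul hs).1 h3 with h | h
    · refine hnd s hs ?_ w1 hw1 h1
      rw [show 4 * C0 = 2 * (2 * C0) by ring] at h
      rcases (Nat.Prime.dvd_mul hs).1 h with h | h
      · exact h.mul_right _
      · exact h
    · rw [(Nat.prime_dvd_prime_iff_eq hs he).1 h] at h1
      exact hne h1
  · intro s hs hd
    by_contra hlt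
    have h3 : s ∣ 2 * C0 := (hC s hs.one_lt.le (by omega)).mul_left _
    rcases (Nat.Prime.dvd_mul hs).1 hd with h | h
    · exact hnd s hs h3 w1 hw1 h
    · exact hnd s hs h3 w2 hw2 h

end

section

def rd (n : ℕ) : ℕ := ∏ s ∈ n.primeFactors, s

theorem rd_pos (n : ℕ) : 0 < rd n := Nat.pos_of_ne_zero (by
  unfold rd
  exact Finset.prod_ne_zero_iff.2 fun s hs => (Nat.prime_of_mem_primeFactors hs).ne_zero)

theorem rd_le (n : ℕ) (hn : 0 < n) : rd n ≤ n := Nat.le_of_dvd hn (Nat.prod_primeFactors_dvd n)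

theorem rd_mul (a b : ℕ) (ha : a ≠ 0) (hb : b ≠ 0) : rd (a * b) ≤ rd a * rd b := by
  unfold rd
  rw [Nat.primeFactors_mul ha hb, ← Finset.prod_union_inter]
  apply Nat.le_mul_of_pos_right
  exact Nat.pos_of_ne_zero (Finset.prod_ne_zero_iff.2 fun s hs =>
    (Nat.prime_of_mem_primeFactors (Finset.mem_inter.1 hs).1).ne_zero)

theorem rd_pow (a p : ℕ) (hp : p ≠ 0) : rd (a ^ p) = rd a := by
  unfold rd; rw [Nat.primeFactors_pow _ hp]

theorem abc_ev (habc : ABCConjecture) (M : ℕ) (hM : 0 < M) : ∃ u0 : ℕ, ∀ u ≥ u0, ∀ a b c : ℕ, 0 < a → 0 < b → 0 < c →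
      Nat.Coprime a b → Nat.Coprime a c → Nat.Coprime b c → a + b = c → rd (a * b * c) ≤ u ^ M →
      c ≤ u ^ 2 * rd (a * b * c) := by
  obtain ⟨C, hC, h⟩ := habc (1 / M) (by positivity)
  refine ⟨⌈C⌉₊, fun u hu a b c ha hb hc h1 h2 h3 h4 h5 => ?_⟩
  have hCu : C ≤ u := Nat.ceil_le.1 hu
  have := h a b c ha hb hc h1 h2 h3 h4
  have e : (∏ ℓ ∈ (a * b * c).primeFactors, (ℓ : ℝ)) = (rd (a * b * c) : ℝ) := by
    unfold rd; push_cast; rfl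
  rw [e] at this
  have hr : (0 : ℝ) < rd (a * b * c) := by exact_mod_cast rd_pos _
  rw [Real.rpow_add hr, Real.rpow_one] at this
  have h6 : (rd (a * b * c) : ℝ) ^ ((1 : ℝ) / M) ≤ u := by
    have h7 : (rd (a * b * c) : ℝ) ≤ (u : ℝ) ^ M := by exact_mod_cast h5
    calc _ ≤ ((u : ℝ) ^ M) ^ ((1 : ℝ) / M) := Real.rpow_le_rpow hr.le h7 (by positivity)
      _ = u := by
        rw [one_div]
        exact Real.pow_rpow_inv_natCast (by positivity) hM.ne'
  have h8 : (c : ℝ) ≤ u ^ 2 * rd (a * b * c) := by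
    calc (c : ℝ) ≤ C * (rd (a * b * c) * (rd (a * b * c) : ℝ) ^ ((1 : ℝ) / M)) := this.le
      _ ≤ u * (rd (a * b * c) * u) := by gcongr
      _ = _ := by ring
  exact_mod_cast h8

structure Par (p m u Y C0 : ℕ) : Prop where
  hp : p.Prime
  hp5 : 5 ≤ p
  hm : 200 ≤ m
  hu : p * 2 ^ (p + 4) ≤ u
  hY : 1 ≤ Y
  hYu : Y ≤ u
  hC0 : 0 < C0
  hC0u : C0 ≤ u
  hC : ∀ c, 1 ≤ c → c ≤ Y → c ∣ C0
  hYY : 4 * u ^ (2 * m) < Y ^ Y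

structure Pr (p m u Y C0 e2 q f w1 w2 : ℕ) : Prop where
  hq1 : u ^ (m - 34) ≤ q
  hq2 : q ≤ u ^ (m - 30)
  he1 : u ^ (m - 61) ≤ e2
  he2 : e2 ≤ u ^ (m - 60)
  hw1 : u ^ m ≤ w1
  hw2 : w1 ≤ 2 * u ^ m
  hw : w1 = w2 + 4 * C0 * e2
  hφ : w1 ^ p = w2 ^ p + 4 * C0 * e2 * (q * f)
  hfo : Odd f
  ho1 : Odd w1
  ho2 : Odd w2
  hcop : Nat.Coprime w1 w2
  hbig : ∀ s, s.Prime → s ∣ w1 * w2 → Y < s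

theorem Par.u2 {p m u Y C0 : ℕ} (h : Par p m u Y C0) : 2 ^ (p + 4) ≤ u ∧ 80 ≤ u ∧ 4 * p ≤ u := by
  have h1 := h.hu
  have h2 := h.hp5
  have h3 : 2 ^ 4 ≤ 2 ^ (p + 4) := Nat.pow_le_pow_right (by norm_num) (by omega)
  refine ⟨by nlinarith, by nlinarith, by nlinarith⟩

theorem pr_small {p m u Y C0 e2 q f w1 w2 : ℕ} (h : Par p m u Y C0) (g : Pr p m u Y C0 e2 q f w1 w2) :
    4 * C0 * e2 ≤ u ^ (m - 58) := by
  obtain ⟨h1, h2, h3⟩ := h.u2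
  have hm := h.hm
  calc 4 * C0 * e2 ≤ u * u * u ^ (m - 60) := by
        have := h.hC0u; have := g.he2; gcongr; omega
    _ = u ^ (m - 58) := by rw [← pow_two, ← pow_add]; congr 1; omega

theorem pr_w2 {p m u Y C0 e2 q f w1 w2 : ℕ} (h : Par p m u Y C0) (g : Pr p m u Y C0 e2 q f w1 w2) :
    1 < w2 := by
  obtain ⟨h1, h2, h3⟩ := h.u2
  have hm := h.hm
  have e1 := pr_small h g
  have e2 : u ^ m = u ^ (m - 58) * u ^ 58 := by rw [← pow_add]; congr 1; omega
  have e3 : u ≤ u ^ 58 := Nat.le_self_pow (by norm_num) u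
  have e4 : 1 ≤ u ^ (m - 58) := Nat.one_le_pow _ _ (by omega)
  have := g.hw1
  have := g.hw
  nlinarith

theorem pr_f {p m u Y C0 e2 q f w1 w2 : ℕ} (h : Par p m u Y C0) (g : Pr p m u Y C0 e2 q f w1 w2) :
    0 < f ∧ u ^ (m * (p - 4) + 2 * m + 30) ≤ f ∧ f ≤ u ^ (m * (p - 4) + 2 * m + 35) := by
  obtain ⟨h1, h2, h3⟩ := h.u2
  have hm := h.hm
  have hp5 := h.hp5
  have hC0 := h.hC0
  have he0 : 0 < e2 := lt_of_lt_of_le (Nat.pow_pos (by omega)) g.he1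
  have hq0 : 0 < q := lt_of_lt_of_le (Nat.pow_pos (by omega)) g.hq1
  rcases pow_diff_le w1 w2 (4 * C0 * e2) p (q * f) (by positivity) g.hw g.hφ with ⟨a1, a2⟩ | h0
  swap
  · omega
  have ex : m * (p - 1) = m * (p - 4) + 3 * m := by
    obtain ⟨t, rfl⟩ : ∃ t, p = t + 4 := ⟨p - 4, by omega⟩
    simp; ring
  have b1 : u ^ (m * (p - 4) + 3 * m) ≤ w1 ^ (p - 1) := by
    rw [← ex, pow_mul]; exact Nat.pow_le_pow_left g.hw1 _
  have b2 : p * w1 ^ (p - 1) ≤ u ^ (m * (p - 4) + 3 * m + 1) := by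
    calc p * w1 ^ (p - 1) ≤ p * (2 * u ^ m) ^ (p - 1) := by have := g.hw2; gcongr
      _ = p * 2 ^ (p - 1) * u ^ (m * (p - 4) + 3 * m) := by rw [mul_pow, ← ex, pow_mul]; ring
      _ ≤ u * u ^ (m * (p - 4) + 3 * m) := by
        gcongr
        refine le_trans ?_ h.hu
        gcongr
        · norm_num
        · omega
      _ = _ := by rw [pow_succ]; ring
  have c1 : u ^ (m * (p - 4) + 2 * m + 30) ≤ f := by
    have : u ^ (m - 30) * u ^ (m * (p - 4) + 2 * m + 30) ≤ u ^ (m - 30) * f := by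
      calc _ = u ^ (m * (p - 4) + 3 * m) := by rw [← pow_add]; congr 1; omega
        _ ≤ q * f := b1.trans a2
        _ ≤ _ := by have := g.hq2; gcongr
    exact Nat.le_of_mul_le_mul_left this (Nat.pow_pos (by omega))
  refine ⟨lt_of_lt_of_le (Nat.pow_pos (by omega)) c1, c1, ?_⟩
  have : u ^ (m - 34) * f ≤ u ^ (m - 34) * u ^ (m * (p - 4) + 2 * m + 35) := by
    calc _ ≤ q * f := by have := g.hq1; gcongr
        _ ≤ u ^ (m * (p - 4) + 3 * m + 1) := a1.trans b2
        _ = _ := by rw [← pow_add]; congr 1; omega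
  exact Nat.le_of_mul_le_mul_left this (Nat.pow_pos (by omega))

def AbcAt (M u : ℕ) : Prop := ∀ a b c : ℕ, 0 < a → 0 < b → 0 < c →
      Nat.Coprime a b → Nat.Coprime a c → Nat.Coprime b c → a + b = c → rd (a * b * c) ≤ u ^ M →
      c ≤ u ^ 2 * rd (a * b * c)

theorem pr_abc {p m u Y C0 e2 q f w1 w2 : ℕ} (h : Par p m u Y C0) (g : Pr p m u Y C0 e2 q f w1 w2)
    (habc : AbcAt (m * (p - 4) + 6 * m) u) : u ^ (m * (p - 4) + 84) ≤ rd f := by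
  obtain ⟨h1, h2, h3⟩ := h.u2
  have hm := h.hm
  have hp5 := h.hp5
  have hC0 := h.hC0
  have he0 : 0 < e2 := lt_of_lt_of_le (Nat.pow_pos (by omega)) g.he1
  have hq0 : 0 < q := lt_of_lt_of_le (Nat.pow_pos (by omega)) g.hq1
  obtain ⟨hf0, hf1, hf2⟩ := pr_f h g
  have hw2 := pr_w2 h g
  have hw1 : 0 < w1 := by have := g.hw; omega
  have ex : m * p = m * (p - 4) + 4 * m := by
    obtain ⟨t, rfl⟩ : ∃ t, p = t + 4 := ⟨p - 4, by omega⟩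
    simp; ring
  have hsm := pr_small h g
  have hR : rd (w2 ^ p * (4 * C0 * e2 * (q * f)) * w1 ^ p) ≤ u ^ (4 * m - 86) * rd f := by
    calc _ ≤ rd w2 * ((4 * C0 * e2) * (q * rd f)) * rd w1 := by
          refine (rd_mul _ _ (by positivity) (by positivity)).trans ?_
          rw [rd_pow _ _ (by omega)]
          gcongr
          refine (rd_mul _ _ (by positivity) (by positivity)).trans ?_
          rw [rd_pow _ _ (by omega)]
          gcongr
          refine (rd_mul _ _ (by positivity) (by positivity)).trans ?_
          gcongr
          · exact rd_le _ (by positivity)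
          refine (rd_mul _ _ (by positivity) (by positivity)).trans ?_
          gcongr
          exact rd_le _ hq0
      _ ≤ (2 * u ^ m) * (u ^ (m - 58) * (u ^ (m - 30) * rd f)) * (2 * u ^ m) := by
          have := (rd_le w2 (by omega))
          have := (rd_le w1 (by omega))
          have := g.hw2
          have := g.hq2
          have := g.hw
          gcongr <;> omega
      _ = 4 * u ^ (4 * m - 88) * rd f := by
          have : u ^ (4 * m - 88) = u ^ m * u ^ (m - 58) * u ^ (m - 30) * u ^ m := by
            rw [← pow_add, ← pow_add, ← pow_add]; congr 1; omega
          rw [this]; ring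
      _ ≤ u ^ 2 * u ^ (4 * m - 88) * rd f := by gcongr; nlinarith
      _ = _ := by rw [← pow_add]; congr 2; omega
  have hcop := g.hcop
  have hcp : Nat.Coprime (w2 ^ p) (w1 ^ p) := (Nat.Coprime.pow p p hcop).symm
  have hb := habc (w2 ^ p) (4 * C0 * e2 * (q * f)) (w1 ^ p) (by positivity) (by positivity) (by positivity)
    (by rw [g.hφ] at hcp; simpa using hcp) hcp
    (by rw [g.hφ] at hcp ⊢; simpa using hcp.symm) g.hφ.symm
    (by
      refine hR.trans ?_
      calc _ ≤ u ^ (4 * m - 86) * u ^ (m * (p - 4) + 2 * m + 35) := by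
            gcongr; exact (rd_le f hf0).trans hf2
        _ = u ^ (m * (p - 4) + 6 * m - 51) := by rw [← pow_add]; congr 1; omega
        _ ≤ _ := Nat.pow_le_pow_right (by omega) (by omega))
  have h5 : u ^ (4 * m - 84) * u ^ (m * (p - 4) + 84) ≤ u ^ (4 * m - 84) * rd f := by
    calc _ = u ^ (m * p) := by rw [← pow_add, ex]; congr 1; omega
      _ ≤ w1 ^ p := by rw [pow_mul]; exact Nat.pow_le_pow_left g.hw1 _
      _ ≤ _ := hb
      _ ≤ u ^ 2 * (u ^ (4 * m - 86) * rd f) := by gcongr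
      _ = _ := by rw [← mul_assoc, ← pow_add]; congr 2; omega
  exact Nat.le_of_mul_le_mul_left h5 (Nat.pow_pos (by omega))

end

section

theorem pr_rad {p m u Y C0 e2 q f w1 w2 R : ℕ} (h : Par p m u Y C0) (g : Pr p m u Y C0 e2 q f w1 w2)
    (hR : (p = 5 ∧ R = 3) ∨ (7 ≤ p ∧ R = p - 4))
    (habc : AbcAt (m * (p - 4) + 6 * m) u)
    (hgood : ∀ B, B ^ 2 ∣ f → B ≤ u ^ 12 ∨ u ^ (2 * m - 70) < B) :
    Y * (4 * (2 * u ^ m) ^ R) < rd f := by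
  obtain ⟨h1, h2, h3⟩ := h.u2
  have hm := h.hm
  have hp5 := h.hp5
  obtain ⟨hf0, hf1, hf2⟩ := pr_f h g
  have hl : Y * (4 * (2 * u ^ m) ^ R) ≤ u ^ (m * R + 2) := by
    calc _ = Y * 2 ^ (R + 2) * u ^ (m * R) := by rw [mul_pow, ← pow_mul, pow_add]; ring
      _ ≤ u * u * u ^ (m * R) := by
        have := h.hYu
        have : 2 ^ (R + 2) ≤ 2 ^ (p + 4) := Nat.pow_le_pow_right (by norm_num) (by omega)
        gcongr; omega
      _ = _ := by ring
  refine lt_of_le_of_lt hl ?_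
  rcases hR with ⟨h5, hR⟩ | ⟨h7, hR⟩
  · subst h5 hR
    obtain ⟨a, b, hab, hsq⟩ := Nat.sq_mul_squarefree f
    have hb : b ≤ u ^ 12 := by
      rcases hgood b ⟨a, hab.symm⟩ with hb | hb
      · exact hb
      · exfalso
        have e1 : b ^ 2 ≤ f := Nat.le_of_dvd hf0 ⟨a, hab.symm⟩
        have e2 : (u ^ (2 * m - 70)) ^ 2 < b ^ 2 := Nat.pow_lt_pow_left hb (by norm_num)
        rw [← pow_mul] at e2
        have e3 : u ^ (m * (5 - 4) + 2 * m + 35) ≤ u ^ ((2 * m - 70) * 2) := Nat.pow_le_pow_right (by omega) (by omega)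
        omega
    have ha : a ≤ rd f := by
      have e1 : rd a = a := Nat.prod_primeFactors_of_squarefree hsq
      rw [← e1]
      unfold rd
      apply Finset.prod_le_prod_of_subset_of_one_le'
      · exact Nat.primeFactors_mono ⟨b ^ 2, by rw [← hab]; ring⟩ hf0.ne'
      · intro s hs _
        exact (Nat.prime_of_mem_primeFactors hs).one_lt.le
    have e4 : u ^ 24 * u ^ (m * 3 + 6) ≤ u ^ 24 * rd f := by
      calc _ = u ^ (m * (5 - 4) + 2 * m + 30) := by rw [← pow_add]; congr 1; omega
        _ ≤ f := hf1
        _ = b ^ 2 * a := hab.symm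
        _ ≤ (u ^ 12) ^ 2 * rd f := by gcongr
        _ = _ := by rw [← pow_mul]
    have e5 := Nat.le_of_mul_le_mul_left e4 (Nat.pow_pos (by omega))
    exact lt_of_lt_of_le (Nat.pow_lt_pow_right (by omega) (by omega)) e5
  · subst hR
    exact lt_of_lt_of_le (Nat.pow_lt_pow_right (by omega) (by omega)) (pr_abc h g habc)

def GoodD (p d : ℕ) : Prop := 0 < d ∧ Squarefree d ∧ ∀ (K : Type) [Field K] [NumberField K] (α : K),
    α ^ 2 = -(d : K) → Algebra.adjoin ℚ {α} = ⊤ → |NumberField.discr K| ≤ 4 * d ∧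
    ∃ H : Subgroup (ClassGroup (NumberField.RingOfIntegers K)), Nonempty (H ≃* Multiplicative (ZMod p × ZMod p))

theorem per_pair {p m u Y C0 e2 q f w1 w2 : ℕ} (h : Par p m u Y C0) (g : Pr p m u Y C0 e2 q f w1 w2)
    (habc : AbcAt (m * (p - 4) + 6 * m) u)
    (hgood : ∀ B, B ^ 2 ∣ f → B ≤ u ^ 12 ∨ u ^ (2 * m - 70) < B) :
    ∃ d n, GoodD p d ∧ n ∣ d ∧ n ∣ f ∧ (2 * u ^ m) ^ 2 ≤ n ∧ 4 * d ≤ u ^ (2 * (m * (p - 4)) + 6 * m + 38) := by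
  obtain ⟨h1, h2, h3⟩ := h.u2
  have hm := h.hm
  have hp5 := h.hp5
  obtain ⟨hf0, hf1, hf2⟩ := pr_f h g
  have hC0 := h.hC0
  have he0 : 0 < e2 := lt_of_lt_of_le (Nat.pow_pos (by omega)) g.he1
  have hq0 : 0 < q := lt_of_lt_of_le (Nat.pow_pos (by omega)) g.hq1
  obtain ⟨R, hR⟩ : ∃ R, (p = 5 ∧ R = 3) ∨ (7 ≤ p ∧ R = p - 4) := by
    rcases Nat.lt_or_ge p 7 with h7 | h7
    · refine ⟨3, Or.inl ⟨?_, rfl⟩⟩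
      by_contra h5
      have : p = 6 := by omega
      have h6 := h.hp
      rw [this] at h6
      norm_num at h6
    · exact ⟨_, Or.inr ⟨h7, rfl⟩⟩
  have hrad := pr_rad h g hR habc hgood
  obtain ⟨D, F, hDF, hD2, hrF, hodd⟩ := odd_part f hf0.ne'
  have hD0 : 0 < D := Nat.pos_of_ne_zero (by rintro rfl; simp at hDF; omega)
  have hF0 : 0 < F := Nat.pos_of_ne_zero (by rintro rfl; simp at hDF; omega)
  have hrdF : rd f ≤ F := Nat.le_of_dvd hF0 hrF
  have hDle : D ≤ u ^ (2 * m - 49) := by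
    have e1 : u ^ (m * (p - 4) + 84) * D ≤ u ^ (m * (p - 4) + 84) * u ^ (2 * m - 49) := by
      calc _ ≤ F * D := by
            have := (pr_abc h g habc).trans hrdF
            gcongr
        _ = f := by rw [hDF]; ring
        _ ≤ _ := hf2
        _ = _ := by rw [← pow_add]; congr 1; omega
    exact Nat.le_of_mul_le_mul_left e1 (Nat.pow_pos (by omega))
  have hYY : w1 * w2 < Y ^ Y := by
    refine lt_of_le_of_lt ?_ h.hYY
    calc w1 * w2 ≤ (2 * u ^ m) * (2 * u ^ m) := by
          have := g.hw2; have := g.hw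
          gcongr; omega
      _ = _ := by ring
  have hYu := h.hYu
  have hC0u := h.hC0u
  have hsm := pr_small h g
  have hCe : C0 * e2 ≤ u ^ (m - 58) := le_trans (by nlinarith) hsm
  have hpu : p ≤ u := by omega
  have hq1 := g.hq1
  have hq2 := g.hq2
  have hw1 := g.hw1
  have main : ∃ q1 q2, 0 < q1 ∧ 0 < q2 ∧ q1 * q2 = q ∧ p*(4*C0*e2)*(C0*e2*q1)<w1*(q2*D) ∧
      p*(4*C0*e2)*(q2*D)*Y<w1*(C0*e2*q1) := by
    rcases hgood D hD2 with hD | hD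
    · refine ⟨1, q, one_pos, hq0, one_mul _, ?_, ?_⟩
      · calc p*(4*C0*e2)*(C0*e2*1) ≤ u * u ^ (m - 58) * (u ^ (m - 58) * 1) := by gcongr
          _ = u ^ (2 * m - 115) := by
            rw [mul_one, mul_assoc, ← pow_add, mul_comm, ← pow_succ]; congr 1; omega
          _ < u ^ (2 * m - 34) := Nat.pow_lt_pow_right (by omega) (by omega)
          _ = u ^ m * (u ^ (m - 34) * 1) := by rw [mul_one, ← pow_add]; congr 1; omega
          _ ≤ w1 * (q * D) := by gcongr; omega
      · calc p*(4*C0*e2)*(q*D)*Y = (4 * p * q * D * Y) * (C0 * e2) := by ring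
          _ ≤ (u * u ^ (m - 30) * u ^ 12 * u) * (C0 * e2) := by gcongr
          _ = u ^ (m - 16) * (C0 * e2) := by
            congr 1
            rw [show m - 16 = 1 + (m - 30) + 12 + 1 by omega, pow_add, pow_add, pow_add, pow_one]
          _ < u ^ m * (C0 * e2) := by
            apply Nat.mul_lt_mul_of_pos_right _ (by positivity)
            exact Nat.pow_lt_pow_right (by omega) (by omega)
          _ ≤ w1 * (C0 * e2 * 1) := by rw [mul_one]; gcongr
    · refine ⟨q, 1, hq0, one_pos, mul_one _, ?_, ?_⟩
      · calc p*(4*C0*e2)*(C0*e2*q) ≤ u * u ^ (m - 58) * (u ^ (m - 58) * u ^ (m - 30)) := by gcongr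
          _ = u ^ (3 * m - 145) := by
            rw [show 3 * m - 145 = 1 + (m - 58) + ((m - 58) + (m - 30)) by omega, pow_add, pow_add, pow_add, pow_one]
          _ < u ^ (3 * m - 70) := Nat.pow_lt_pow_right (by omega) (by omega)
          _ = u ^ m * (1 * u ^ (2 * m - 70)) := by rw [one_mul, ← pow_add]; congr 1; omega
          _ ≤ w1 * (1 * D) := by gcongr
      · calc p*(4*C0*e2)*(1*D)*Y = (4 * p * D * Y) * (C0 * e2) := by ring
          _ ≤ (u * u ^ (2 * m - 49) * u) * (C0 * e2) := by gcongr
          _ = u ^ (2 * m - 47) * (C0 * e2) := by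
            congr 1
            rw [show 2 * m - 47 = 1 + (2 * m - 49) + 1 by omega, pow_add, pow_add, pow_one]
          _ < u ^ (2 * m - 34) * (C0 * e2) := by
            apply Nat.mul_lt_mul_of_pos_right _ (by positivity)
            exact Nat.pow_lt_pow_right (by omega) (by omega)
          _ = u ^ m * (C0 * e2 * u ^ (m - 34)) := by
            rw [show 2 * m - 34 = m + (m - 34) by omega, pow_add]; ring
          _ ≤ w1 * (C0 * e2 * q) := by gcongr
  obtain ⟨q1, q2, hq10, hq20, hqq, hb1, hb2⟩ := main
  obtain ⟨d, n, k1, k2, k3, k4, k5, k6, k7⟩ := good_d p Y C0 e2 q1 q2 f D F w1 w2 R (2 * u ^ m) h.hp hp5 h.hY hR h.hC hC0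
    he0 hq10 hq20 hf0 (pr_w2 h g) g.hw (by rw [hqq]; exact g.hφ) hDF hodd g.ho1 g.ho2 g.hcop g.hbig hYY hb1 hb2 g.hw2
    hrad
  refine ⟨d, n, ⟨k1, k2, k7⟩, k3, k4, ?_, ?_⟩
  · have e1 : Y * (4 * (2 * u ^ m) ^ R) < Y * n := lt_of_lt_of_le hrad k5
    have e2 := Nat.lt_of_mul_lt_mul_left e1
    have e3 : (2 * u ^ m) ^ 2 ≤ (2 * u ^ m) ^ R := Nat.pow_le_pow_right (by positivity) (by omega)
    omega
  · have ex : m * p = m * (p - 4) + 4 * m := by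
      obtain ⟨t, rfl⟩ : ∃ t, p = t + 4 := ⟨p - 4, by omega⟩
      simp; ring
    have e1 : w1 ^ p ≤ u * u ^ (m * p) := by
      calc w1 ^ p ≤ (2 * u ^ m) ^ p := Nat.pow_le_pow_left g.hw2 _
        _ = 2 ^ p * u ^ (m * p) := by rw [mul_pow, pow_mul]
        _ ≤ _ := by
          gcongr
          refine le_trans ?_ h1
          exact Nat.pow_le_pow_right (by norm_num) (by omega)
    calc 4 * d ≤ 4 * (Y * f * w1 ^ p) := by gcongr
      _ ≤ u * (u * u ^ (m * (p - 4) + 2 * m + 35) * (u * u ^ (m * p))) := by gcongr; omega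
      _ = _ := by
        rw [ex]
        generalize m * (p - 4) = A
        ring

end

section

theorem pr_phi {p m u Y C0 e2 q f w1 w2 : ℕ} (h : Par p m u Y C0) (g : Pr p m u Y C0 e2 q f w1 w2) :
    0 < q * f ∧ q * f ≤ u ^ (m * (p - 4) + 6 * m) := by
  obtain ⟨h1, h2, h3⟩ := h.u2
  have hm := h.hm
  have hq0 : 0 < q := lt_of_lt_of_le (Nat.pow_pos (by omega)) g.hq1
  obtain ⟨hf0, hf1, hf2⟩ := pr_f h g
  refine ⟨by positivity, ?_⟩
  calc q * f ≤ u ^ (m - 30) * u ^ (m * (p - 4) + 2 * m + 35) := by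
        have := g.hq2; gcongr
    _ = u ^ (m - 30 + (m * (p - 4) + 2 * m + 35)) := by rw [← pow_add]
    _ ≤ _ := Nat.pow_le_pow_right (by omega) (by omega)

theorem supply_pairs (p m : ℕ) (hp : p.Prime) (hp5 : 5 ≤ p) (hm : 200 ≤ m) : ∃ u0 : ℕ, ∀ u ≥ u0,
    ∃ (Y C0 : ℕ) (S : Finset (ℕ × ℕ)), Par p m u Y C0 ∧ u ^ (2 * m - 67) ≤ S.card ∧
      ∀ w ∈ S, Odd (phi p w.1 w.2) ∧ ∃ e2 q f, Pr p m u Y C0 e2 q f w.1 w.2 ∧ phi p w.1 w.2 = q * f := by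
  obtain ⟨u1, H1⟩ := supplyQ p hp (m - 30) (by omega)
  obtain ⟨u2, H2⟩ := primesE (m - 60) (by omega)
  obtain ⟨u3, H3⟩ := paramsY m
  obtain ⟨u4, H4⟩ := tau_ev (m * (p - 4) + 6 * m)
  refine ⟨max (max u1 u2) (max (max u3 u4) (p * 2 ^ (p + 4))), fun u hu => ?_⟩
  simp only [ge_iff_le, max_le_iff] at hu
  obtain ⟨⟨hu1, hu2⟩, ⟨hu3, hu4⟩, hu5⟩ := hu
  obtain ⟨Q, hQc, hQ⟩ := H1 u hu1
  obtain ⟨E, hEc, hE⟩ := H2 u hu2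
  obtain ⟨Y, C0, hY, hYlog, hC0, hC0u, hC, hCs, hYY⟩ := H3 u hu3
  have hYu : Y ≤ u := by
    have := hYlog.trans (Real.log_le_self (Nat.cast_nonneg u))
    exact_mod_cast this
  have hPar : Par p m u Y C0 := ⟨hp, hp5, hm, hu5, hY, hYu, hC0, hC0u, hC, hYY⟩
  obtain ⟨v1, v2, v3⟩ := hPar.u2
  set Tr := Q ×ˢ E ×ˢ Finset.range (u ^ 28) with hTr
  have hex : ∀ t : ℕ × ℕ × ℕ, ∃ w1 : ℕ, t ∈ Tr →
      (u ^ m + 2 * (2 * C0 * t.1) * t.2.2 ≤ w1 ∧ w1 < u ^ m + 2 * (2 * C0 * t.1) * t.2.2 + 2 * (2 * C0 * t.1)) ∧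
      4 * C0 * t.2.1 ≤ w1 ∧
      (Odd (phi p w1 (w1 - 4 * C0 * t.2.1)) ∧ ∃ f, Pr p m u Y C0 t.2.1 t.1 f w1 (w1 - 4 * C0 * t.2.1) ∧
        phi p w1 (w1 - 4 * C0 * t.2.1) = t.1 * f) := by
    rintro ⟨q, e, j⟩
    by_cases ht : (q, e, j) ∈ Tr
    swap
    · exact ⟨0, fun h => absurd h ht⟩
    simp only [hTr, Finset.mem_product, Finset.mem_range] at ht
    obtain ⟨hq, he, hj⟩ := ht
    obtain ⟨q1, q2, q3⟩ := hQ q hq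
    obtain ⟨e1, e2, e3⟩ := hE e he
    rw [show m - 30 - 4 = m - 34 by omega] at q1
    rw [show m - 60 - 1 = m - 61 by omega] at e2
    have hq0 : 0 < q := lt_of_lt_of_le (Nat.pow_pos (by omega)) q1
    have heu : u < e := by
      calc u < u ^ 2 := by nlinarith
        _ ≤ u ^ (m - 61) := Nat.pow_le_pow_right (by omega) (by omega)
        _ ≤ e := e2
    have hqo : Nat.Coprime (2 * C0) q := by
      apply Nat.coprime_of_dvd
      intro s hs h1 h2
      obtain ⟨a1, a2, a3⟩ := q3 s hs h2
      rcases (Nat.Prime.dvd_mul hs).1 h1 with h | h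
      · rw [(Nat.prime_dvd_prime_iff_eq hs Nat.prime_two).1 h] at a1
        have : ((1 : ℕ) : ZMod p) = 0 := by
          push_cast at a1 ⊢
          linear_combination a1
        rw [ZMod.natCast_eq_zero_iff] at this
        exact hp.one_lt.ne' (Nat.dvd_one.1 this)
      · have := hCs s hs h
        have : (s : ℝ) ≤ Y := by exact_mod_cast this
        linarith
    have heq : ¬ e ∣ q := by
      intro h
      have := (q3 e e1 h).2.1
      omega
    have heM : ¬ e ∣ 2 * C0 * q := by
      intro h
      rcases (Nat.Prime.dvd_mul e1).1 h with h | h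
      · rcases (Nat.Prime.dvd_mul e1).1 h with h | h
        · have := Nat.le_of_dvd (by norm_num) h; omega
        · have := Nat.le_of_dvd hC0 h; omega
      · exact heq h
    obtain ⟨w1, a1, a2, a3, a4, a5⟩ := pick_w p q C0 e (u ^ m + 2 * (2 * C0 * q) * j) hp hq0 hC0
      (fun s hs hd => (q3 s hs hd).1) hqo e1 heM
    have hT : u ^ m ≤ w1 := by omega
    have hsm : 4 * C0 * e ≤ u ^ (m - 58) := by
      calc 4 * C0 * e ≤ u * u * u ^ (m - 60) := by gcongr; omega
        _ = u ^ (m - 58) := by rw [← pow_two, ← pow_add]; congr 1; omega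
    have hle : 4 * C0 * e ≤ w1 :=
      hsm.trans ((Nat.pow_le_pow_right (by omega) (by omega)).trans hT)
    obtain ⟨b1, b2, b3, b4, b5, b6, b7⟩ := pair_props p Y C0 e q w1 (w1 - 4 * C0 * e) hp hp5 hC0 hC hqo e1 heq
      (by omega) a3 a4 a5
    refine ⟨w1, fun _ => ⟨⟨a1, a2⟩, hle, b3, ?_⟩⟩
    obtain ⟨f, hf⟩ := b1
    refine ⟨f, ⟨q1, q2, e2, e3, hT, ?_, (Nat.sub_add_cancel hle).symm, by rw [← hf]; exact b2, ?_, b4, b5, b6, b7⟩, hf⟩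
    · have : 2 * (2 * C0 * q) * j + 2 * (2 * C0 * q) ≤ u ^ m := by
        calc _ = 4 * C0 * q * (j + 1) := by ring
          _ ≤ u * u * u ^ (m - 30) * u ^ 28 := by
            have hj1 : j + 1 ≤ u ^ 28 := hj
            have h4 : 4 ≤ u := by omega
            gcongr
          _ = u ^ m := by rw [← pow_two, ← pow_add, ← pow_add]; congr 1; omega
      omega
    · rw [hf] at b3
      exact (Nat.odd_mul.1 b3).2
  choose g hg using hex
  set G : ℕ × ℕ × ℕ → ℕ × ℕ := fun t => (g t, g t - 4 * C0 * t.2.1) with hG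
  refine ⟨Y, C0, Tr.image G, hPar, ?_, ?_⟩
  · have h1 : Tr.card ≤ u * (Tr.image G).card := by
      apply Finset.card_le_mul_card_image
      intro a ha
      obtain ⟨t0, ht0, hta⟩ := Finset.mem_image.1 ha
      obtain ⟨-, -, -, f, hPr, hf⟩ := hg t0 ht0
      have hph : phi p (g t0) (g t0 - 4 * C0 * t0.2.1) = phi p a.1 a.2 := by rw [← hta]
      obtain ⟨k1, k2⟩ := pr_phi hPar hPr
      rw [← hf, hph] at k1 k2
      refine le_trans ?_ (H4 u hu4 _ k1.ne' k2)
      apply Finset.card_le_card_of_injOn (fun t => t.1)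
      · intro t ht
        rw [Finset.mem_coe, Finset.mem_filter] at ht
        obtain ⟨ht, hGt⟩ := ht
        obtain ⟨-, -, -, f', hPr', hf'⟩ := hg t ht
        have hph : phi p (g t) (g t - 4 * C0 * t.2.1) = phi p a.1 a.2 := by rw [← hGt]
        simp only [Finset.mem_coe, Nat.mem_divisors]
        exact ⟨⟨f', by rw [← hph, hf']⟩, k1.ne'⟩
      · intro t ht t' ht' htt
        rw [Finset.mem_coe, Finset.mem_filter] at ht ht'
        obtain ⟨ht, hGt⟩ := ht
        obtain ⟨ht', hGt'⟩ := ht'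
        obtain ⟨⟨x1, x2⟩, x3, -, f1, hP1, -⟩ := hg t ht
        obtain ⟨⟨y1, y2⟩, y3, -, -⟩ := hg t' ht'
        have hGG := hGt.trans hGt'.symm
        simp only [hG, Prod.mk.injEq] at hGG
        obtain ⟨z1, z2⟩ := hGG
        obtain ⟨q, e, j⟩ := t
        obtain ⟨q', e', j'⟩ := t'
        simp only at htt
        subst htt
        dsimp only at *
        rw [← z1] at y1 y2 y3 z2
        have hee : C0 * e = C0 * e' := by
          have e1 : 4 * C0 * e = 4 * (C0 * e) := by ring
          have e2 : 4 * C0 * e' = 4 * (C0 * e') := by ring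
          omega
        have hee := Nat.eq_of_mul_eq_mul_left hC0 hee
        have hjj : j = j' := by
          set M := 2 * (2 * C0 * q)
          rcases lt_trichotomy j j' with h | h | h
          · have : M * (j + 1) ≤ M * j' := Nat.mul_le_mul_left _ h
            rw [mul_add] at this; omega
          · exact h
          · have : M * (j' + 1) ≤ M * j := Nat.mul_le_mul_left _ h
            rw [mul_add] at this; omega
        rw [hee, hjj]
    have h2 : u * u ^ (2 * m - 67) ≤ Tr.card := by
      rw [hTr, Finset.card_product, Finset.card_product, Finset.card_range]
      calc _ = u ^ (m - 30 - 3) * (u ^ (m - 60 - 1) * u ^ 28) := by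
            rw [← pow_add, ← pow_add, mul_comm, ← pow_succ]; congr 1; omega
        _ ≤ _ := by gcongr
    exact Nat.le_of_mul_le_mul_left (h2.trans h1) (by omega)
  · intro w hw
    obtain ⟨t, ht, rfl⟩ := Finset.mem_image.1 hw
    obtain ⟨-, -, h1, f, h2, h3⟩ := hg t ht
    exact ⟨h1, _, _, f, h2, h3⟩

end

section

theorem lat_hyp {p m u Y C0 : ℕ} (h : Par p m u Y C0) (S : Finset (ℕ × ℕ))
    (hS : ∀ w ∈ S, ∃ e2 q f, Pr p m u Y C0 e2 q f w.1 w.2 ∧ phi p w.1 w.2 = q * f)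
    (n : ℕ) (hn : 0 < n) (hd : ∀ w ∈ S, n ∣ phi p w.1 w.2) (lam : ℝ) (hl : 1 / (u : ℝ) ^ 58 ≤ lam)
    (hr : Nat.card {x : (ZMod n)ˣ // x ^ p = 1} ≤ u) :
    (S.card : ℝ) ≤ u * (lam * (2 * u ^ m) ^ 2 / n + 1) := by
  obtain ⟨h1, h2, h3⟩ := h.u2
  have hm := h.hm
  have hu0 : (0 : ℝ) < u := by exact_mod_cast (by omega : 0 < u)
  have hl0 : 0 ≤ lam := le_trans (by positivity) hl
  have := lattice S p n (2 * u ^ m) h.hp.ne_zero lam hn hl0 ?_ ?_ ?_ ?_ ?_ ?_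
  · refine this.trans ?_
    have hr' : (Nat.card {x : (ZMod n)ˣ // x ^ p = 1} : ℝ) ≤ u := by exact_mod_cast hr
    push_cast
    gcongr
  · intro w hw
    obtain ⟨e2, q, f, hP, -⟩ := hS w hw
    exact hP.hcop
  · intro w hw
    obtain ⟨e2, q, f, hP, -⟩ := hS w hw
    exact lt_of_lt_of_le (Nat.pow_pos (by omega)) hP.hw1
  · intro w hw
    obtain ⟨e2, q, f, hP, -⟩ := hS w hw
    have := hP.hw
    omega
  · intro w hw
    obtain ⟨e2, q, f, hP, -⟩ := hS w hw
    exact hP.hw2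
  · intro w hw
    obtain ⟨e2, q, f, hP, -⟩ := hS w hw
    have e1 : ((w.1 : ℝ) - w.2) = ((4 * C0 * e2 : ℕ) : ℝ) := by
      have := hP.hw
      rw [this]; push_cast; ring
    have e2' : ((4 * C0 * e2 : ℕ) : ℝ) ≤ (u : ℝ) ^ (m - 58) := by exact_mod_cast pr_small h hP
    have e3 : (u : ℝ) ^ m ≤ w.1 := by exact_mod_cast hP.hw1
    rw [e1]
    calc _ ≤ (u : ℝ) ^ (m - 58) := e2'
      _ = 1 / (u : ℝ) ^ 58 * u ^ m := by
        rw [show m = (m - 58) + 58 by omega, pow_add]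
        field_simp
        simp
      _ ≤ lam * w.1 := by gcongr
  · intro w hw
    obtain ⟨e2, q, f, hP, hf⟩ := hS w hw
    have e1 : (phi p w.1 w.2 : ℤ) ∣ (w.1 : ℤ) ^ p - (w.2 : ℤ) ^ p := by
      refine ⟨((4 * C0 * e2 : ℕ) : ℤ), ?_⟩
      have := hP.hφ
      rw [← hf] at this
      zify at this
      push_cast
      linear_combination this
    exact (Int.natCast_dvd_natCast.2 (hd w hw)).trans e1

open Classical in
theorem good_pairs {p m u Y C0 : ℕ} (h : Par p m u Y C0) (S : Finset (ℕ × ℕ)) (hc : u ^ (2 * m - 67) ≤ S.card)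
    (hS : ∀ w ∈ S, Odd (phi p w.1 w.2) ∧ ∃ e2 q f, Pr p m u Y C0 e2 q f w.1 w.2 ∧ phi p w.1 w.2 = q * f)
    (hr : ∀ n : ℕ, Odd n → n ≤ u ^ (m * (p - 4) + 6 * m) → Nat.card {x : (ZMod n)ˣ // x ^ p = 1} ≤ u) :
    u ^ (2 * m - 68) ≤
      (S.filter (fun w => ∀ B, B ^ 2 ∣ phi p w.1 w.2 → B ≤ u ^ 12 ∨ u ^ (2 * m - 70) < B)).card := by
  classical
  obtain ⟨h1, h2, h3⟩ := h.u2
  have hm := h.hm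
  have hu0 : (0 : ℝ) < u := by exact_mod_cast (by omega : 0 < u)
  set P : ℕ × ℕ → Prop := fun w => ∀ B, B ^ 2 ∣ phi p w.1 w.2 → B ≤ u ^ 12 ∨ u ^ (2 * m - 70) < B with hP
  have hsplit := Finset.card_filter_add_card_filter_not (s := S) P
  set SB : ℕ → Finset (ℕ × ℕ) := fun B => S.filter (fun w => B ^ 2 ∣ phi p w.1 w.2) with hSB
  have hsub : S.filter (fun w => ¬ P w) ⊆ (Finset.Ioc (u ^ 12) (u ^ (2 * m - 70))).biUnion SB := by
    intro w hw
    rw [Finset.mem_filter] at hw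
    obtain ⟨hw, hnP⟩ := hw
    simp only [hP] at hnP
    push Not at hnP
    obtain ⟨B, b1, b2, b3⟩ := hnP
    exact Finset.mem_biUnion.2 ⟨B, Finset.mem_Ioc.2 ⟨b2, b3⟩, Finset.mem_filter.2 ⟨hw, b1⟩⟩
  have hbB : ∀ B ∈ Finset.Ioc (u ^ 12) (u ^ (2 * m - 70)), ((SB B).card : ℝ) ≤
      u * (4 * ((u : ℝ) ^ (2 * m) / u ^ 58) * ((B : ℝ) ^ 2)⁻¹ + 1) := by
    intro B hB
    have hB0 : 0 < B := by have := (Finset.mem_Ioc.1 hB).1; omega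
    rcases (SB B).eq_empty_or_nonempty with he | ⟨w, hw⟩
    · rw [he]; simp; positivity
    · rw [Finset.mem_filter] at hw
      obtain ⟨hw, hdv⟩ := hw
      obtain ⟨ho, e2, q, f, hPr, hf⟩ := hS w hw
      have k := pr_phi h hPr
      rw [← hf] at k
      have := lat_hyp h (SB B) (fun w hw => (hS w (Finset.mem_filter.1 hw).1).2) (B ^ 2) (by positivity)
        (fun w hw => (Finset.mem_filter.1 hw).2) (1 / (u : ℝ) ^ 58) le_rfl
        (hr _ (ho.of_dvd_nat hdv) ((Nat.le_of_dvd k.1 hdv).trans k.2))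
      refine this.trans (le_of_eq ?_)
      rw [mul_comm 2 m, pow_mul]
      push_cast
      have : (B : ℝ) ≠ 0 := by positivity
      field_simp
      ring
  have hbad : ((S.filter (fun w => ¬ P w)).card : ℝ) ≤ 5 * u * u ^ (2 * m - 70) := by
    have e1 : ((S.filter (fun w => ¬ P w)).card : ℝ) ≤
        ∑ B ∈ Finset.Ioc (u ^ 12) (u ^ (2 * m - 70)), ((SB B).card : ℝ) := by
      exact_mod_cast (Finset.card_le_card hsub).trans Finset.card_biUnion_le
    have e2 := e1.trans (Finset.sum_le_sum hbB)
    rw [← Finset.mul_sum, Finset.sum_add_distrib, ← Finset.mul_sum, Finset.sum_const, Nat.card_Ioc] at e2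
    have e3 := sum_Ioc_inv_sq_le_sub (α := ℝ) (k := u ^ 12) (n := u ^ (2 * m - 70)) (by positivity)
      (Nat.pow_le_pow_right (by omega) (by omega))
    have e4 : ∑ B ∈ Finset.Ioc (u ^ 12) (u ^ (2 * m - 70)), ((B : ℝ) ^ 2)⁻¹ ≤ ((u : ℝ) ^ 12)⁻¹ := by
      refine e3.trans ?_
      push_cast
      have : 0 ≤ ((u : ℝ) ^ (2 * m - 70))⁻¹ := by positivity
      linarith
    have e5 : (((u ^ (2 * m - 70) - u ^ 12 : ℕ)) • (1 : ℝ)) ≤ (u : ℝ) ^ (2 * m - 70) := by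
      rw [nsmul_eq_mul, mul_one]
      exact_mod_cast Nat.sub_le _ _
    refine e2.trans ?_
    calc _ ≤ (u : ℝ) * (4 * ((u : ℝ) ^ (2 * m) / u ^ 58) * ((u : ℝ) ^ 12)⁻¹ + u ^ (2 * m - 70)) := by gcongr
      _ = _ := by
        have : (u : ℝ) ^ (2 * m) = u ^ (2 * m - 70) * u ^ 70 := by rw [← pow_add]; congr 1; omega
        rw [this]
        field_simp
        ring
  have hbad' : (S.filter (fun w => ¬ P w)).card ≤ 5 * u * u ^ (2 * m - 70) := by exact_mod_cast hbad
  have e6 : u ^ (2 * m - 67) = u ^ 3 * u ^ (2 * m - 70) := by rw [← pow_add]; congr 1; omega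
  have e7 : u ^ (2 * m - 68) = u ^ 2 * u ^ (2 * m - 70) := by rw [← pow_add]; congr 1; omega
  have e8 : (u ^ 2 + 5 * u) * u ^ (2 * m - 70) ≤ u ^ 3 * u ^ (2 * m - 70) := by
    gcongr
    nlinarith
  rw [add_mul] at e8
  have e9 : u ^ (2 * m - 68) ≤ (S.filter P).card := by omega
  convert e9

theorem count_d (habc : ABCConjecture) (p m : ℕ) (hp : p.Prime) (hp5 : 5 ≤ p) (hm : 200 ≤ m) : ∃ u0 : ℕ, ∀ u ≥ u0,
    ∃ Ds : Finset ℕ, u ^ (2 * m - 71) ≤ Ds.card ∧ ∀ d ∈ Ds, GoodD p d ∧ 4 * d ≤ u ^ (2 * (m * (p - 4)) + 6 * m + 38) := by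
  classical
  obtain ⟨u1, H1⟩ := supply_pairs p m hp hp5 hm
  obtain ⟨u2, H2⟩ := roots_ev p hp hp5 (m * (p - 4) + 6 * m)
  obtain ⟨u3, H3⟩ := tau_ev (2 * (m * (p - 4)) + 6 * m + 38)
  obtain ⟨u4, H4⟩ := abc_ev habc (m * (p - 4) + 6 * m) (by omega)
  refine ⟨max (max u1 u2) (max u3 u4), fun u hu => ?_⟩
  simp only [ge_iff_le, max_le_iff] at hu
  obtain ⟨⟨hu1, hu2⟩, hu3, hu4⟩ := hu
  obtain ⟨Y, C0, S, h, hSc, hS⟩ := H1 u hu1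
  obtain ⟨h1, h2, h3⟩ := h.u2
  have hroot := H2 u hu2
  have hg := good_pairs h S hSc hS hroot
  set S' := S.filter (fun w => ∀ B, B ^ 2 ∣ phi p w.1 w.2 → B ≤ u ^ 12 ∨ u ^ (2 * m - 70) < B) with hS'
  have hex : ∀ w : ℕ × ℕ, ∃ d n : ℕ, w ∈ S' → GoodD p d ∧ n ∣ d ∧ n ∣ phi p w.1 w.2 ∧ (2 * u ^ m) ^ 2 ≤ n ∧
      4 * d ≤ u ^ (2 * (m * (p - 4)) + 6 * m + 38) := by
    intro w
    by_cases hw : w ∈ S'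
    · have hw' := Finset.mem_filter.1 hw
      obtain ⟨-, e2, q, f, hPr, hf⟩ := hS w hw'.1
      obtain ⟨d, n, k1, k2, k3, k4, k5⟩ := per_pair h hPr (H4 u hu4)
        (fun B hB => hw'.2 B (by rw [hf]; exact hB.mul_left _))
      exact ⟨d, n, fun _ => ⟨k1, k2, by rw [hf]; exact k3.mul_left _, k4, k5⟩⟩
    · exact ⟨0, 0, fun h => absurd h hw⟩
  choose dd nn hdn using hex
  refine ⟨S'.image dd, ?_, ?_⟩
  · have hcard : S'.card ≤ u ^ 3 * (S'.image dd).card := by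
      apply Finset.card_le_mul_card_image
      intro d hd
      obtain ⟨w0, hw0, hw0d⟩ := Finset.mem_image.1 hd
      obtain ⟨k1, -, -, -, k5⟩ := hdn w0 hw0
      rw [hw0d] at k1 k5
      have hsub : S'.filter (fun w => dd w = d) ⊆
          d.divisors.biUnion (fun n => S'.filter (fun w => dd w = d ∧ nn w = n)) := by
        intro w hw
        rw [Finset.mem_filter] at hw
        obtain ⟨hw, hwd⟩ := hw
        obtain ⟨-, l2, -, -, -⟩ := hdn w hw
        rw [hwd] at l2
        exact Finset.mem_biUnion.2 ⟨nn w, Nat.mem_divisors.2 ⟨l2, k1.1.ne'⟩, Finset.mem_filter.2 ⟨hw, hwd, rfl⟩⟩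
      have hfib : ∀ n ∈ d.divisors, (S'.filter (fun w => dd w = d ∧ nn w = n)).card ≤ 2 * u := by
        intro n _
        rcases (S'.filter (fun w => dd w = d ∧ nn w = n)).eq_empty_or_nonempty with he | ⟨w, hw⟩
        · rw [he]; simp
        · rw [Finset.mem_filter] at hw
          obtain ⟨hw, hwd, hwn⟩ := hw
          obtain ⟨-, -, l3, l4, -⟩ := hdn w hw
          rw [hwn] at l3 l4
          obtain ⟨ho, e2, q, f, hPr, hf⟩ := hS w (Finset.mem_filter.1 hw).1
          have k := pr_phi h hPr
          rw [← hf] at k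
          have hn0 : 0 < n := lt_of_lt_of_le (by positivity) l4
          have hu1 : (1 : ℝ) ≤ u := by exact_mod_cast (by omega : 1 ≤ u)
          have := lat_hyp h (S'.filter (fun w => dd w = d ∧ nn w = n))
            (fun w hw => (hS w (Finset.mem_filter.1 (Finset.mem_filter.1 hw).1).1).2) n hn0
            (fun w hw => by
              rw [Finset.mem_filter] at hw
              have := (hdn w hw.1).2.2.1
              rwa [hw.2.2] at this) 1
            (by rw [div_le_one (by positivity)]; exact one_le_pow₀ hu1)
            (hroot _ (ho.of_dvd_nat l3) ((Nat.le_of_dvd k.1 l3).trans k.2))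
          have l4' : (2 * (u : ℝ) ^ m) ^ 2 ≤ n := by exact_mod_cast l4
          have hn0' : (0 : ℝ) < n := by exact_mod_cast hn0
          have l5 : 1 * (2 * (u : ℝ) ^ m) ^ 2 / n ≤ 1 := by
            rw [div_le_one hn0']; linarith
          have l6 : ((S'.filter (fun w => dd w = d ∧ nn w = n)).card : ℝ) ≤ 2 * u := by
            refine this.trans ?_
            nlinarith
          exact_mod_cast l6
      calc _ ≤ _ := Finset.card_le_card hsub
        _ ≤ d.divisors.card * (2 * u) := Finset.card_biUnion_le_card_mul _ _ _ hfib
        _ ≤ u * (2 * u) := by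
          gcongr
          exact H3 u hu3 d k1.1.ne' (by omega)
        _ ≤ u ^ 3 := by
          rw [pow_succ, pow_two]
          nlinarith [Nat.mul_le_mul_left (u * u) (by omega : 2 ≤ u)]
    have e1 : u ^ 3 * u ^ (2 * m - 71) ≤ S'.card := by
      refine le_trans (le_of_eq ?_) hg
      rw [← pow_add]; congr 1; omega
    exact Nat.le_of_mul_le_mul_left (e1.trans hcard) (by positivity)
  · intro d hd
    obtain ⟨w0, hw0, rfl⟩ := Finset.mem_image.1 hd
    obtain ⟨k1, -, -, -, k5⟩ := hdn w0 hw0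
    exact ⟨k1, k5⟩

end

theorem stmt_0 (habc : ABCConjecture) (p : ℕ) (hp : p.Prime) (hp5 : 5 ≤ p)
    (ε : ℝ) (hε0 : 0 < ε) (hε1 : ε < 1 / ((p : ℝ) - 1)) :
    ∃ c : ℝ, 0 < c ∧ ∃ X₀ : ℝ, ∀ X : ℝ, X₀ ≤ X →
      c * X ^ ((1 : ℝ) / ((p : ℝ) - 1) - ε) ≤
        ({d : ℕ | 0 < d ∧ Squarefree d ∧
            ∀ (K : Type) [Field K] [NumberField K] (α : K),
              α ^ 2 = -(d : K) → Algebra.adjoin ℚ {α} = ⊤ →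
                |(NumberField.discr K : ℝ)| ≤ X ∧
                ∃ H : Subgroup (ClassGroup (NumberField.RingOfIntegers K)),
                  Nonempty (H ≃* Multiplicative (ZMod p × ZMod p))}.ncard : ℝ) := by
  set m : ℕ := max 200 ⌈55 / ε⌉₊ with hm
  have hm200 : 200 ≤ m := le_max_left _ _
  have hmε : 55 / ε ≤ m := (Nat.le_ceil _).trans (by exact_mod_cast le_max_right _ _)
  obtain ⟨u0, H⟩ := count_d habc p m hp hp5 hm200
  set E := 2 * (m * (p - 4)) + 6 * m + 38 with hE
  have hE0 : 0 < E := by omega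
  have hp5' : (5 : ℝ) ≤ p := by exact_mod_cast hp5
  have hm200' : (200 : ℝ) ≤ m := by exact_mod_cast hm200
  have hEr : (E : ℝ) = 2 * m * (p - 1) + 38 := by
    rw [hE]; push_cast [Nat.cast_sub (by omega : 4 ≤ p)]; ring
  have hLr : ((2 * m - 71 : ℕ) : ℝ) = 2 * m - 71 := by
    push_cast [Nat.cast_sub (by omega : 71 ≤ 2 * m)]; ring
  have hexp : (1 : ℝ) / ((p : ℝ) - 1) - ε ≤ ((2 * m - 71 : ℕ) : ℝ) / E := by
    rw [hLr, hEr]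
    have hP : (4 : ℝ) ≤ p - 1 := by linarith
    generalize (p : ℝ) - 1 = P at hP
    have h55 : 55 ≤ m * ε := by rwa [div_le_iff₀ hε0] at hmε
    have hE1 : 0 < 2 * m * P + 38 := by positivity
    rw [sub_le_iff_le_add, div_le_iff₀ (by linarith)]
    have e1 : ((2 * (m : ℝ) - 71) / (2 * m * P + 38) + ε) * P =
      ((2 * (m : ℝ) - 71) * P + ε * P * (2 * m * P + 38)) / (2 * m * P + 38) := by
      field_simp
    rw [e1, le_div_iff₀ hE1]
    have e2 : 55 * (2 * P * P) ≤ m * ε * (2 * P * P) := by gcongr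
    have e3 : 0 ≤ ε * P * 38 := by positivity
    nlinarith
  refine ⟨(1 / 2) ^ (2 * m - 71), by positivity, max 1 (((u0 : ℝ) + 1) ^ E), fun X hX => ?_⟩
  have hX1 : 1 ≤ X := (le_max_left _ _).trans hX
  have hX2 : ((u0 : ℝ) + 1) ^ E ≤ X := (le_max_right _ _).trans hX
  set x : ℝ := X ^ ((1 : ℝ) / E) with hx
  have hx1 : 1 ≤ x := Real.one_le_rpow hX1 (by positivity)
  have hxE : x ^ E = X := by
    rw [hx, one_div]
    exact Real.rpow_inv_natCast_pow (by linarith) hE0.ne'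
  have hxu : (u0 : ℝ) + 1 ≤ x := by
    rw [← hxE] at hX2
    exact le_of_pow_le_pow_left₀ hE0.ne' (by linarith) hX2
  set u := ⌊x⌋₊ with hu
  have hux : (u : ℝ) ≤ x := Nat.floor_le (by linarith)
  have hux2 : x < u + 1 := Nat.lt_floor_add_one _
  have hu1 : 1 ≤ u := Nat.le_floor (by simpa using hx1)
  have hu1' : (1 : ℝ) ≤ u := by exact_mod_cast hu1
  have huu0 : u0 ≤ u := Nat.le_floor (by linarith)
  obtain ⟨Ds, hc, hD⟩ := H u huu0
  have hsub : (Ds : Set ℕ) ⊆ {d : ℕ | 0 < d ∧ Squarefree d ∧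
            ∀ (K : Type) [Field K] [NumberField K] (α : K),
              α ^ 2 = -(d : K) → Algebra.adjoin ℚ {α} = ⊤ →
                |(NumberField.discr K : ℝ)| ≤ X ∧
                ∃ H : Subgroup (ClassGroup (NumberField.RingOfIntegers K)),
                  Nonempty (H ≃* Multiplicative (ZMod p × ZMod p))} := by
    intro d hd
    obtain ⟨⟨k1, k2, k3⟩, k4⟩ := hD d hd
    refine ⟨k1, k2, ?_⟩
    intro K _ _ α h1 h2
    obtain ⟨l1, l2⟩ := k3 K α h1 h2
    refine ⟨?_, l2⟩
    have e1 : |(NumberField.discr K : ℝ)| ≤ 4 * d := by exact_mod_cast l1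
    have e2 : (4 * d : ℝ) ≤ (u : ℝ) ^ E := by exact_mod_cast k4
    have e3 : (u : ℝ) ^ E ≤ x ^ E := by gcongr
    linarith
  have hfin := dset_finite (fun K _ _ => ∃ H : Subgroup (ClassGroup (NumberField.RingOfIntegers K)),
                  Nonempty (H ≃* Multiplicative (ZMod p × ZMod p))) X
  have hn := Set.ncard_le_ncard hsub hfin
  rw [Set.ncard_coe_finset] at hn
  have hn' := hc.trans hn
  have hn'' : ((u ^ (2 * m - 71) : ℕ) : ℝ) ≤ _ := Nat.cast_le.2 hn'
  refine le_trans ?_ hn''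
  calc (1 / 2) ^ (2 * m - 71) * X ^ ((1 : ℝ) / ((p : ℝ) - 1) - ε)
      ≤ (1 / 2) ^ (2 * m - 71) * X ^ (((2 * m - 71 : ℕ) : ℝ) / E) := by
        gcongr
    _ = (1 / 2) ^ (2 * m - 71) * x ^ (2 * m - 71) := by
        rw [hx, ← Real.rpow_natCast (X ^ _), ← Real.rpow_mul (by linarith)]
        congr 2; ring
    _ = (x / 2) ^ (2 * m - 71) := by rw [← mul_pow]; congr 1; ring
    _ ≤ (u : ℝ) ^ (2 * m - 71) := by
        gcongr
        linarith
    _ = _ := by push_cast; rfl
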